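/- arXiv:2203.03848 — 3 statements merged into one kernel-verified Lean document; each statement's English description precedes it below -/
import Mathlib

section
/- Let k be a field with char(k) ≠ 2 and let m ≥ 1. Let K be the fraction field of the polynomial ring k[x₁,…,x_m]. For every anisotropic quadratic form f on a finite-dimensional k-vector space, the quadratic form f_K ⊗ ⟨1,-x₁⟩ ⊗ ⟨1,-x₂⟩ ⊗ ⋯ ⊗ ⟨1,-x_m⟩ over K (the product of the base change f_K with the m-fold Pfister form ⟨⟨x₁,…,x_m⟩⟩) is anisotropic over K. -/
/-!
STATEMENT 1: Let `k` be a field with `char k ≠ 2` and `m ≥ 1`.  Let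
`K = Frac(k[x₁,…,x_m])`.  For every anisotropic quadratic form `f` over `k` on a
finite-dimensional vector space, the form `f_K ⊗ ⟨1,-x₁⟩ ⊗ ⋯ ⊗ ⟨1,-x_m⟩` (the product of
`f_K` with the m-fold Pfister form `⟨⟨x₁,…,x_m⟩⟩`) is anisotropic over `K`.

The `m`-fold Pfister form `⟨1,-x₁⟩ ⊗ ⋯ ⊗ ⟨1,-x_m⟩` is formalized, via its standard
diagonalization, as the diagonal quadratic form of dimension `2^m` indexed by subsets
`S : Fin m → Bool` whose `S`-th entry is `∏_{i ∈ S} (-xᵢ)`.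
-/

open scoped TensorProduct

/-- In any field extension of a field in which `2 ≠ 0`, we have `2 ≠ 0`. -/
theorem two_ne_zero_extension {k K : Type*} [Field k] [Field K] [Algebra k K]
    (h2 : (2 : k) ≠ 0) : (2 : K) ≠ 0 := fun hK =>
  h2 <| (algebraMap k K).injective <| by rw [map_ofNat, map_zero, hK]

/-- The base change of a quadratic form along a field extension, in the presence of the
hypothesis `2 ≠ 0` (char ≠ 2) rather than an `Invertible (2 : k)` instance. -/
noncomputable def qfBaseChange {k : Type*} (K : Type*) [Field k] [Field K] [Algebra k K]
    {V : Type*} [AddCommGroup V] [Module k V] (h2 : (2 : k) ≠ 0)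
    (f : QuadraticForm k V) : QuadraticForm K (K ⊗[k] V) :=
  letI : Invertible (2 : k) := invertibleOfNonzero h2
  QuadraticForm.baseChange K f

/-- The tensor product of two quadratic forms over a field `K` with `2 ≠ 0` (char ≠ 2);
it satisfies `(Q₁ ⊗ Q₂)(v ⊗ w) = Q₁ v · Q₂ w`. -/
noncomputable def qfTensor {K : Type*} [Field K] {V W : Type*} [AddCommGroup V] [Module K V]
    [AddCommGroup W] [Module K W] (h2 : (2 : K) ≠ 0)
    (Q₁ : QuadraticForm K V) (Q₂ : QuadraticForm K W) : QuadraticForm K (V ⊗[K] W) :=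
  letI : Invertible (2 : K) := invertibleOfNonzero h2
  Q₁.tmul Q₂

section Helpers
open MvPolynomial

noncomputable def bexp {m : ℕ} (S : Fin m → Bool) : Fin m →₀ ℕ :=
  Finsupp.equivFunOnFinite.symm (fun i => if S i then 1 else 0)

theorem bexp_inj {m : ℕ} {S T : Fin m → Bool} {d e : Fin m →₀ ℕ}
    (h : d + d + bexp S = e + e + bexp T) : S = T ∧ d = e := by
  have h' : ∀ i, S i = T i ∧ d i = e i := fun i => by
    have := DFunLike.congr_fun h i
    simp only [bexp, Finsupp.add_apply, Finsupp.equivFunOnFinite_symm_apply_apply] at this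
    cases hs : S i <;> cases ht : T i <;> simp [hs, ht] at this ⊢ <;> omega
  exact ⟨funext fun i => (h' i).1, Finsupp.ext fun i => (h' i).2⟩

theorem pf_coeff {k : Type*} [Field k] {m : ℕ} (S : Fin m → Bool) :
    (∏ i, if S i then -(X i : MvPolynomial (Fin m) k) else 1) =
      monomial (bexp S) (∏ i, if S i then (-1 : k) else 1) := by
  rw [monomial_eq, Finsupp.prod_fintype _ _ (by simp), map_prod, ← Finset.prod_mul_distrib]
  refine Finset.prod_congr rfl fun i _ => ?_
  cases h : S i <;> simp [bexp, h]

open MonomialOrder in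
theorem coeff_key {k : Type*} [Field k] {m : ℕ} (S T : Fin m → Bool) (d : Fin m →₀ ℕ)
    (p : MvPolynomial (Fin m) k) (c : k)
    (hp : ∀ a ∈ p.support, lex.toSyn (a + a + bexp T) ≤ lex.toSyn (d + d + bexp S)) :
    coeff (d + d + bexp S) (monomial (bexp T) c * (p * p)) =
      if T = S then c * (coeff d p * coeff d p) else 0 := by
  have key : ∀ a b, a ∈ p.support → b ∈ p.support → a + b + bexp T = d + d + bexp S →
      T = S ∧ a = d ∧ b = d := by
    intro a b ha hb h
    have h1 := hp a ha
    have h2 := hp b hb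
    have h3 : lex.toSyn (a + a + bexp T) + lex.toSyn (b + b + bexp T) =
        lex.toSyn (d + d + bexp S) + lex.toSyn (d + d + bexp S) := by
      rw [← map_add, ← map_add, ← h]; congr 1; abel
    have h4 := h3.ge
    have e1 : lex.toSyn (a + a + bexp T) = lex.toSyn (d + d + bexp S) := by
      refine le_antisymm h1 (le_of_not_gt fun h => ?_)
      exact absurd h3 (add_lt_add_of_lt_of_le h h2).ne
    have e2 : lex.toSyn (b + b + bexp T) = lex.toSyn (d + d + bexp S) := by
      refine le_antisymm h2 (le_of_not_gt fun h => ?_)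
      exact absurd h3 (add_lt_add_of_le_of_lt h1 h).ne
    have e1 := bexp_inj (lex.toSyn.injective e1)
    have e2 := bexp_inj (lex.toSyn.injective e2)
    exact ⟨e1.1, e1.2, e2.2⟩
  rw [coeff_monomial_mul']
  by_cases hTS : T = S
  · subst hTS
    rw [if_pos (by simp), if_pos rfl, add_tsub_cancel_right, coeff_mul,
      Finset.sum_eq_single (d, d)]
    · rintro ⟨a, b⟩ hab hne
      rw [Finset.HasAntidiagonal.mem_antidiagonal] at hab
      by_contra h0
      have := key a b (by rw [mem_support_iff]; exact left_ne_zero_of_mul h0)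
        (by rw [mem_support_iff]; exact right_ne_zero_of_mul h0) (by rw [← hab])
      exact hne (by rw [this.2.1, this.2.2])
    · simp
  · rw [if_neg hTS]
    split_ifs with hle
    · rw [coeff_mul, Finset.sum_eq_zero, mul_zero]
      rintro ⟨a, b⟩ hab
      rw [Finset.HasAntidiagonal.mem_antidiagonal] at hab
      by_contra h0
      have := key a b (by rw [mem_support_iff]; exact left_ne_zero_of_mul h0)
        (by rw [mem_support_iff]; exact right_ne_zero_of_mul h0)
        (by simp only at hab; rw [hab, tsub_add_cancel_of_le hle])
      exact hTS this.1
    · rfl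

open MonomialOrder in
theorem poly_aniso {k : Type*} [Field k] {m : ℕ} {ι : Type*} [Fintype ι] (w : ι → k)
    (hw : ∀ r : ι → k, ∑ i, w i * (r i * r i) = 0 → r = 0)
    (p : ι × (Fin m → Bool) → MvPolynomial (Fin m) k)
    (h : ∑ j, C (w j.1) * (∏ i, if j.2 i then -(X i : MvPolynomial (Fin m) k) else 1) *
      (p j * p j) = 0) : p = 0 := by
  classical
  by_contra hne
  obtain ⟨j0, hj0⟩ := Function.ne_iff.1 hne
  let I : Finset (Σ _ : ι × (Fin m → Bool), Fin m →₀ ℕ) :=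
    Finset.univ.sigma fun j => (p j).support
  have hI : I.Nonempty := by
    obtain ⟨a, ha⟩ := support_nonempty.2 hj0
    exact ⟨⟨j0, a⟩, by simpa [I] using ha⟩
  obtain ⟨⟨⟨i0, S⟩, d⟩, hmem, hmax⟩ :=
    I.exists_max_image (fun x => lex.toSyn (x.2 + x.2 + bexp x.1.2)) hI
  have h' := congrArg (coeff (d + d + bexp S)) h
  rw [coeff_sum, Fintype.sum_prod_type] at h'
  simp only [coeff_zero, pf_coeff, C_mul_monomial] at h'
  have hc : ∀ (i : ι) (T : Fin m → Bool), _ := fun i T =>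
    coeff_key S T d (p (i, T)) (w i * ∏ i, if T i then (-1 : k) else 1)
      fun a ha => hmax ⟨(i, T), a⟩ (by simpa [I] using ha)
  simp only [hc, Finset.sum_ite_eq', Finset.mem_univ, if_true] at h'
  have hε : (∏ i, if S i then (-1 : k) else 1) ≠ 0 :=
    Finset.prod_ne_zero_iff.2 fun i _ => by split_ifs <;> simp
  have := hw (fun i => coeff d (p (i, S))) (by
    refine (mul_eq_zero_iff_left hε).1 ?_
    rw [← h', Finset.mul_sum]
    exact Finset.sum_congr rfl fun i _ => by ring)
  have h2 := congrFun this i0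
  simp [I] at hmem
  exact hmem h2

theorem frac_aniso {k : Type*} [Field k] {m : ℕ} {ι : Type*} [Fintype ι] (w : ι → k)
    (hw : ∀ r : ι → k, ∑ i, w i * (r i * r i) = 0 → r = 0)
    {K : Type*} [Field K] [Algebra k K] [Algebra (MvPolynomial (Fin m) k) K]
    [IsScalarTower k (MvPolynomial (Fin m) k) K]
    [IsFractionRing (MvPolynomial (Fin m) k) K]
    (g : ι × (Fin m → Bool) → K)
    (h : ∑ j, algebraMap k K (w j.1) * (∏ i, if j.2 i then
      -(algebraMap (MvPolynomial (Fin m) k) K (X i)) else 1) * (g j * g j) = 0) : g = 0 := by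
  classical
  obtain ⟨b, hb⟩ := IsLocalization.exist_integer_multiples_of_finite
    (nonZeroDivisors (MvPolynomial (Fin m) k)) g
  choose p hp using hb
  have hinj := IsFractionRing.injective (MvPolynomial (Fin m) k) K
  have hp0 := poly_aniso w hw p (by
    apply hinj
    simp only [map_sum, map_mul, map_prod, apply_ite (algebraMap (MvPolynomial (Fin m) k) K),
      map_neg, map_one, map_zero, hp, Algebra.smul_def]
    rw [← mul_zero (algebraMap _ K b.1 * algebraMap _ K b.1), ← h, Finset.mul_sum]
    refine Finset.sum_congr rfl fun j _ => ?_
    rw [IsScalarTower.algebraMap_apply k (MvPolynomial (Fin m) k) K, MvPolynomial.algebraMap_eq]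
    ring)
  funext j
  have := hp j
  rw [hp0, Pi.zero_apply, map_zero, Algebra.smul_def] at this
  exact (mul_eq_zero.1 this.symm).resolve_left
    ((map_ne_zero_iff _ hinj).2 (nonZeroDivisors.ne_zero b.2))

theorem diag_ortho {K W : Type*} [Field K] [Invertible (2 : K)] [Fintype W] [DecidableEq W]
    (c : W → K) :
    (QuadraticMap.associated (R := K) (QuadraticMap.weightedSumSquares K c)).IsOrthoᵢ
      (Pi.basisFun K W) := by
  intro i j hij
  have : ∀ x, c x • ((Pi.single i (1 : K) + Pi.single j (1 : K) : W → K) x *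
      (Pi.single i (1 : K) + Pi.single j (1 : K) : W → K) x) =
      c x • ((Pi.single i (1 : K) : W → K) x * (Pi.single i (1 : K) : W → K) x) +
      c x • ((Pi.single j (1 : K) : W → K) x * (Pi.single j (1 : K) : W → K) x) := by
    intro x
    rcases eq_or_ne x i with rfl | hi
    · simp [Pi.single_eq_of_ne hij]
    · simp [Pi.single_eq_of_ne hi]
  change QuadraticMap.associated (R := K) (QuadraticMap.weightedSumSquares K c)
    (Pi.basisFun K W i) (Pi.basisFun K W j) = 0
  rw [QuadraticMap.associated_apply]
  simp only [QuadraticMap.weightedSumSquares_apply, Pi.basisFun_apply, this,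
    Finset.sum_add_distrib]
  simp

open scoped TensorProduct

theorem bc_ortho {k K V ι : Type*} [Field k] [Field K] [Algebra k K] [Invertible (2 : k)]
    [Invertible (2 : K)] [AddCommGroup V] [Module k V] (f : QuadraticForm k V)
    (v : Module.Basis ι k V) (hv : ∀ i j, i ≠ j → QuadraticMap.associated (R := k) f (v i) (v j) = 0)
    (i j : ι) (hij : i ≠ j) :
    QuadraticMap.associated (R := K) (QuadraticForm.baseChange K f)
      (Algebra.TensorProduct.basis K v i) (Algebra.TensorProduct.basis K v j) = 0 := by
  rw [QuadraticForm.associated_baseChange, Algebra.TensorProduct.basis_apply,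
    Algebra.TensorProduct.basis_apply, LinearMap.BilinForm.baseChange_tmul, hv i j hij, zero_smul]

theorem bc_val {k K V ι : Type*} [Field k] [Field K] [Algebra k K] [Invertible (2 : k)]
    [AddCommGroup V] [Module k V] (f : QuadraticForm k V)
    (v : Module.Basis ι k V) (i : ι) :
    QuadraticForm.baseChange K f (Algebra.TensorProduct.basis K v i) = algebraMap k K (f (v i)) := by
  rw [Algebra.TensorProduct.basis_apply, QuadraticForm.baseChange_tmul, Algebra.smul_def,
    mul_one, mul_one]

theorem tmul_diag {K V W ι κ : Type*} [Field K] [Invertible (2 : K)] [Fintype ι] [Fintype κ]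
    [AddCommGroup V] [Module K V] [AddCommGroup W] [Module K W]
    (Q : QuadraticForm K V) (P : QuadraticForm K W)
    (v : Module.Basis ι K V) (w : Module.Basis κ K W)
    (hv : ∀ i j, i ≠ j → QuadraticMap.associated (R := K) Q (v i) (v j) = 0)
    (hw : ∀ i j, i ≠ j → QuadraticMap.associated (R := K) P (w i) (w j) = 0)
    (z : V ⊗[K] W) :
    QuadraticForm.tmul (R := K) (A := K) Q P z = ∑ j : ι × κ, Q (v j.1) * P (w j.2) *
      ((v.tensorProduct w).repr z j * (v.tensorProduct w).repr z j) := by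
  have hb : (QuadraticMap.associated (R := K)
      (QuadraticForm.tmul (R := K) (A := K) Q P)).IsOrthoᵢ (v.tensorProduct w) := by
    rintro ⟨i, S⟩ ⟨j, T⟩ hne
    change QuadraticMap.associated (R := K) (QuadraticForm.tmul (R := K) (A := K) Q P)
      (v.tensorProduct w (i, S)) (v.tensorProduct w (j, T)) = 0
    rw [QuadraticForm.associated_tmul, Module.Basis.tensorProduct_apply,
      Module.Basis.tensorProduct_apply, LinearMap.BilinForm.tensorDistrib_tmul]
    by_cases hij : i = j
    · rw [hw S T fun h => hne (by rw [hij, h]), zero_smul]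
    · rw [hv i j hij, smul_zero]
  have h1 := DFunLike.congr_fun (QuadraticMap.basisRepr_eq_of_iIsOrtho _ _ hb)
    (fun j => (v.tensorProduct w).repr z j)
  rw [QuadraticMap.basisRepr_apply, QuadraticMap.weightedSumSquares_apply,
    Module.Basis.sum_repr] at h1
  rw [h1]
  refine Finset.sum_congr rfl fun j _ => ?_
  rw [Module.Basis.tensorProduct_apply', QuadraticForm.tensorDistrib_tmul, smul_eq_mul, smul_eq_mul,
    mul_comm (P _)]

theorem diag_val {K W : Type*} [Field K] [Fintype W] [DecidableEq W] (c : W → K) (j : W) :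
    QuadraticMap.weightedSumSquares K c (Pi.basisFun K W j) = c j := by
  rw [QuadraticMap.weightedSumSquares_apply, Finset.sum_eq_single j]
  · simp
  · intro x _ hx; simp [Pi.single_eq_of_ne hx]
  · simp

theorem final_aux {k : Type*} [Field k] {m : ℕ} [Invertible (2 : k)]
    {K : Type*} [Field K] [Invertible (2 : K)] [Algebra k K] [Algebra (MvPolynomial (Fin m) k) K]
    [IsScalarTower k (MvPolynomial (Fin m) k) K]
    [IsFractionRing (MvPolynomial (Fin m) k) K]
    {V : Type*} [AddCommGroup V] [Module k V] [FiniteDimensional k V]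
    (f : QuadraticForm k V) (hf : f.Anisotropic) :
    (QuadraticForm.tmul (R := K) (A := K) (QuadraticForm.baseChange K f)
      (QuadraticMap.weightedSumSquares K
        (fun S : Fin m → Bool => ∏ i, if S i then
          -(algebraMap (MvPolynomial (Fin m) k) K (X i)) else 1))).Anisotropic := by
  obtain ⟨v, hv⟩ := LinearMap.BilinForm.exists_orthogonal_basis
    (B := QuadraticMap.associated (R := k) f) ⟨QuadraticMap.associated_isSymm k f⟩
  have hfv := QuadraticMap.basisRepr_eq_of_iIsOrtho f v hv
  have hw : ∀ r : Fin (Module.finrank k V) → k, ∑ i, f (v i) * (r i * r i) = 0 → r = 0 := by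
    intro r hr
    have h1 := DFunLike.congr_fun hfv r
    rw [QuadraticMap.basisRepr_apply, QuadraticMap.weightedSumSquares_apply] at h1
    have h2 := hf _ (h1.trans hr)
    funext i
    exact Fintype.linearIndependent_iff.1 v.linearIndependent r h2 i
  intro z hz
  rw [tmul_diag _ _ (Algebra.TensorProduct.basis K v) (Pi.basisFun K (Fin m → Bool))
    (bc_ortho f v fun i j hij => hv hij) (fun i j hij => diag_ortho _ hij)] at hz
  simp only [bc_val, diag_val] at hz
  have hg := frac_aniso (fun i => f (v i)) hw (K := K) (m := m) _ hz
  apply ((Algebra.TensorProduct.basis K v).tensorProduct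
    (Pi.basisFun K (Fin m → Bool))).repr.injective
  rw [map_zero]
  exact Finsupp.ext fun j => congrFun hg j

end Helpers

theorem statement1 {k : Type*} [Field k] (h2 : (2 : k) ≠ 0) (m : ℕ) (hm : 1 ≤ m) :
    -- `K = k(x₁, …, x_m)`
    let K := FractionRing (MvPolynomial (Fin m) k)
    let x : Fin m → K := fun i => algebraMap (MvPolynomial (Fin m) k) K (MvPolynomial.X i)
    -- the `m`-fold Pfister form `⟨⟨x₁,…,x_m⟩⟩ = ⟨1,-x₁⟩ ⊗ ⋯ ⊗ ⟨1,-x_m⟩`, written as the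
    -- `2^m`-dimensional diagonal form whose entry at `S : Fin m → Bool` is `∏_{i ∈ S} (-xᵢ)`
    let pfister : QuadraticForm K ((Fin m → Bool) → K) :=
      QuadraticMap.weightedSumSquares K
        (fun S : Fin m → Bool => ∏ i, if S i then -x i else 1)
    -- for every anisotropic form `f` over `k`, `f_K ⊗ ⟨⟨x₁,…,x_m⟩⟩` is anisotropic over `K`
    ∀ (V : Type) [AddCommGroup V] [Module k V] [FiniteDimensional k V]
      (f : QuadraticForm k V), f.Anisotropic →
        (qfTensor (two_ne_zero_extension h2) (qfBaseChange K h2 f) pfister).Anisotropic := by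
  intro K x pfister V _ _ _ f hf
  letI : Invertible (2 : k) := invertibleOfNonzero h2
  letI : Invertible (2 : K) := invertibleOfNonzero (two_ne_zero_extension h2)
  exact final_aux (K := K) f hf
end

section
/- Let k be a field with char(k) ≠ 2 and let A be a finite-dimensional central simple k-algebra of exponent two which is not split: that is, A ⊗_k A is isomorphic to a matrix algebra over k, but A itself is not isomorphic to any matrix algebra over k. Write dim_k A = d² (so d = deg A, which is necessarily even). Then there exists a field extension k ⊆ K and a K-linear involution τ on A_K = A ⊗_k K (i.e., a K-linear map with τ(xy) = τ(y)τ(x) and τ∘τ = id) which is symplectic — meaning the K-subspace {x ∈ A_K : τ(x) = x} of τ-symmetric elements has dimension d(d-1)/2 — and anisotropic: τ(x)·x = 0 implies x = 0. -/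
open scoped TensorProduct

universe u


/-- Hermitian matrices with entries in a vector space with a linear involution. -/
def hermSub {K E : Type*} [Field K] [AddCommGroup E] [Module K E] (n : ℕ) (s : E →ₗ[K] E) :
    Submodule K (Fin n → Fin n → E) where
  carrier := {X | ∀ i j, s (X j i) = X i j}
  add_mem' := by
    intro a b ha hb i j
    simp [ha i j, hb i j]
  zero_mem' := by intro i j; simp
  smul_mem' := by
    intro c a ha i j
    simp [ha i j]

lemma card_lt_pairs (n : ℕ) :
    Fintype.card {p : Fin n × Fin n // p.1 < p.2} = n.choose 2 := by
  have h1 : Fintype.card {p : Fin n × Fin n // p.1 < p.2}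
      = Fintype.card (Σ i : Fin n, {j : Fin n // i < j}) := by
    apply Fintype.card_congr
    exact {
      toFun := fun p => ⟨p.1.1, p.1.2, p.2⟩
      invFun := fun q => ⟨(q.1, q.2.1), q.2.2⟩
      left_inv := fun _ => rfl
      right_inv := fun _ => rfl }
  rw [h1, Fintype.card_sigma]
  have h2 : ∀ i : Fin n, Fintype.card {j : Fin n // i < j} = n - 1 - i := by
    intro i
    rw [← Fin.card_Ioi i]
    rw [Fintype.card_subtype]
    congr 1
    ext j
    simp
  simp_rw [h2]
  rw [Fin.sum_univ_eq_sum_range (fun i => n - 1 - i) n, Finset.sum_range_reflect (fun i => i) n,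
    Finset.sum_range_id, Nat.choose_two_right]

lemma finrank_hermSub {K E : Type*} [Field K] [AddCommGroup E] [Module K E]
    [FiniteDimensional K E] (n : ℕ) (s : E →ₗ[K] E) (hs : ∀ x, s (s x) = x) :
    Module.finrank K (hermSub n s)
      = n * Module.finrank K (LinearMap.ker (s - LinearMap.id)) + n.choose 2 * Module.finrank K E := by
  let f : hermSub n s →ₗ[K] ((Fin n → LinearMap.ker (s - LinearMap.id)) ×
      ({p : Fin n × Fin n // p.1 < p.2} → E)) :=
    { toFun := fun X => (fun i => ⟨X.1 i i, by
        have := X.2 i i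
        simp [this]⟩, fun p => X.1 p.1.1 p.1.2)
      map_add' := by intro a b; ext <;> simp
      map_smul' := by intro a b; ext <;> simp }
  have hf : Function.Bijective f := by
    constructor
    · rw [← LinearMap.ker_eq_bot, LinearMap.ker_eq_bot']
      intro X hX
      have h1 : ∀ i, X.1 i i = 0 := fun i => by
        have := congrArg (fun z => ((z.1 i : LinearMap.ker (s - LinearMap.id)) : E)) hX
        simpa [f] using this
      have h2 : ∀ i j, i < j → X.1 i j = 0 := fun i j hij => by
        have := congrArg (fun z => z.2 ⟨(i, j), hij⟩) hX
        simpa [f] using this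
      ext i j
      rcases lt_trichotomy i j with h | h | h
      · exact h2 i j h
      · subst h; exact h1 i
      · have := X.2 i j
        rw [← this, h2 j i h]; simp
    · rintro ⟨a, b⟩
      have ha : ∀ i, s (a i : E) = a i := fun i => by
        have := (a i).2
        rwa [LinearMap.mem_ker, LinearMap.sub_apply, sub_eq_zero] at this
      refine ⟨⟨fun i j => if h : i < j then b ⟨(i, j), h⟩ else
        if h : j < i then s (b ⟨(j, i), h⟩) else a i, ?_⟩, ?_⟩
      · intro i j
        rcases lt_trichotomy i j with h | h | h
        · simp [h, not_lt_of_gt h, hs]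
        · subst h; simp [ha]
        · simp [h, not_lt_of_gt h]
      · ext i
        · simp [f]
        · simp [f, i.2]
  rw [(LinearEquiv.ofBijective f hf).finrank_eq]
  simp [Module.finrank_prod, Module.finrank_pi_fintype, card_lt_pairs]

lemma finrank_ker_eq_rootMultiplicity {F V : Type*} [Field F] [AddCommGroup V] [Module F V]
    [FiniteDimensional F V] (g : Module.End F V) (c : F) (hc : 2 * c ≠ 0)
    (hg : ∀ v, g (g v) = (c ^ 2) • v) :
    Module.finrank F (LinearMap.ker (g - c • LinearMap.id)) = g.charpoly.rootMultiplicity c := by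
  rw [← LinearMap.finrank_maxGenEigenspace_eq]
  have : (g.maxGenEigenspace c) = LinearMap.ker (g - c • LinearMap.id) := by
    have hpow : ∀ m : ℕ, ∀ v, ((g - c • (1 : Module.End F V)) ^ (m + 1)) v
        = (-(2 * c)) ^ m • (g v - c • v) := by
      intro m
      induction m with
      | zero => intro v; simp
      | succ m ih =>
        intro v
        rw [pow_succ, Module.End.mul_apply, ih]
        have e : (g - c • (1 : Module.End F V)) v = g v - c • v := by simp
        rw [e, map_sub, map_smul, hg, pow_succ (-(2 * c)) m, mul_smul]
        congr 1
        module
    ext v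
    rw [Module.End.mem_maxGenEigenspace, LinearMap.mem_ker]
    constructor
    · rintro ⟨m, hm⟩
      have h2 : ((g - c • (1 : Module.End F V)) ^ (m + 1)) v = 0 := by
        rw [pow_succ', Module.End.mul_apply, hm, map_zero]
      rw [hpow] at h2
      have := (smul_eq_zero.mp h2).resolve_left (pow_ne_zero _ (neg_ne_zero.mpr hc))
      simpa using this
    · intro h
      exact ⟨1, by simpa using h⟩
  rw [this]

/-- matrix-unit decomposition for two commuting actions of a matrix algebra. -/
lemma matrix_units_decomp {k D V ι : Type*} [Field k] [Ring D] [Algebra k D] [AddCommGroup V]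
    [Module k V] [Fintype ι] [DecidableEq ι] (z : ι)
    (ρ₁ ρ₂ : Matrix ι ι D →ₐ[k] Module.End k V)
    (hcomm : ∀ a b v, ρ₁ a (ρ₂ b v) = ρ₂ b (ρ₁ a v)) :
    ∃ W : Submodule k V,
      (∀ w, w ∈ W ↔ ρ₁ (Matrix.single z z 1) (ρ₂ (Matrix.single z z 1) w) = w) ∧
      ∃ Φ : V ≃ₗ[k] (ι → ι → W),
        ∀ v i j, (Φ v i j : V) = ρ₁ (Matrix.single z i 1) (ρ₂ (Matrix.single z j 1) v) := by
  classical
  have m1 : ∀ a b v, ρ₁ a (ρ₁ b v) = ρ₁ (a * b) v := by intro a b v; simp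
  have m2 : ∀ a b v, ρ₂ a (ρ₂ b v) = ρ₂ (a * b) v := by intro a b v; simp
  -- product rule
  have mm : ∀ a b a' b' v, ρ₁ a (ρ₂ b (ρ₁ a' (ρ₂ b' v))) = ρ₁ (a * a') (ρ₂ (b * b') v) := by
    intro a b a' b' v
    rw [← hcomm a' b, m1, m2]
  let W : Submodule k V := LinearMap.ker
    (ρ₁ (Matrix.single z z 1) * ρ₂ (Matrix.single z z 1) - 1)
  have hW : ∀ w, w ∈ W ↔ ρ₁ (Matrix.single z z 1) (ρ₂ (Matrix.single z z 1) w) = w := by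
    intro w
    simp [W, sub_eq_zero]
  refine ⟨W, hW, ?_⟩
  let f : V →ₗ[k] (ι → ι → W) :=
    { toFun := fun v i j => ⟨ρ₁ (Matrix.single z i 1) (ρ₂ (Matrix.single z j 1) v), by
        rw [hW, mm]; simp⟩
      map_add' := by intro a b; ext i j; simp
      map_smul' := by intro a b; ext i j; simp }
  have hsum1 : ∑ i : ι, Matrix.single i i (1 : D) = 1 := by
    exact Matrix.sum_single_one
  have hf : Function.Bijective f := by
    constructor
    · rw [← LinearMap.ker_eq_bot, LinearMap.ker_eq_bot']
      intro v hv
      have h0 : ∀ i j, ρ₁ (Matrix.single z i 1) (ρ₂ (Matrix.single z j 1) v) = 0 := by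
        intro i j
        have := congrArg (fun X : ι → ι → W => (X i j : V)) hv
        simpa [f] using this
      have h1 : ∀ i j, ρ₁ (Matrix.single i i 1) (ρ₂ (Matrix.single j j 1) v) = 0 := by
        intro i j
        have := mm (Matrix.single i z 1) (Matrix.single j z 1) (Matrix.single z i 1)
          (Matrix.single z j 1) v
        rw [h0] at this
        simpa using this.symm
      have h2 : v = ∑ i, ∑ j, ρ₁ (Matrix.single i i 1) (ρ₂ (Matrix.single j j 1) v) := by
        have e1 : ∀ i, ∑ j, ρ₁ (Matrix.single i i 1) (ρ₂ (Matrix.single j j 1) v)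
            = ρ₁ (Matrix.single i i 1) v := by
          intro i
          rw [← map_sum, ← LinearMap.sum_apply, ← map_sum, hsum1]; simp
        simp_rw [e1]
        rw [← LinearMap.sum_apply, ← map_sum, hsum1]; simp
      rw [h2]; simp [h1]
    · intro X
      refine ⟨∑ i, ∑ j, ρ₁ (Matrix.single i z 1) (ρ₂ (Matrix.single j z 1) (X i j : V)), ?_⟩
      ext a b
      change ρ₁ (Matrix.single z a 1) (ρ₂ (Matrix.single z b 1) _) = _
      simp only [map_sum]
      rw [Finset.sum_eq_single a, Finset.sum_eq_single b]
      · rw [mm]; simp only [Matrix.single_mul_single_same, mul_one]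
        exact (hW _).1 (X a b).2
      · intro j _ hj
        rw [mm, Matrix.single_mul_single_of_ne (h := hj.symm)]
        simp
      · simp
      · intro i _ hi
        apply Finset.sum_eq_zero
        intro j _
        rw [mm, Matrix.single_mul_single_of_ne (h := hi.symm)]
        simp
      · simp
  exact ⟨LinearEquiv.ofBijective f hf, fun v i j => rfl⟩


/-- scalar extension of a central division algebra is simple. -/
lemma isSimpleRing_baseChange {k D L : Type*} [Field k] [DivisionRing D] [Algebra k D]
    [Algebra.IsCentral k D] [Field L] [Algebra k L] : IsSimpleRing (L ⊗[k] D) := by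
  classical
  let ℬ := Module.Basis.ofVectorSpace k L
  let E := TensorProduct.equivFinsuppOfBasisLeft (N := D) ℬ
  have hl : ∀ (d : D) (x : L ⊗[k] D) i, E ((1 ⊗ₜ d) * x) i = d * E x i := by
    intro d x i
    induction x using TensorProduct.induction_on with
    | zero => simp
    | tmul a b => simp [E, TensorProduct.equivFinsuppOfBasisLeft_apply_tmul_apply]
    | add x y hx hy => simp [mul_add, hx, hy]
  have hr : ∀ (d : D) (x : L ⊗[k] D) i, E (x * (1 ⊗ₜ d)) i = E x i * d := by
    intro d x i
    induction x using TensorProduct.induction_on with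
    | zero => simp
    | tmul a b => simp [E, TensorProduct.equivFinsuppOfBasisLeft_apply_tmul_apply]
    | add x y hx hy => simp [add_mul, hx, hy]
  apply IsSimpleRing.of_eq_bot_or_eq_top
  intro I
  by_contra! hI
  obtain ⟨hbot, htop⟩ := hI
  have hex : ∃ m : ℕ, ∃ x : L ⊗[k] D, x ∈ I ∧ x ≠ 0 ∧ (E x).support.card = m := by
    by_contra! h
    apply hbot
    rw [eq_bot_iff]
    intro x hx
    rw [TwoSidedIdeal.mem_bot]
    by_contra hx0
    exact h _ x hx hx0 rfl
  obtain ⟨x, hxI, hx0, hxm⟩ := Nat.find_spec hex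
  have hmin : ∀ y, y ∈ I → (E y).support.card < (E x).support.card → y = 0 := by
    intro y hy hlt
    by_contra h0
    rw [hxm] at hlt
    exact Nat.find_min hex hlt ⟨y, hy, h0, rfl⟩
  have hE0 : E x ≠ 0 := by simpa using hx0
  obtain ⟨i, hi⟩ := Finsupp.ne_iff.mp hE0
  simp only [Finsupp.coe_zero, Pi.zero_apply] at hi
  -- normalise
  let y := (1 ⊗ₜ[k] (E x i)⁻¹ : L ⊗[k] D) * x
  have hyI : y ∈ I := I.mul_mem_left _ _ hxI
  have hyE : ∀ j, E y j = (E x i)⁻¹ * E x j := fun j => hl _ _ _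
  have hyi : E y i = 1 := by rw [hyE]; exact inv_mul_cancel₀ hi
  have hys : (E y).support ⊆ (E x).support := by
    intro j hj
    rw [Finsupp.mem_support_iff] at hj ⊢
    intro h; apply hj; rw [hyE, h, mul_zero]
  have hcomm : ∀ d : D, ∀ j, d * E y j = E y j * d := by
    intro d j
    have hz : (1 ⊗ₜ[k] d : L ⊗[k] D) * y - y * (1 ⊗ₜ[k] d) = 0 := by
      apply hmin
      · exact I.sub_mem (I.mul_mem_left _ _ hyI) (I.mul_mem_right _ _ hyI)
      · apply Finset.card_lt_card
        refine ⟨?_, ?_⟩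
        · intro l hlm
          apply hys
          rw [Finsupp.mem_support_iff] at hlm ⊢
          intro h; apply hlm
          rw [map_sub, Finsupp.sub_apply, hl, hr, h]; simp
        · intro hsub
          have : i ∈ (E x).support := by simpa using hi
          have := hsub this
          rw [Finsupp.mem_support_iff, map_sub, Finsupp.sub_apply, hl, hr, hyi] at this
          simp at this
    have := congrArg (fun t => E t j) hz
    simp only [map_sub, Finsupp.sub_apply, hl, hr, map_zero, Finsupp.coe_zero,
      Pi.zero_apply] at this
    exact sub_eq_zero.mp this
  have hcen : ∀ j, ∃ a : k, algebraMap k D a = E y j := by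
    intro j
    have : E y j ∈ Subalgebra.center k D := by
      rw [Subalgebra.mem_center_iff]; exact fun d => hcomm d j
    rw [Algebra.IsCentral.center_eq_bot] at this
    simpa [Algebra.mem_bot] using this
  choose a ha using hcen
  have hyeq : ∃ l : L, y = l ⊗ₜ 1 := by
    refine ⟨∑ j ∈ (E y).support, a j • ℬ j, ?_⟩
    apply E.injective
    ext j
    simp only [E, TensorProduct.equivFinsuppOfBasisLeft_apply_tmul_apply]
    rw [map_sum, Finsupp.finsetSum_apply]
    change E y j = _
    simp only [map_smul, Module.Basis.repr_self, Finsupp.smul_apply, Finsupp.single_apply]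
    simp only [smul_eq_mul, mul_ite, mul_one, mul_zero, Finset.sum_ite_eq']
    by_cases hj : j ∈ (E y).support
    · rw [if_pos hj, ← ha j, Algebra.algebraMap_eq_smul_one]
    · rw [if_neg hj]
      simpa using hj
  obtain ⟨l, hly⟩ := hyeq
  have hl0 : l ≠ 0 := by
    rintro rfl
    rw [hly] at hyi
    simp at hyi
  apply htop
  rw [← TwoSidedIdeal.one_mem_iff]
  have : (l⁻¹ ⊗ₜ[k] (1 : D)) * y = 1 := by
    rw [hly]; simp [hl0, Algebra.TensorProduct.one_def]
  rw [← this]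
  exact I.mul_mem_left _ _ hyI

/-- two commuting actions of the matrix algebra with a swap: eigenspaces. -/
lemma split_case {L U : Type*} [Field L] (h2 : (2 : L) ≠ 0) [AddCommGroup U] [Module L U]
    [FiniteDimensional L U] (e : ℕ) [NeZero e]
    (ρ₁ ρ₂ : Matrix (Fin e) (Fin e) L →ₐ[L] Module.End L U)
    (hcomm : ∀ a b v, ρ₁ a (ρ₂ b v) = ρ₂ b (ρ₁ a v))
    (hdim : Module.finrank L U = e ^ 2) (g : Module.End L U)
    (h12 : ∀ a v, g (ρ₁ a v) = ρ₂ a (g v)) (h21 : ∀ a v, g (ρ₂ a v) = ρ₁ a (g v))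
    (lam : L) (hlam : lam ≠ 0) (hg : ∀ v, g (g v) = lam • v) :
    ∃ c : L, c ^ 2 = lam ∧
      Module.finrank L (LinearMap.ker (g - c • LinearMap.id)) = e + e.choose 2 ∧
      Module.finrank L (LinearMap.ker (g - (-c) • LinearMap.id)) = e.choose 2 := by
  obtain ⟨W, hW, Φ, hΦ⟩ := matrix_units_decomp (0 : Fin e) ρ₁ ρ₂ hcomm
  have hW1 : Module.finrank L W = 1 := by
    have h := Φ.finrank_eq
    rw [hdim] at h
    simp only [Module.finrank_pi_fintype, Finset.sum_const, Finset.card_univ, Fintype.card_fin,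
      smul_eq_mul] at h
    have he : 0 < e := Nat.pos_of_ne_zero (NeZero.ne e)
    have : e * e * Module.finrank L W = e * e * 1 := by linarith [h, sq e]
    exact Nat.eq_of_mul_eq_mul_left (Nat.mul_pos he he) this
  have hgW : ∀ w ∈ W, g w ∈ W := by
    intro w hw
    rw [hW] at hw ⊢
    conv_rhs => rw [← hw]
    rw [h12, h21, ← hcomm]
  obtain ⟨w0, hw0, hspan⟩ := finrank_eq_one_iff'.mp hW1
  obtain ⟨c, hc⟩ := hspan ⟨g w0, hgW _ w0.2⟩
  have hc0 : g w0 = c • (w0 : U) := by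
    have := congrArg Subtype.val hc
    simpa using this.symm
  have hgc : ∀ w : W, g w = c • (w : U) := by
    intro w
    obtain ⟨a, rfl⟩ := hspan w
    simp only [SetLike.val_smul, map_smul, hc0]
    rw [smul_comm]
  have hc2 : c ^ 2 = lam := by
    have h := hg w0
    rw [hc0, map_smul, hc0, smul_smul] at h
    have h3 : (c * c - lam) • (w0 : U) = 0 := by rw [sub_smul, h, sub_self]
    have h4 : (w0 : U) ≠ 0 := by simpa using hw0
    have := (smul_eq_zero.mp h3).resolve_right h4
    rw [sq]; exact sub_eq_zero.mp this
  have hcne : c ≠ 0 := by rintro rfl; apply hlam; rw [← hc2]; simp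
  have hΦg : ∀ v i j, Φ (g v) i j = c • Φ v j i := by
    intro v i j
    apply Subtype.ext
    rw [hΦ, SetLike.val_smul, ← hgc, hΦ, ← h12, ← h21]
    rw [← hcomm]
  have key : ∀ t : L, t ^ 2 = 1 →
      Module.finrank L (LinearMap.ker (g - (t * c) • LinearMap.id))
        = Module.finrank L (hermSub e (t • (LinearMap.id : W →ₗ[L] W))) := by
    intro t ht
    have ht0 : t ≠ 0 := by rintro rfl; simp at ht
    have : hermSub e (t • (LinearMap.id : W →ₗ[L] W)) =
        (LinearMap.ker (g - (t * c) • LinearMap.id)).map (Φ : U →ₗ[L] _) := by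
      ext X
      obtain ⟨v, rfl⟩ := Φ.surjective X
      have : (Φ v ∈ (LinearMap.ker (g - (t * c) • LinearMap.id)).map (Φ : U →ₗ[L] _)) ↔
          v ∈ (LinearMap.ker (g - (t * c) • LinearMap.id)) := by
        constructor
        · rintro ⟨v', hv', h⟩
          have := Φ.injective h
          rwa [← this]
        · intro h; exact ⟨v, h, rfl⟩
      rw [this, LinearMap.mem_ker, LinearMap.sub_apply, sub_eq_zero, ← Φ.injective.eq_iff]
      constructor
      · intro h
        funext i j
        rw [hΦg]
        have := h i j
        simp only [LinearMap.smul_apply, LinearMap.id_apply, map_smul, Pi.smul_apply] at this ⊢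
        rw [← this, smul_smul, mul_right_comm, ← sq, ht, one_mul]
      · intro h i j
        have := congrFun (congrFun h i) j
        rw [hΦg] at this
        simp only [LinearMap.smul_apply, LinearMap.id_apply, map_smul, Pi.smul_apply] at this ⊢
        rw [mul_comm, mul_smul] at this
        have := smul_right_injective _ hcne this
        rw [this, smul_smul, ← sq, ht, one_smul]
    rw [this]
    exact (LinearEquiv.finrank_map_eq Φ _).symm
  refine ⟨c, hc2, ?_, ?_⟩
  · have := key 1 (by simp)
    rw [one_mul] at this
    rw [this, finrank_hermSub _ _ (by intro x; simp), hW1]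
    have : LinearMap.ker ((1 : L) • (LinearMap.id : W →ₗ[L] W) - LinearMap.id) = ⊤ := by
      simp
    rw [this, finrank_top, hW1]; simp
  · have := key (-1) (by simp)
    rw [neg_one_mul] at this
    rw [this, finrank_hermSub _ _ (by intro x; simp), hW1]
    have : LinearMap.ker ((-1 : L) • (LinearMap.id : W →ₗ[L] W) - LinearMap.id) = ⊥ := by
      rw [LinearMap.ker_eq_bot']
      intro m hm
      have h3 : (-2 : L) • m = 0 := by
        rw [← hm]
        simp only [LinearMap.sub_apply, LinearMap.smul_apply, LinearMap.id_apply]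
        module
      exact (smul_eq_zero.mp h3).resolve_left (by simpa using h2)
    rw [this, finrank_bot]; simp


lemma eigen_descent {k D W : Type*} (L : Type*) [Field k] [Field L] [Algebra k L]
    [IsAlgClosed L] [Normal k L] (h2 : (2 : k) ≠ 0) [DivisionRing D] [Algebra k D]
    [FiniteDimensional k D] [Algebra.IsCentral k D] [AddCommGroup W] [Module k W]
    [FiniteDimensional k W]
    (ρ₁ ρ₂ : D →ₐ[k] Module.End k W)
    (hcomm : ∀ a b v, ρ₁ a (ρ₂ b v) = ρ₂ b (ρ₁ a v))
    (hdim : Module.finrank k W = Module.finrank k D) (g : Module.End k W)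
    (h12 : ∀ a v, g (ρ₁ a v) = ρ₂ a (g v)) (h21 : ∀ a v, g (ρ₂ a v) = ρ₁ a (g v))
    (lam : k) (hlam : lam ≠ 0) (hg : ∀ v, g (g v) = lam • v) :
    ∃ (e : ℕ) (c : k), Module.finrank k D = e ^ 2 ∧ c ≠ 0 ∧ (∀ v, g (g v) = (c ^ 2) • v) ∧
      Module.finrank k (LinearMap.ker (g - c • LinearMap.id)) = e.choose 2 := by
  have hinj : Function.Injective (algebraMap k L) := (algebraMap k L).injective
  have h2L : (2 : L) ≠ 0 := by
    have := (map_ne_zero (algebraMap k L)).mpr h2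
    rwa [map_ofNat] at this
  have : IsSimpleRing (L ⊗[k] D) := isSimpleRing_baseChange
  obtain ⟨e, he, ⟨f⟩⟩ := IsSimpleRing.exists_algEquiv_matrix_of_isAlgClosed L (L ⊗[k] D)
  have hDe : Module.finrank k D = e ^ 2 := by
    have h := f.toLinearEquiv.finrank_eq
    rw [Module.finrank_baseChange, Module.finrank_matrix] at h
    simpa [sq] using h
  let ext (ρ : D →ₐ[k] Module.End k W) : L ⊗[k] D →ₐ[L] Module.End L (L ⊗[k] W) :=
    Algebra.TensorProduct.lift (Algebra.ofId L _)
      ((Module.End.baseChangeHom k L W).comp ρ)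
      (fun x y => Algebra.commutes x _)
  have hext : ∀ ρ l d m w, ext ρ (l ⊗ₜ d) (m ⊗ₜ w) = (l * m) ⊗ₜ (ρ d w) := by
    intro ρ l d m w
    have h : ext ρ (l ⊗ₜ d) = (Algebra.ofId L (Module.End L (L ⊗[k] W)) l) *
        (Module.End.baseChangeHom k L W (ρ d)) := Algebra.TensorProduct.lift_tmul _ _ _ _ _
    have h' : Module.End.baseChangeHom k L W (ρ d) = (ρ d).baseChange L := rfl
    rw [h, Module.End.mul_apply, h', LinearMap.baseChange_tmul, Algebra.ofId_apply,
      Module.algebraMap_end_apply, TensorProduct.smul_tmul', smul_eq_mul]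
  let G : Module.End L (L ⊗[k] W) := g.baseChange L
  have hG : ∀ m w, G (m ⊗ₜ w) = m ⊗ₜ g w := by intro m w; simp [G]
  have H12 : ∀ a v, G (ext ρ₁ a v) = ext ρ₂ a (G v) := by
    intro a v
    induction a using TensorProduct.induction_on with
    | zero => simp
    | add x y hx hy => simp [hx, hy]
    | tmul l d =>
      induction v using TensorProduct.induction_on with
      | zero => simp
      | add x y hx hy => simp [hx, hy]
      | tmul m w => rw [hext, hG, hG, hext, h12]
  have H21 : ∀ a v, G (ext ρ₂ a v) = ext ρ₁ a (G v) := by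
    intro a v
    induction a using TensorProduct.induction_on with
    | zero => simp
    | add x y hx hy => simp [hx, hy]
    | tmul l d =>
      induction v using TensorProduct.induction_on with
      | zero => simp
      | add x y hx hy => simp [hx, hy]
      | tmul m w => rw [hext, hG, hG, hext, h21]
  have Hc : ∀ a b v, ext ρ₁ a (ext ρ₂ b v) = ext ρ₂ b (ext ρ₁ a v) := by
    intro a b v
    induction a using TensorProduct.induction_on with
    | zero => simp
    | add x y hx hy => simp [hx, hy]
    | tmul l d =>
      induction b using TensorProduct.induction_on with
      | zero => simp
      | add x y hx hy => simp [hx, hy]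
      | tmul l' d' =>
        induction v using TensorProduct.induction_on with
        | zero => simp
        | add x y hx hy => simp only [map_add, hx, hy]
        | tmul m w => simp only [hext, hcomm, mul_left_comm]
  have HG : ∀ v, G (G v) = (algebraMap k L lam) • v := by
    intro v
    induction v using TensorProduct.induction_on with
    | zero => simp
    | add x y hx hy => simp [hx, hy]
    | tmul m w => rw [hG, hG, hg, TensorProduct.tmul_smul, algebraMap_smul]
  obtain ⟨c, hc2, hp, hm⟩ := split_case h2L e
    ((ext ρ₁).comp f.symm.toAlgHom) ((ext ρ₂).comp f.symm.toAlgHom)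
    (fun a b v => Hc _ _ _) (by rw [Module.finrank_baseChange, hdim, hDe]) G
    (fun a v => H12 _ _) (fun a v => H21 _ _) (algebraMap k L lam)
    ((map_ne_zero _).mpr hlam) HG
  have hc0 : c ≠ 0 := by
    rintro rfl
    apply (map_ne_zero (algebraMap k L)).mpr hlam
    rw [← hc2]; simp
  rw [finrank_ker_eq_rootMultiplicity G c (mul_ne_zero h2L hc0)
    (fun v => by rw [HG, hc2])] at hp
  rw [finrank_ker_eq_rootMultiplicity G (-c) (mul_ne_zero h2L (neg_ne_zero.mpr hc0))
    (fun v => by rw [HG, neg_sq, hc2])] at hm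
  have hch : G.charpoly = g.charpoly.map (algebraMap k L) := LinearMap.charpoly_baseChange _ _
  rw [hch] at hp hm
  have hmem : c ∈ Set.range (algebraMap k L) := by
    by_contra hnot
    have hirr : Irreducible (Polynomial.X ^ 2 - Polynomial.C lam) := by
      rw [X_pow_sub_C_irreducible_iff_of_prime Nat.prime_two]
      intro b hb
      apply hnot
      have : (algebraMap k L b) ^ 2 = c ^ 2 := by rw [← map_pow, hb, hc2]
      rcases sq_eq_sq_iff_eq_or_eq_neg.mp this with h | h
      · exact ⟨b, h⟩
      · exact ⟨-b, by rw [map_neg, h, neg_neg]⟩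
    have hmon : (Polynomial.X ^ 2 - Polynomial.C lam).Monic :=
      Polynomial.monic_X_pow_sub_C lam two_ne_zero
    have hconj : IsConjRoot k (-c) c := by
      rw [isConjRoot_def, ← minpoly.eq_of_irreducible_of_monic hirr (x := c) (by simp [hc2]) hmon,
        ← minpoly.eq_of_irreducible_of_monic hirr (x := -c) (by simp [hc2]) hmon]
    obtain ⟨s, hs⟩ := hconj.exists_algEquiv
    have := Polynomial.eq_rootMultiplicity_map (p := g.charpoly.map (algebraMap k L))
      (f := (s : L →+* L)) s.injective c
    rw [Polynomial.map_map] at this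
    have hcomp : (s : L →+* L).comp (algebraMap k L) = algebraMap k L := by
      ext x; simp
    rw [hcomp] at this
    have hs' : (s : L →+* L) c = -c := hs
    rw [hs', hp, hm] at this
    have := NeZero.ne e
    omega
  obtain ⟨b, rfl⟩ := hmem
  have hb0 : b ≠ 0 := by rintro rfl; simp at hc0
  have hb2 : b ^ 2 = lam := by apply hinj; rw [map_pow, hc2]
  refine ⟨e, -b, hDe, neg_ne_zero.mpr hb0, fun v => by rw [hg, neg_sq, hb2], ?_⟩
  rw [finrank_ker_eq_rootMultiplicity g (-b) (mul_ne_zero h2 (neg_ne_zero.mpr hb0))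
    (fun v => by rw [hg, neg_sq, hb2]), ← hm, ← map_neg,
    Polynomial.eq_rootMultiplicity_map hinj]

lemma involution_of_swap {k D W : Type*} [Field k] [DivisionRing D] [Algebra k D]
    [FiniteDimensional k D] [AddCommGroup W] [Module k W]
    [FiniteDimensional k W]
    (ρ₁ ρ₂ : D →ₐ[k] Module.End k W)
    (hcomm : ∀ a b v, ρ₁ a (ρ₂ b v) = ρ₂ b (ρ₁ a v))
    (hdim : Module.finrank k W = Module.finrank k D) (g : Module.End k W)
    (h12 : ∀ a v, g (ρ₁ a v) = ρ₂ a (g v)) (h21 : ∀ a v, g (ρ₂ a v) = ρ₁ a (g v))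
    (c : k) (hc : c ≠ 0)
    (hpos : 0 < Module.finrank k (LinearMap.ker (g - c • LinearMap.id))) :
    ∃ σ : D →ₗ[k] D, (∀ x y, σ (x * y) = σ y * σ x) ∧ (∀ x, σ (σ x) = x) ∧
      Module.finrank k (LinearMap.ker (σ - LinearMap.id))
        = Module.finrank k (LinearMap.ker (g - c • LinearMap.id)) := by
  obtain ⟨⟨w, hw⟩, hw0⟩ := Module.finrank_pos_iff_exists_ne_zero.mp hpos
  have hw0 : w ≠ 0 := by simpa using hw0
  have hgw : g w = c • w := by
    rw [LinearMap.mem_ker, LinearMap.sub_apply, sub_eq_zero] at hw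
    simpa using hw
  let θ : D →ₗ[k] W := (LinearMap.applyₗ w).comp ρ₁.toLinearMap
  have hθ : ∀ d, θ d = ρ₁ d w := fun d => rfl
  have hθinj : Function.Injective θ := by
    rw [← LinearMap.ker_eq_bot, LinearMap.ker_eq_bot']
    intro d hd
    by_contra hd0
    apply hw0
    have : ρ₁ (d⁻¹ * d) w = 0 := by rw [map_mul, Module.End.mul_apply, ← hθ d, hd, map_zero]
    rw [inv_mul_cancel₀ hd0] at this
    simpa using this
  let Θ : D ≃ₗ[k] W := LinearEquiv.ofInjectiveOfFinrankEq θ hθinj hdim.symm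
  have hΘ : ∀ d, Θ d = ρ₁ d w := fun d => rfl
  let σ : D →ₗ[k] D := Θ.symm.toLinearMap.comp ((LinearMap.applyₗ w).comp ρ₂.toLinearMap)
  have hσ : ∀ d, ρ₁ (σ d) w = ρ₂ d w := by
    intro d
    rw [← hΘ]
    simp [σ]
  have hσu : ∀ d d', ρ₁ d' w = ρ₂ d w → σ d = d' := by
    intro d d' h
    apply Θ.injective
    rw [hΘ, hΘ, hσ, h]
  refine ⟨σ, ?_, ?_, ?_⟩
  · intro x y
    apply hσu
    rw [map_mul, map_mul, Module.End.mul_apply, Module.End.mul_apply, hσ, hcomm, hσ]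
  · intro x
    apply hσu
    have h := congrArg g (hσ x)
    rw [h12, h21, hgw, map_smul, map_smul] at h
    exact (smul_right_injective _ hc h).symm
  · have : LinearMap.ker (g - c • LinearMap.id) =
        (LinearMap.ker (σ - LinearMap.id)).map (Θ : D →ₗ[k] W) := by
      ext v
      obtain ⟨d, rfl⟩ := Θ.surjective v
      have : (Θ d ∈ (LinearMap.ker (σ - LinearMap.id)).map (Θ : D →ₗ[k] W)) ↔
          d ∈ LinearMap.ker (σ - LinearMap.id) := by
        constructor
        · rintro ⟨v', hv', h⟩
          have := Θ.injective h
          rwa [← this]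
        · intro h; exact ⟨d, h, rfl⟩
      rw [this, LinearMap.mem_ker, LinearMap.mem_ker, LinearMap.sub_apply, LinearMap.sub_apply,
        sub_eq_zero, sub_eq_zero, hΘ, h12, hgw, map_smul]
      simp only [LinearMap.smul_apply, LinearMap.id_apply]
      constructor
      · intro h
        exact hσu _ _ (smul_right_injective _ hc h).symm
      · intro h
        rw [← hσ, h]
    rw [this]
    exact (LinearEquiv.finrank_map_eq Θ _).symm


/-- Restriction of an algebra action to an invariant subspace. -/
def restrictAct {k D V : Type*} [Field k] [Ring D] [Algebra k D] [AddCommGroup V] [Module k V]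
    (ρ : D →ₐ[k] Module.End k V) (W : Submodule k V) (h : ∀ d, ∀ w ∈ W, ρ d w ∈ W) :
    D →ₐ[k] Module.End k W :=
  AlgHom.ofLinearMap
    { toFun := fun d => (ρ d).restrict (h d)
      map_add' := by intro a b; ext w; simp
      map_smul' := by intro a b; ext w; simp }
    (by ext w; simp) (by intro a b; ext w; simp)

lemma restrictAct_apply {k D V : Type*} [Field k] [Ring D] [Algebra k D] [AddCommGroup V]
    [Module k V] (ρ : D →ₐ[k] Module.End k V) (W : Submodule k V)
    (h : ∀ d, ∀ w ∈ W, ρ d w ∈ W) (d : D) (w : W) :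
    (restrictAct ρ W h d w : V) = ρ d w := rfl

lemma exists_involution {k A D : Type u} [Field k] (h2 : (2 : k) ≠ 0) [Ring A] [Algebra k A]
    [FiniteDimensional k A] [Algebra.IsCentral k A] [DivisionRing D] [Algebra k D]
    [FiniteDimensional k D] (n : ℕ) [NeZero n] (f : A ≃ₐ[k] Matrix (Fin n) (Fin n) D)
    (m : ℕ) (hm : 0 < m) (ψ : (A ⊗[k] A) ≃ₐ[k] Matrix (Fin m) (Fin m) k)
    (hD : Module.finrank k D ≠ 1) :
    ∃ (e : ℕ) (σ : D →ₗ[k] D), Module.finrank k D = e ^ 2 ∧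
      (∀ x y, σ (x * y) = σ y * σ x) ∧ (∀ x, σ (σ x) = x) ∧
      Module.finrank k (LinearMap.ker (σ - LinearMap.id)) = e.choose 2 := by
  have hcen : Algebra.IsCentral k D := by
    have h1 : Algebra.IsCentral k (Matrix (Fin n) (Fin n) D) :=
      Algebra.IsCentral.of_algEquiv k _ _ f
    have h3 : Algebra.IsCentral k (D ⊗[k] Matrix (Fin n) (Fin n) k) :=
      Algebra.IsCentral.of_algEquiv k _ _ (matrixEquivTensor (Fin n) k D)
    exact Algebra.IsCentral.left_of_tensor_of_field k D (Matrix (Fin n) (Fin n) k)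
  have : NeZero m := ⟨hm.ne'⟩
  let V := Fin m → k
  let Ψ : (A ⊗[k] A) ≃ₐ[k] Module.End k V := ψ.trans Matrix.toLinAlgEquiv'
  obtain ⟨T, hT⟩ := (Ψ.symm.trans ((Algebra.TensorProduct.comm k A A).trans Ψ)).eq_linearEquivConjAlgEquiv
  have hswap : ∀ x v, T (Ψ x v) = Ψ (Algebra.TensorProduct.comm k A A x) (T v) := by
    intro x v
    have := congrArg (fun F => F (Ψ x) (T v)) hT
    simp [LinearEquiv.conjAlgEquiv_apply] at this
    exact this.symm
  let g : Module.End k V := T.toLinearMap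
  have hgg : ∃ lam : k, ∀ v, g (g v) = lam • v := by
    have hmem : g * g ∈ Subalgebra.center k (Module.End k V) := by
      rw [Subalgebra.mem_center_iff]
      intro b
      obtain ⟨x, rfl⟩ := Ψ.surjective b
      refine LinearMap.ext fun v => ?_
      change Ψ x (T (T v)) = T (T (Ψ x v))
      rw [hswap, hswap]
      congr 2
      have : ∀ x : A ⊗[k] A, Algebra.TensorProduct.comm k A A (Algebra.TensorProduct.comm k A A x) = x := by
        intro x
        exact (Algebra.TensorProduct.comm k A A).symm_apply_apply x
      rw [this]
    rw [Algebra.IsCentral.center_eq_bot, Algebra.mem_bot] at hmem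
    obtain ⟨lam, hl⟩ := hmem
    refine ⟨lam, fun v => ?_⟩
    have := congrArg (fun F : Module.End k V => F v) hl
    exact this.symm
  obtain ⟨lam, hlam⟩ := hgg
  have hlam0 : lam ≠ 0 := by
    rintro rfl
    obtain ⟨v, hv⟩ := exists_ne (0 : V)
    apply hv
    have := hlam v
    rw [zero_smul] at this
    exact T.injective (T.injective (by simpa [g] using this))
  let ρ₁ : Matrix (Fin n) (Fin n) D →ₐ[k] Module.End k V :=
    (Ψ.toAlgHom.comp Algebra.TensorProduct.includeLeft).comp f.symm.toAlgHom
  let ρ₂ : Matrix (Fin n) (Fin n) D →ₐ[k] Module.End k V :=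
    (Ψ.toAlgHom.comp Algebra.TensorProduct.includeRight).comp f.symm.toAlgHom
  have hρ₁ : ∀ a, ρ₁ a = Ψ (f.symm a ⊗ₜ 1) := fun a => rfl
  have hρ₂ : ∀ a, ρ₂ a = Ψ (1 ⊗ₜ f.symm a) := fun a => rfl
  have hcomm : ∀ a b v, ρ₁ a (ρ₂ b v) = ρ₂ b (ρ₁ a v) := by
    intro a b v
    rw [hρ₁, hρ₂, ← Module.End.mul_apply, ← Module.End.mul_apply, ← map_mul, ← map_mul]
    simp
  have h12 : ∀ a v, g (ρ₁ a v) = ρ₂ a (g v) := by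
    intro a v
    rw [hρ₁, hρ₂]
    exact hswap _ _
  have h21 : ∀ a v, g (ρ₂ a v) = ρ₁ a (g v) := by
    intro a v
    rw [hρ₁, hρ₂]
    exact hswap _ _
  obtain ⟨W, hW, Φ, hΦ⟩ := matrix_units_decomp (0 : Fin n) ρ₁ ρ₂ hcomm
  have hn : 0 < n := Nat.pos_of_ne_zero (NeZero.ne n)
  have hdim : Module.finrank k W = Module.finrank k D := by
    have e1 := Φ.finrank_eq
    have e2 := ψ.toLinearEquiv.finrank_eq
    have e3 := f.toLinearEquiv.finrank_eq
    rw [Module.finrank_tensorProduct, Module.finrank_matrix] at e2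
    rw [Module.finrank_matrix] at e3
    simp only [V, Module.finrank_pi_fintype, Finset.sum_const, Finset.card_univ, Fintype.card_fin,
      smul_eq_mul, Module.finrank_self, mul_one] at e1 e2 e3
    have e4 : Module.finrank k A = m := Nat.mul_self_inj.mp e2
    have : n * n * Module.finrank k W = n * n * Module.finrank k D := by
      rw [← e3, e4, mul_assoc]
      exact e1.symm
    exact Nat.eq_of_mul_eq_mul_left (Nat.mul_pos hn hn) this
  have hscal : ∀ d : D, (Matrix.single (0 : Fin n) (0 : Fin n) (1 : D)) * Matrix.scalar (Fin n) d
      = Matrix.scalar (Fin n) d * Matrix.single (0 : Fin n) (0 : Fin n) (1 : D) := by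
    intro d
    ext i j
    simp [Matrix.scalar_apply, Matrix.single_apply]
  have m1 : ∀ a b v, ρ₁ a (ρ₁ b v) = ρ₁ (a * b) v := by
    intro a b v; rw [map_mul, Module.End.mul_apply]
  have m2 : ∀ a b v, ρ₂ a (ρ₂ b v) = ρ₂ (a * b) v := by
    intro a b v; rw [map_mul, Module.End.mul_apply]
  let μ₁ : D →ₐ[k] Module.End k V := ρ₁.comp (Matrix.scalarAlgHom (Fin n) k)
  let μ₂ : D →ₐ[k] Module.End k V := ρ₂.comp (Matrix.scalarAlgHom (Fin n) k)
  have hμ₁ : ∀ d, μ₁ d = ρ₁ (Matrix.scalar (Fin n) d) := fun d => rfl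
  have hμ₂ : ∀ d, μ₂ d = ρ₂ (Matrix.scalar (Fin n) d) := fun d => rfl
  have hW1 : ∀ d, ∀ w ∈ W, μ₁ d w ∈ W := by
    intro d w hw
    rw [hW] at hw ⊢
    conv_rhs => rw [← hw]
    rw [hμ₁, ← hcomm, m1, m1, hscal]
  have hW2 : ∀ d, ∀ w ∈ W, μ₂ d w ∈ W := by
    intro d w hw
    rw [hW] at hw ⊢
    conv_rhs => rw [← hw]
    rw [hμ₂, m2, hscal, ← m2, hcomm]
  have hgW : ∀ w ∈ W, g w ∈ W := by
    intro w hw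
    rw [hW] at hw ⊢
    conv_rhs => rw [← hw]
    rw [h12, h21, ← hcomm]
  let r₁ := restrictAct μ₁ W hW1
  let r₂ := restrictAct μ₂ W hW2
  let γ : Module.End k W := g.restrict hgW
  have hγ : ∀ w : W, (γ w : V) = g w := fun w => rfl
  have c1 : ∀ a b v, r₁ a (r₂ b v) = r₂ b (r₁ a v) := by
    intro a b v
    apply Subtype.ext
    simp only [r₁, r₂, restrictAct_apply]
    exact hcomm _ _ _
  have c2 : ∀ a v, γ (r₁ a v) = r₂ a (γ v) := by
    intro a v
    apply Subtype.ext
    simp only [r₁, r₂, restrictAct_apply, hγ]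
    exact h12 _ _
  have c3 : ∀ a v, γ (r₂ a v) = r₁ a (γ v) := by
    intro a v
    apply Subtype.ext
    simp only [r₁, r₂, restrictAct_apply, hγ]
    exact h21 _ _
  obtain ⟨e, c, he, hc0, hc2, hfr⟩ := eigen_descent (AlgebraicClosure k) h2 r₁ r₂ c1 hdim γ c2 c3
    lam hlam0 (fun v => Subtype.ext (by rw [hγ, hγ]; exact hlam _))
  have he2 : 2 ≤ e := by
    by_contra hlt
    have : e = 0 ∨ e = 1 := by omega
    rcases this with rfl | rfl
    · have : 0 < Module.finrank k D := Module.finrank_pos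
      omega
    · exact hD (by simpa using he)
  obtain ⟨σ, s1, s2, s3⟩ := involution_of_swap r₁ r₂ c1 hdim γ c2 c3 c hc0
    (by rw [hfr]; exact Nat.choose_pos he2)
  exact ⟨e, σ, he, s1, s2, by rw [s3, hfr]⟩


/-- The value group. -/
abbrev ValGrp (n : ℕ) := Lex (Fin n → ℤ)

section
variable {k : Type u} [Field k] {D : Type u} [DivisionRing D] [Algebra k D] {n : ℕ}
  {K : Type u} [Field K] [Algebra k K]

/-- coefficientwise structure map to Hahn series over `D`. -/
noncomputable def toHahn (k : Type u) [Field k] (D : Type u) [DivisionRing D] [Algebra k D]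
    (n : ℕ) : HahnSeries (ValGrp n) k →ₐ[k] HahnSeries (ValGrp n) D where
  toFun x := x.map (algebraMap k D)
  map_one' := by ext; simp [HahnSeries.coeff_one]
  map_mul' x y := HahnSeries.map_mul ((algebraMap k D : k →ₙ+* D))
  map_zero' := by ext; simp
  map_add' x y := by ext; simp
  commutes' r := by
    rw [HahnSeries.algebraMap_apply, HahnSeries.algebraMap_apply]
    ext g
    by_cases hg : g = 0
    · subst hg; simp
    · simp [HahnSeries.coeff_single_of_ne, hg]

/-- constant Hahn series. -/
noncomputable def constHahn (k : Type u) [Field k] (D : Type u) [DivisionRing D] [Algebra k D]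
    (n : ℕ) : D →ₐ[k] HahnSeries (ValGrp n) D where
  toRingHom := HahnSeries.C
  commutes' r := by rw [HahnSeries.algebraMap_apply]; rfl

lemma toHahn_commute (x : HahnSeries (ValGrp n) k) (d : D) :
    Commute (toHahn k D n x) (constHahn k D n d) := by
  ext g
  change (HahnSeries.map x _ * HahnSeries.single 0 d).coeff g
    = (HahnSeries.single 0 d * HahnSeries.map x _).coeff g
  rw [HahnSeries.coeff_mul_single_zero, HahnSeries.coeff_single_zero_mul]
  exact Algebra.commutes _ _

/-- The comparison map. -/
noncomputable def hahnMap (D : Type u) [DivisionRing D] [Algebra k D]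
    (θ : K →ₐ[k] HahnSeries (ValGrp n) k) :
    (K ⊗[k] D) →ₐ[k] HahnSeries (ValGrp n) D :=
  Algebra.TensorProduct.lift ((toHahn k D n).comp θ) (constHahn k D n)
    (fun x d => toHahn_commute (θ x) d)

variable (θ : K →ₐ[k] HahnSeries (ValGrp n) k)

lemma hahnMap_tmul_coeff (f : K) (d : D) (g : ValGrp n) :
    (hahnMap D θ (f ⊗ₜ d)).coeff g = (θ f).coeff g • d := by
  change (HahnSeries.map (θ f) _ * HahnSeries.single 0 d).coeff g = _
  rw [HahnSeries.coeff_mul_single_zero, Algebra.smul_def]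
  rfl

lemma hahnMap_injective : Function.Injective (hahnMap D θ) := by
  classical
  let ℬ := Module.Basis.ofVectorSpace k D
  let E := TensorProduct.equivFinsuppOfBasisRight (M := K) ℬ
  have key : ∀ x i g, (θ (E x i)).coeff g = ℬ.repr ((hahnMap D θ x).coeff g) i := by
    intro x i g
    induction x using TensorProduct.induction_on with
    | zero => simp
    | tmul a b =>
      rw [hahnMap_tmul_coeff]
      simp [E, mul_comm]
    | add x y hx hy => simp [hx, hy]
  intro x y h
  apply E.injective
  ext i
  apply θ.toRingHom.injective
  ext g
  change (θ (E x i)).coeff g = (θ (E y i)).coeff g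
  rw [key, key, h]

lemma hahnMap_baseChange (σ : D →ₗ[k] D) (x : K ⊗[k] D) (g : ValGrp n) :
    (hahnMap D θ (σ.baseChange K x)).coeff g
      = σ ((hahnMap D θ x).coeff g) := by
  induction x using TensorProduct.induction_on with
  | zero => simp
  | tmul a b =>
    rw [LinearMap.baseChange_tmul, hahnMap_tmul_coeff, hahnMap_tmul_coeff, map_smul]
  | add x y hx hy => simp [hx, hy]

/-- exponents of the variables. -/
def gam (n : ℕ) (j : Fin n) : ValGrp n := toLex (Pi.single j 1)

lemma hahnMap_tvar_smul (t : Fin n → K) (ht : ∀ j, θ (t j) = HahnSeries.single (gam n j) 1)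
    (j : Fin n) (x : K ⊗[k] D) :
    hahnMap D θ (t j • x) = HahnSeries.single (gam n j) 1 * hahnMap D θ x := by
  have : t j • x = (t j ⊗ₜ 1) * x := by
    rw [Algebra.smul_def]; rfl
  rw [this, map_mul]
  congr 1
  ext g
  rw [hahnMap_tmul_coeff, ht]
  by_cases hg : g = gam n j
  · subst hg; simp
  · simp [HahnSeries.coeff_single_of_ne, hg]

lemma coeff_order_ne {Γ R : Type*} [LinearOrder Γ] [Zero Γ] [Zero R] {x : HahnSeries Γ R}
    (hx : x ≠ 0) : x.coeff x.order ≠ 0 := by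
  rw [HahnSeries.coeff_order_eq_zero.ne]
  exact hx

lemma aniso_hahn (t : Fin n → K) (ht : ∀ j, θ (t j) = HahnSeries.single (gam n j) 1)
    (σ : D →ₗ[k] D) (hσ : Function.Injective σ)
    (y : Fin n → K ⊗[k] D)
    (h : ∑ j, t j • (σ.baseChange K (y j) * y j) = 0) :
    ∀ j, y j = 0 := by
  classical
  by_contra hne
  push Not at hne
  let F := hahnMap D θ
  let S : Finset (Fin n) := Finset.univ.filter (fun j => y j ≠ 0)
  let T : Fin n → HahnSeries (ValGrp n) D := fun j =>
    HahnSeries.single (gam n j) 1 * (F (σ.baseChange K (y j)) * F (y j))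
  have hF0 : ∀ j, y j ≠ 0 → F (y j) ≠ 0 := by
    intro j hj h0
    exact hj (hahnMap_injective θ (h0.trans (map_zero F).symm))
  have hco : ∀ j g, (F (σ.baseChange K (y j))).coeff g = 0 ↔ (F (y j)).coeff g = 0 := by
    intro j g
    change (hahnMap D θ _).coeff g = 0 ↔ _
    rw [hahnMap_baseChange, map_eq_zero_iff σ hσ]
  have hsF0 : ∀ j, y j ≠ 0 → F (σ.baseChange K (y j)) ≠ 0 := by
    intro j hj h0
    apply hF0 j hj
    ext g
    have := (hco j g).mp (by rw [h0]; simp)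
    simpa using this
  have hord : ∀ j, y j ≠ 0 →
      (F (σ.baseChange K (y j))).order = (F (y j)).order := by
    intro j hj
    apply le_antisymm
    · apply HahnSeries.order_le_of_coeff_ne_zero
      rw [Ne, hco]
      exact coeff_order_ne (hF0 j hj)
    · apply HahnSeries.order_le_of_coeff_ne_zero
      rw [Ne, ← hco]
      exact coeff_order_ne (hsF0 j hj)
  have hsing : ∀ j, (HahnSeries.single (gam n j) (1 : D)) ≠ 0 := by intro j; simp
  have hT0 : ∀ j, y j ≠ 0 → T j ≠ 0 := fun j hj =>
    mul_ne_zero (hsing j) (mul_ne_zero (hsF0 j hj) (hF0 j hj))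
  have hTord : ∀ j, y j ≠ 0 → (T j).order = gam n j + ((F (y j)).order + (F (y j)).order) := by
    intro j hj
    simp only [T]
    rw [HahnSeries.order_mul (hsing j) (mul_ne_zero (hsF0 j hj) (hF0 j hj)),
      HahnSeries.order_mul (hsF0 j hj) (hF0 j hj), hord j hj, HahnSeries.order_single one_ne_zero]
  have hTz : ∀ j, y j = 0 → T j = 0 := by
    intro j hj
    simp [T, hj]
  have hdist : ∀ i j, y i ≠ 0 → y j ≠ 0 → i ≠ j → (T i).order ≠ (T j).order := by
    intro i j hi hj hij heq
    rw [hTord i hi, hTord j hj] at heq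
    have := congrArg (fun v : ValGrp n => ofLex v i) heq
    simp only [gam, ofLex_add, ofLex_toLex, Pi.add_apply, Pi.single_eq_same,
      Pi.single_eq_of_ne hij] at this
    omega
  obtain ⟨j₁, hj₁⟩ := hne
  obtain ⟨j₀, hj₀, hmin⟩ := Finset.exists_min_image S (fun j => (T j).order)
    ⟨j₁, by simp [S, hj₁]⟩
  have hy0 : y j₀ ≠ 0 := by simpa [S] using hj₀
  have hsum : ∑ j, T j = 0 := by
    have := congrArg F h
    rw [map_sum, map_zero] at this
    rw [← this]
    refine Finset.sum_congr rfl fun j _ => ?_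
    simp only [T, F]
    rw [hahnMap_tvar_smul θ t ht, map_mul]
  have hc := congrArg (fun f : HahnSeries (ValGrp n) D => f.coeff (T j₀).order) hsum
  simp only [HahnSeries.coeff_sum, HahnSeries.coeff_zero] at hc
  rw [Finset.sum_eq_single j₀] at hc
  · exact coeff_order_ne (hT0 j₀ hy0) hc
  · intro j _ hj
    by_cases hyj : y j = 0
    · rw [hTz j hyj]; simp
    · apply HahnSeries.coeff_eq_zero_of_lt_order
      exact lt_of_le_of_ne (hmin j (by simp [S, hyj])) (hdist j₀ j hy0 hyj hj.symm)
  · intro hh; exact absurd (Finset.mem_univ _) hh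
end


/-- matrices commute with scalar extension. -/
lemma exists_matrix_baseChange (k K D : Type u) [Field k] [Field K] [Algebra k K] [DivisionRing D]
    [Algebra k D] (n : ℕ) :
    Nonempty ((K ⊗[k] Matrix (Fin n) (Fin n) D) ≃ₐ[K] Matrix (Fin n) (Fin n) (K ⊗[k] D)) := by
  let e1 : (K ⊗[k] Matrix (Fin n) (Fin n) D) ≃ₐ[K] (K ⊗[k] (D ⊗[k] Matrix (Fin n) (Fin n) k)) :=
    Algebra.TensorProduct.congr AlgEquiv.refl (matrixEquivTensor (Fin n) k D)
  let e2 : ((K ⊗[k] D) ⊗[k] Matrix (Fin n) (Fin n) k) ≃ₐ[K]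
      (K ⊗[k] (D ⊗[k] Matrix (Fin n) (Fin n) k)) :=
    Algebra.TensorProduct.assoc k k K K D (Matrix (Fin n) (Fin n) k)
  let e3 := (matrixEquivTensor (Fin n) k (K ⊗[k] D)).symm
  let e4 : ((K ⊗[k] D) ⊗[k] Matrix (Fin n) (Fin n) k) ≃ₐ[K] Matrix (Fin n) (Fin n) (K ⊗[k] D) :=
    AlgEquiv.ofRingEquiv (f := e3.toRingEquiv) (by
      intro r
      change e3 ((r ⊗ₜ 1) ⊗ₜ 1) = _
      simp only [e3]
      rw [matrixEquivTensor_apply_symm]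
      ext i j
      rw [Matrix.algebraMap_matrix_apply]
      by_cases h : i = j
      · subst h
        simp
      · simp [h])
  exact ⟨e1.trans (e2.symm.trans e4)⟩

/-- The twisted conjugate transpose. -/
def twist {K B : Type*} [Field K] [Ring B] [Algebra K B] (n : ℕ) (t : Fin n → K)
    (s : B →ₗ[K] B) : Matrix (Fin n) (Fin n) B →ₗ[K] Matrix (Fin n) (Fin n) B where
  toFun X := Matrix.of fun i l => ((t i)⁻¹ * t l) • s (X l i)
  map_add' X Y := by ext i l; simp
  map_smul' c X := by
    ext i l
    simp only [Matrix.of_apply, Matrix.smul_apply, map_smul, RingHom.id_apply]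
    exact smul_comm _ _ _

section
variable {K B : Type*} [Field K] [Ring B] [Algebra K B] {n : ℕ} (t : Fin n → K)
    (s : B →ₗ[K] B)

lemma twist_apply (X : Matrix (Fin n) (Fin n) B) (i l : Fin n) :
    twist n t s X i l = ((t i)⁻¹ * t l) • s (X l i) := rfl

lemma twist_mul (ht : ∀ j, t j ≠ 0) (hs : ∀ x y, s (x * y) = s y * s x)
    (X Y : Matrix (Fin n) (Fin n) B) :
    twist n t s (X * Y) = twist n t s Y * twist n t s X := by
  ext i l
  rw [twist_apply, Matrix.mul_apply, Matrix.mul_apply, map_sum, Finset.smul_sum]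
  refine Finset.sum_congr rfl fun j _ => ?_
  rw [twist_apply, twist_apply, hs, smul_mul_smul_comm]
  congr 1
  have := ht j
  field_simp

lemma twist_twist (ht : ∀ j, t j ≠ 0) (hs : ∀ x, s (s x) = x)
    (X : Matrix (Fin n) (Fin n) B) : twist n t s (twist n t s X) = X := by
  ext i l
  rw [twist_apply, twist_apply, map_smul, hs, smul_smul]
  have h1 := ht i
  have h2 := ht l
  have : (t i)⁻¹ * t l * ((t l)⁻¹ * t i) = 1 := by field_simp
  rw [this, one_smul]

lemma twist_aniso (ht : ∀ j, t j ≠ 0)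
    (han : ∀ y : Fin n → B, ∑ j, t j • (s (y j) * y j) = 0 → ∀ j, y j = 0)
    (X : Matrix (Fin n) (Fin n) B) (h : twist n t s X * X = 0) : X = 0 := by
  ext j l
  refine han (fun j => X j l) ?_ j
  have := congrArg (fun M : Matrix (Fin n) (Fin n) B => t l • M l l) h
  simp only [Matrix.mul_apply, Finset.smul_sum, Matrix.zero_apply, smul_zero] at this
  rw [← this]
  refine Finset.sum_congr rfl fun i _ => ?_
  rw [twist_apply, smul_mul_assoc, smul_smul, ← mul_assoc, mul_inv_cancel₀ (ht l), one_mul]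

lemma twist_finrank [FiniteDimensional K B] (ht : ∀ j, t j ≠ 0) (hs : ∀ x, s (s x) = x) :
    Module.finrank K (LinearMap.ker (twist n t s - LinearMap.id))
      = n * Module.finrank K (LinearMap.ker (s - LinearMap.id))
        + n.choose 2 * Module.finrank K B := by
  rw [← finrank_hermSub n s hs]
  let Θ : Matrix (Fin n) (Fin n) B ≃ₗ[K] (Fin n → Fin n → B) :=
    { toFun := fun X i l => t i • X i l
      map_add' := fun X Y => by ext i l; simp
      map_smul' := fun c X => by
        ext i l
        simp only [Matrix.smul_apply, Pi.smul_apply, RingHom.id_apply]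
        exact smul_comm _ _ _
      invFun := fun Y => Matrix.of fun i l => (t i)⁻¹ • Y i l
      left_inv := fun X => by ext i l; simp [smul_smul, ht i]
      right_inv := fun Y => by ext i l; simp [smul_smul, ht i] }
  have : LinearMap.ker (twist n t s - LinearMap.id)
      = (hermSub n s).comap (Θ : Matrix (Fin n) (Fin n) B →ₗ[K] (Fin n → Fin n → B)) := by
    ext X
    rw [LinearMap.mem_ker, LinearMap.sub_apply, LinearMap.id_apply, sub_eq_zero,
      Submodule.mem_comap]
    change _ ↔ ∀ i l, s (t l • X l i) = t i • X i l
    rw [← Matrix.ext_iff]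
    refine forall_congr' fun i => forall_congr' fun l => ?_
    rw [twist_apply, map_smul, mul_smul]
    constructor
    · intro h
      rw [← h, smul_smul, mul_inv_cancel₀ (ht i), one_smul]
    · intro h
      rw [h, smul_smul, inv_mul_cancel₀ (ht i), one_smul]
  rw [this]
  exact (Θ.ofSubmodule' (hermSub n s)).finrank_eq
end

lemma baseChange_ker_finrank {k K D : Type*} [Field k] [Field K] [Algebra k K] [Ring D]
    [Algebra k D] [FiniteDimensional k D] (h2 : (2 : k) ≠ 0) (σ : D →ₗ[k] D)
    (hσ : ∀ x, σ (σ x) = x) :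
    Module.finrank K (LinearMap.ker (σ.baseChange K - LinearMap.id))
      = Module.finrank k (LinearMap.ker (σ - LinearMap.id)) := by
  have h2K : (2 : K) ≠ 0 := by
    have := (map_ne_zero (algebraMap k K)).mpr h2
    rwa [map_ofNat] at this
  have a1 := finrank_ker_eq_rootMultiplicity σ (1 : k) (by simpa using h2) (by simpa using hσ)
  have a2 := finrank_ker_eq_rootMultiplicity (σ.baseChange K) (1 : K) (by simpa using h2K)
    (by
      intro v
      rw [one_pow, one_smul]
      induction v using TensorProduct.induction_on with
      | zero => simp
      | tmul a b => simp [hσ]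
      | add x y hx hy => rw [map_add, map_add, hx, hy])
  rw [one_smul] at a1 a2
  rw [a1, a2, LinearMap.charpoly_baseChange,
    Polynomial.eq_rootMultiplicity_map (algebraMap k K).injective, map_one]

lemma arith_aux (n e d : ℕ) (h : n * n * e ^ 2 = d ^ 2) :
    n * e.choose 2 + n.choose 2 * e ^ 2 = d * (d - 1) / 2 := by
  have hd : d = n * e := by
    have : d ^ 2 = (n * e) ^ 2 := by rw [← h]; ring
    exact Nat.pow_left_injective two_ne_zero this
  subst hd
  rw [← Nat.choose_two_right]
  have h3 : ∀ m : ℕ, ((m.choose 2 : ℕ) : ℚ) = m * (m - 1) / 2 := fun m => Nat.cast_choose_two ℚ m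
  have : ((n * e.choose 2 + n.choose 2 * e ^ 2 : ℕ) : ℚ) = (((n * e).choose 2 : ℕ) : ℚ) := by
    push_cast
    rw [h3, h3, h3]
    push_cast
    ring
  exact_mod_cast this

/-- the construction over an abstract field with a comparison map to Hahn series. -/
lemma final_construct {k A D K : Type u} [Field k] (h2 : (2 : k) ≠ 0) [Ring A] [Algebra k A]
    [FiniteDimensional k A] [DivisionRing D] [Algebra k D]
    [FiniteDimensional k D] (n : ℕ) (f : A ≃ₐ[k] Matrix (Fin n) (Fin n) D)
    (d : ℕ) (hd : Module.finrank k A = d ^ 2)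
    (e : ℕ) (σ : D →ₗ[k] D) (he : Module.finrank k D = e ^ 2)
    (hσ1 : ∀ x y, σ (x * y) = σ y * σ x) (hσ2 : ∀ x, σ (σ x) = x)
    (hσ3 : Module.finrank k (LinearMap.ker (σ - LinearMap.id)) = e.choose 2)
    [Field K] [Algebra k K] (θ : K →ₐ[k] HahnSeries (ValGrp n) k)
    (t : Fin n → K) (ht : ∀ j, θ (t j) = HahnSeries.single (gam n j) 1) :
    ∃ (τ : (K ⊗[k] A) →ₗ[K] (K ⊗[k] A)),
      (∀ x y : K ⊗[k] A, τ (x * y) = τ y * τ x) ∧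
      (∀ x : K ⊗[k] A, τ (τ x) = x) ∧
      Module.finrank K ↥(LinearMap.ker (τ - LinearMap.id)) = d * (d - 1) / 2 ∧
      (∀ x : K ⊗[k] A, τ x * x = 0 → x = 0) := by
  obtain ⟨E0⟩ := exists_matrix_baseChange k K D n
  let E : (K ⊗[k] A) ≃ₐ[K] Matrix (Fin n) (Fin n) (K ⊗[k] D) :=
    (Algebra.TensorProduct.congr AlgEquiv.refl f).trans E0
  let s := σ.baseChange K
  have ht0 : ∀ j, t j ≠ 0 := by
    intro j h
    have := ht j
    rw [h, map_zero] at this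
    exact HahnSeries.single_ne_zero (one_ne_zero) this.symm
  have hs1 : ∀ x y, s (x * y) = s y * s x := by
    intro x y
    induction x using TensorProduct.induction_on with
    | zero => simp
    | add x x' hx hx' => rw [add_mul, map_add, map_add, mul_add, hx, hx']
    | tmul a b =>
      induction y using TensorProduct.induction_on with
      | zero => simp
      | add x x' hx hx' => rw [mul_add, map_add, map_add, add_mul, hx, hx']
      | tmul a' b' => simp [s, hσ1, mul_comm]
  have hs2 : ∀ x, s (s x) = x := by
    intro v
    induction v using TensorProduct.induction_on with
    | zero => simp
    | tmul a b => simp [s, hσ2]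
    | add x y hx hy => rw [map_add, map_add, hx, hy]
  have hσi : Function.Injective σ := Function.LeftInverse.injective hσ2
  let T := twist n t s
  let τ : (K ⊗[k] A) →ₗ[K] (K ⊗[k] A) :=
    E.symm.toLinearMap ∘ₗ T ∘ₗ E.toLinearMap
  have hτ : ∀ x, τ x = E.symm (T (E x)) := fun x => rfl
  refine ⟨τ, ?_, ?_, ?_, ?_⟩
  · intro x y
    rw [hτ, hτ, hτ, map_mul, ← map_mul E.symm]
    exact congrArg E.symm (twist_mul t s ht0 hs1 _ _)
  · intro x
    rw [hτ, hτ, AlgEquiv.apply_symm_apply]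
    rw [show T (T (E x)) = E x from twist_twist t s ht0 hs2 _, AlgEquiv.symm_apply_apply]
  · have hk : LinearMap.ker (τ - LinearMap.id) = (LinearMap.ker (T - LinearMap.id)).comap
        (E.toLinearEquiv : (K ⊗[k] A) →ₗ[K] Matrix (Fin n) (Fin n) (K ⊗[k] D)) := by
      ext x
      rw [LinearMap.mem_ker, LinearMap.sub_apply, LinearMap.id_apply, sub_eq_zero,
        Submodule.mem_comap, LinearMap.mem_ker, LinearMap.sub_apply, LinearMap.id_apply,
        sub_eq_zero]
      change E.symm (T (E x)) = x ↔ T (E x) = E x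
      exact AlgEquiv.symm_apply_eq E
    rw [hk, (E.toLinearEquiv.ofSubmodule' (LinearMap.ker (T - LinearMap.id))).finrank_eq]
    rw [twist_finrank t s ht0 hs2, baseChange_ker_finrank h2 σ hσ2, hσ3,
      Module.finrank_baseChange, he]
    apply arith_aux
    rw [← hd, f.toLinearEquiv.finrank_eq, Module.finrank_matrix, he]
    simp
  · intro x hx
    have h0 : T (E x) * E x = 0 := by
      have := congrArg E hx
      rwa [map_mul, hτ, AlgEquiv.apply_symm_apply, map_zero] at this
    have := twist_aniso t s ht0 (aniso_hahn θ t ht σ hσi) _ h0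
    exact (map_eq_zero_iff E E.injective).mp this

theorem statement3 {k : Type u} [Field k] (h2 : (2 : k) ≠ 0)
    (A : Type u) [Ring A] [Algebra k A] [FiniteDimensional k A]
    -- `A` is central simple over `k`
    [Algebra.IsCentral k A] [IsSimpleRing A]
    (d : ℕ) (hd : Module.finrank k A = d ^ 2)
    -- `A` has exponent two: `A ⊗[k] A` is isomorphic to a matrix algebra over `k`
    (hexp : ∃ m : ℕ, 0 < m ∧ Nonempty ((A ⊗[k] A) ≃ₐ[k] Matrix (Fin m) (Fin m) k))
    -- `A` is not split: `A` is not isomorphic to any matrix algebra over `k`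
    (hnonsplit : ∀ m : ℕ, ¬ Nonempty (A ≃ₐ[k] Matrix (Fin m) (Fin m) k)) :
    ∃ (K : Type u) (_ : Field K) (_ : Algebra k K)
      -- a `K`-linear map `τ` on `A_K = K ⊗[k] A` ...
      (τ : (K ⊗[k] A) →ₗ[K] (K ⊗[k] A)),
      -- ... which is an anti-automorphism ...
      (∀ x y : K ⊗[k] A, τ (x * y) = τ y * τ x) ∧
      -- ... with `τ ∘ τ = id` (an involution) ...
      (∀ x : K ⊗[k] A, τ (τ x) = x) ∧
      -- ... of symplectic type: the fixed space `{x | τ x = x}` has dimension `d(d-1)/2` ...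
      Module.finrank K ↥(LinearMap.ker (τ - LinearMap.id)) = d * (d - 1) / 2 ∧
      -- ... and anisotropic
      (∀ x : K ⊗[k] A, τ x * x = 0 → x = 0) := by
  have : IsArtinianRing A := IsArtinianRing.of_finite k A
  obtain ⟨n, hn, D, _, _, _, ⟨f⟩⟩ := IsSimpleRing.exists_algEquiv_matrix_divisionRing_finite k A
  obtain ⟨m, hm, ⟨ψ⟩⟩ := hexp
  have hD : Module.finrank k D ≠ 1 := by
    intro h1
    have hb : Function.Bijective (Algebra.ofId k D) := by
      refine ⟨(algebraMap k D).injective, ?_⟩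
      have hi : Function.Injective (Algebra.linearMap k D) := (algebraMap k D).injective
      exact (LinearMap.injective_iff_surjective_of_finrank_eq_finrank
        (by rw [h1, Module.finrank_self])).mp hi
    exact hnonsplit n ⟨f.trans (AlgEquiv.ofBijective _ hb).mapMatrix.symm⟩
  obtain ⟨e, σ, he, h1, h3, h4⟩ := exists_involution h2 n f m hm ψ hD
  exact ⟨HahnSeries (ValGrp n) k, inferInstance, inferInstance,
    final_construct h2 n f d hd e σ he h1 h3 h4 (AlgHom.id k _)
      (fun j => HahnSeries.single (gam n j) 1) (fun j => rfl)⟩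
end

section
/- Let k be a field with char(k) ≠ 2 and let q be a nondegenerate quadratic form of dimension ten over k. Suppose the even Clifford algebra C₀(q) is not split, i.e., C₀(q) is not isomorphic over its center Z (which is a 2-dimensional étale k-algebra) to the 16×16 matrix algebra M₁₆(Z). Then there exist a field extension k ⊆ K and an anisotropic nondegenerate quadratic form q' of dimension ten over K such that q' has the same discriminant as q_K (that is, det(q')·det(q) is a square in K) and the same Witt invariant as q_K: the full Clifford algebras C(q') and C(q_K) are Brauer equivalent, i.e., M_r(C(q')) ≅ M_s(C(q_K)) as K-algebras for some r, s ≥ 1. -/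
/-!
STATEMENT 5: Let `k` be a field with `char k ≠ 2` and `q` a nondegenerate quadratic form
of dimension ten over `k` whose even Clifford algebra `C₀(q)` is not split over its
center `Z` (not `Z`-isomorphic to `M₁₆(Z)`).  Then there is a field extension `k ⊆ K` and
an anisotropic nondegenerate ten-dimensional quadratic form `q'` over `K` with the same
discriminant and the same Witt invariant (Brauer class of the full Clifford algebra) as
`q_K`.

Quadratic forms of dimension ten are formalized as quadratic forms on `Fin 10 → K`; the
Gram matrix of such a form is `(polar q eᵢ eⱼ)/2`, nondegeneracy is the nonvanishing of
its determinant, and "same discriminant" means the product of the determinants is a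
square.
-/

open scoped TensorProduct

set_option synthInstance.maxHeartbeats 1000000
set_option maxHeartbeats 1000000

universe u

/-- The Gram matrix of a quadratic form on `Fin n → K`: the matrix of the associated
symmetric bilinear form `(x, y) ↦ polar q x y / 2` in the standard basis. -/
noncomputable def gramMatrix {K : Type*} [Field K] {n : ℕ}
    (q : QuadraticForm K (Fin n → K)) : Matrix (Fin n) (Fin n) K :=
  Matrix.of fun i j => QuadraticMap.polar q (Pi.single i 1) (Pi.single j 1) / 2

noncomputable section CliffTen
namespace CliffTen

/-! ### Part 1 -/


/-- diagonal Clifford algebra -/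
abbrev CA {K : Type*} [Field K] {n : ℕ} (w : Fin n → K) : Type _ :=
  CliffordAlgebra (QuadraticMap.weightedSumSquares K w)

/-- generator -/
def gen {K : Type*} [Field K] {n : ℕ} (w : Fin n → K) (i : Fin n) : CA w :=
  CliffordAlgebra.ι _ (Pi.single i 1)

section
variable {K : Type*} [Field K] {n : ℕ} (w : Fin n → K)

lemma gen_sq (i : Fin n) : gen w i * gen w i = algebraMap K _ (w i) := by
  rw [gen, CliffordAlgebra.ι_sq_scalar]
  congr 1
  rw [QuadraticMap.weightedSumSquares_apply, Finset.sum_eq_single i]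
  · simp
  · intro j _ hj; simp [Pi.single_eq_of_ne hj]
  · simp

lemma gen_anti {i j : Fin n} (h : i ≠ j) : gen w i * gen w j = - (gen w j * gen w i) := by
  have := CliffordAlgebra.ι_mul_ι_comm_of_isOrtho
    (Q := QuadraticMap.weightedSumSquares K w) (a := Pi.single i 1) (b := Pi.single j 1) (by
      rw [QuadraticMap.isOrtho_def]
      simp only [QuadraticMap.weightedSumSquares_apply]
      rw [← Finset.sum_add_distrib]
      refine Finset.sum_congr rfl fun l _ => ?_
      by_cases h1 : l = i
      · subst h1; simp [h]
      · simp [Pi.single_eq_of_ne h1])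
  exact this

lemma ι_eq (v : Fin n → K) :
    CliffordAlgebra.ι (QuadraticMap.weightedSumSquares K w) v = ∑ i, v i • gen w i := by
  conv_lhs => rw [pi_eq_sum_univ' v]
  simp only [map_sum, map_smul, gen]

variable {A : Type*} [Ring A] [Algebra K A]

lemma sum_sq (h2 : (2 : K) ≠ 0) (e : Fin n → A) (hs : ∀ i, e i * e i = algebraMap K A (w i))
    (ha : ∀ i j, i ≠ j → e i * e j = - (e j * e i)) (v : Fin n → K) :
    (∑ i, v i • e i) * (∑ i, v i • e i) =
      algebraMap K A (QuadraticMap.weightedSumSquares K w v) := by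
  set S := (∑ i, v i • e i) * (∑ i, v i • e i) with hS
  have h1 : S = ∑ i, ∑ j, (v i * v j) • (e i * e j) := by
    rw [hS, Finset.sum_mul]
    refine Finset.sum_congr rfl fun i _ => ?_
    rw [Finset.mul_sum]
    refine Finset.sum_congr rfl fun j _ => ?_
    rw [smul_mul_smul_comm]
  have h2' : S = ∑ i, ∑ j, (v i * v j) • (e j * e i) := by
    rw [h1, Finset.sum_comm]
    refine Finset.sum_congr rfl fun i _ => Finset.sum_congr rfl fun j _ => ?_
    rw [mul_comm]
  have h3 : S + S = (2 : K) • algebraMap K A (QuadraticMap.weightedSumSquares K w v) := by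
    conv_lhs => rw [h2']; arg 1; rw [← h2', h1]
    rw [← Finset.sum_add_distrib, QuadraticMap.weightedSumSquares_apply, map_sum, Finset.smul_sum]
    refine Finset.sum_congr rfl fun i _ => ?_
    rw [← Finset.sum_add_distrib, Finset.sum_eq_single i]
    · rw [hs, ← two_smul K, Algebra.algebraMap_eq_smul_one, Algebra.algebraMap_eq_smul_one,
        smul_smul, smul_smul, smul_eq_mul, mul_assoc, mul_comm (w i), mul_smul]
    · intro j _ hj
      rw [ha i j (Ne.symm hj), smul_neg, neg_add_cancel]
    · simp
  rw [← two_smul K] at h3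
  exact smul_right_injective A h2 h3

/-- lift from generators -/
def liftD (h2 : (2 : K) ≠ 0) (e : Fin n → A) (hs : ∀ i, e i * e i = algebraMap K A (w i))
    (ha : ∀ i j, i ≠ j → e i * e j = - (e j * e i)) : CA w →ₐ[K] A :=
  CliffordAlgebra.lift _ ⟨Fintype.linearCombination K e, fun v => by
    simp only [Fintype.linearCombination_apply]
    exact sum_sq w h2 e hs ha v⟩

@[simp] lemma liftD_gen (h2 : (2 : K) ≠ 0) (e : Fin n → A)
    (hs : ∀ i, e i * e i = algebraMap K A (w i))
    (ha : ∀ i j, i ≠ j → e i * e j = - (e j * e i)) (i : Fin n) :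
    liftD w h2 e hs ha (gen w i) = e i := by
  simp [liftD, gen]

variable {w} in
lemma hom_ext' {f g : CA w →ₐ[K] A} (h : ∀ i, f (gen w i) = g (gen w i)) : f = g := by
  apply CliffordAlgebra.hom_ext
  apply LinearMap.ext
  intro v
  simp [ι_eq, h]

/-- tail weights -/
def tl {K : Type*} [Field K] {n : ℕ} (w : Fin (n + 2) → K) : Fin n → K :=
  fun i => -(w 0 * w 1)⁻¹ * w i.succ.succ

section tail
variable {K : Type*} [Field K] {n : ℕ} (h2 : (2 : K) ≠ 0) (w : Fin (n + 2) → K)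
  (hw : ∀ i, w i ≠ 0)

/-- generators in the tensor product -/
def tgen : Fin (n + 2) → QuaternionAlgebra K (w 0) 0 (w 1) ⊗[K] CA (tl w) :=
  Fin.cons ((⟨0, 1, 0, 0⟩ : QuaternionAlgebra K (w 0) 0 (w 1)) ⊗ₜ 1)
    (Fin.cons ((⟨0, 0, 1, 0⟩ : QuaternionAlgebra K (w 0) 0 (w 1)) ⊗ₜ 1)
      (fun i => (⟨0, 0, 0, 1⟩ : QuaternionAlgebra K (w 0) 0 (w 1)) ⊗ₜ gen (tl w) i))

lemma tgen0 : tgen w 0 = (⟨0, 1, 0, 0⟩ : QuaternionAlgebra K (w 0) 0 (w 1)) ⊗ₜ 1 := rfl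

lemma tgen1 : tgen w 1 = (⟨0, 0, 1, 0⟩ : QuaternionAlgebra K (w 0) 0 (w 1)) ⊗ₜ 1 := rfl

lemma tgen2 (i : Fin n) : tgen w i.succ.succ =
    (⟨0, 0, 0, 1⟩ : QuaternionAlgebra K (w 0) 0 (w 1)) ⊗ₜ gen (tl w) i := rfl

lemma tgen_sq (hw : ∀ i, w i ≠ 0) (i) : tgen w i * tgen w i = algebraMap K _ (w i) := by
  refine Fin.cases ?_ (fun i => Fin.cases ?_ (fun i => ?_) i) i
  · simp only [tgen, Fin.cons_zero, Algebra.TensorProduct.tmul_mul_tmul, mul_one,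
      Algebra.TensorProduct.algebraMap_apply]
    congr 1
    ext <;> simp
  · simp only [tgen, Fin.cons_zero, Fin.cons_succ, Algebra.TensorProduct.tmul_mul_tmul, mul_one,
      Algebra.TensorProduct.algebraMap_apply]
    congr 1
    ext <;> simp
  · simp only [tgen, Fin.cons_succ, Algebra.TensorProduct.tmul_mul_tmul, gen_sq]
    rw [Algebra.algebraMap_eq_smul_one, Algebra.algebraMap_eq_smul_one,
      Algebra.TensorProduct.one_def, ← TensorProduct.smul_tmul, TensorProduct.smul_tmul']
    congr 1
    have h0 := hw 0
    have h1 := hw 1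
    ext <;> simp [tl]
    field_simp

lemma tgen_anti (i j) (h : i ≠ j) : tgen w i * tgen w j = - (tgen w j * tgen w i) := by
  have e1 : ∀ i : Fin (n+2), i = 0 ∨ i = 1 ∨ ∃ j : Fin n, i = j.succ.succ := by
    intro i
    refine Fin.cases (Or.inl rfl) (fun i => Fin.cases (Or.inr (Or.inl rfl))
      (fun i => Or.inr (Or.inr ⟨i, rfl⟩)) i) i
  have key : ∀ (x y : QuaternionAlgebra K (w 0) 0 (w 1)) (a b : CA (tl w)),
      (x * y = - (y * x) ∧ a * b = b * a ∨ x * y = y * x ∧ a * b = - (b * a)) →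
      (x ⊗ₜ[K] a) * (y ⊗ₜ[K] b) = - ((y ⊗ₜ[K] b) * (x ⊗ₜ[K] a)) := by
    rintro x y a b (⟨h1, h2⟩ | ⟨h1, h2⟩)
    · simp only [Algebra.TensorProduct.tmul_mul_tmul, h1, h2, TensorProduct.neg_tmul]
    · simp only [Algebra.TensorProduct.tmul_mul_tmul, h1, h2, TensorProduct.tmul_neg]
  rcases e1 i with rfl | rfl | ⟨i, rfl⟩ <;> rcases e1 j with rfl | rfl | ⟨j, rfl⟩ <;>
    first
    | exact absurd rfl h
    | skip
  all_goals simp only [tgen0, tgen1, tgen2]; apply key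
  all_goals first
    | (left; refine ⟨?_, by simp⟩; ext <;> simp)
    | (right; refine ⟨rfl, gen_anti _ (fun hh => h (by rw [hh]))⟩)

/-- forward map -/
def tailFwd : CA w →ₐ[K] QuaternionAlgebra K (w 0) 0 (w 1) ⊗[K] CA (tl w) :=
  liftD w h2 (tgen w) (tgen_sq w hw) (tgen_anti w)

/-- the quaternion basis -/
def qbasis : QuaternionAlgebra.Basis (CA w) (w 0) 0 (w 1) where
  i := gen w 0
  j := gen w 1
  k := gen w 0 * gen w 1
  i_mul_i := by simp [gen_sq, Algebra.algebraMap_eq_smul_one]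
  j_mul_j := by simp [gen_sq, Algebra.algebraMap_eq_smul_one]
  i_mul_j := rfl
  j_mul_i := by rw [gen_anti w (i := 1) (j := 0) (by simp)]; simp

/-- generator of complementary factor -/
def cgen (i : Fin n) : CA w := (-(w 0 * w 1)⁻¹) • (gen w 0 * gen w 1 * gen w i.succ.succ)

lemma cgen_comm0 (i) : Commute (gen w 0) (cgen w i) := by
  unfold cgen
  apply Commute.smul_right
  have a := gen_anti w (i := 1) (j := 0) (by simp)
  have b := gen_anti w (i := i.succ.succ) (j := 0) (by simp [Fin.ext_iff])
  rw [commute_iff_eq]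
  rw [mul_assoc _ _ (gen w 0), b, mul_neg, ← mul_assoc _ (gen w 0), mul_assoc (gen w 0) (gen w 1) (gen w 0), a]
  noncomm_ring

lemma cgen_comm1 (i) : Commute (gen w 1) (cgen w i) := by
  unfold cgen
  apply Commute.smul_right
  have a := gen_anti w (i := 1) (j := 0) (by simp)
  have b := gen_anti w (i := i.succ.succ) (j := 1) (by simp [Fin.ext_iff])
  rw [commute_iff_eq]
  rw [mul_assoc _ _ (gen w 1), b, mul_neg, ← mul_assoc _ (gen w 1), ← mul_assoc, ← mul_assoc, a]
  noncomm_ring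

lemma anti3 {R : Type*} [Ring R] {a b c d : R} (hab : b * a = - (a * b)) (hca : c * a = -(a * c))
    (hcb : c * b = -(b * c)) :
    (a * b * c) * (a * b * d) = - ((a * a) * (b * b) * (c * d)) := by
  calc (a * b * c) * (a * b * d) = a * b * (c * a) * b * d := by noncomm_ring
    _ = - (a * (b * a) * c * b * d) := by rw [hca]; noncomm_ring
    _ = a * a * b * (c * b) * d := by rw [hab]; noncomm_ring
    _ = _ := by rw [hcb]; noncomm_ring

lemma cgen_mul (i j) : cgen w i * cgen w j = ((-(w 0 * w 1)⁻¹) * (-(w 0 * w 1)⁻¹)) •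
    (- (algebraMap K _ (w 0) * algebraMap K _ (w 1) * (gen w i.succ.succ * gen w j.succ.succ))) := by
  unfold cgen
  rw [smul_mul_smul_comm, anti3, gen_sq, gen_sq] <;> apply gen_anti <;> simp [Fin.ext_iff]

lemma cgen_sq (hw : ∀ i, w i ≠ 0) (i) : cgen w i * cgen w i = algebraMap K _ (tl w i) := by
  rw [cgen_mul, gen_sq, ← map_mul, ← map_mul, ← map_neg,
    Algebra.algebraMap_eq_smul_one, Algebra.algebraMap_eq_smul_one, smul_smul]
  congr 1
  have h0 := hw 0
  have h1 := hw 1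
  simp [tl]
  field_simp

lemma cgen_anti (i j) (h : i ≠ j) : cgen w i * cgen w j = - (cgen w j * cgen w i) := by
  rw [cgen_mul, cgen_mul, gen_anti w (i := i.succ.succ) (j := j.succ.succ) (by simpa using h)]
  simp

/-- backward map -/
def tailBwd : QuaternionAlgebra K (w 0) 0 (w 1) ⊗[K] CA (tl w) →ₐ[K] CA w :=
  Algebra.TensorProduct.lift (qbasis w).liftHom
    (liftD (tl w) h2 (cgen w) (cgen_sq w hw) (cgen_anti w)) (by
      intro x y
      have hx : ∀ y, Commute (gen w 0) y → Commute (gen w 1) y →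
          Commute ((qbasis w).liftHom x) y := by
        intro y h0 h1
        simp only [QuaternionAlgebra.Basis.liftHom_apply, QuaternionAlgebra.Basis.lift]
        refine Commute.add_left (Commute.add_left (Commute.add_left ?_ ?_) ?_) ?_
        · exact Algebra.commutes _ _
        · exact h0.smul_left _
        · exact h1.smul_left _
        · exact (h0.mul_left h1).smul_left _
      apply hx
      · induction y using CliffordAlgebra.induction with
        | algebraMap r => rw [AlgHom.commutes]; exact Algebra.commute_algebraMap_right _ _
        | ι v =>
          rw [ι_eq]; simp only [map_sum, map_smul, liftD_gen]
          exact Commute.sum_right _ _ _ fun i _ => (cgen_comm0 w i).smul_right _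
        | mul a b ha hb => rw [map_mul]; exact ha.mul_right hb
        | add a b ha hb => rw [map_add]; exact ha.add_right hb
      · induction y using CliffordAlgebra.induction with
        | algebraMap r => rw [AlgHom.commutes]; exact Algebra.commute_algebraMap_right _ _
        | ι v =>
          rw [ι_eq]; simp only [map_sum, map_smul, liftD_gen]
          exact Commute.sum_right _ _ _ fun i _ => (cgen_comm1 w i).smul_right _
        | mul a b ha hb => rw [map_mul]; exact ha.mul_right hb
        | add a b ha hb => rw [map_add]; exact ha.add_right hb)

/-- The tail decomposition. -/
def tailEquiv : CA w ≃ₐ[K] QuaternionAlgebra K (w 0) 0 (w 1) ⊗[K] CA (tl w) :=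
  AlgEquiv.ofAlgHom (tailFwd h2 w hw) (tailBwd h2 w hw)
    (by
      have h0 := hw 0
      have h1 := hw 1
      apply Algebra.TensorProduct.ext
      · apply QuaternionAlgebra.hom_ext
        · simp [tailFwd, tailBwd, qbasis, QuaternionAlgebra.Basis.lift]
          rfl
        · simp [tailFwd, tailBwd, qbasis, QuaternionAlgebra.Basis.lift]
          rfl
      · apply hom_ext'
        intro i
        simp only [tailFwd, tailBwd, cgen, AlgHom.comp_apply, AlgHom.restrictScalars_apply,
          Algebra.TensorProduct.includeRight_apply, Algebra.TensorProduct.lift_tmul, map_one,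
          one_mul, liftD_gen, map_smul, map_mul, tgen0, tgen1, tgen2,
          Algebra.TensorProduct.tmul_mul_tmul, AlgHom.id_apply]
        rw [TensorProduct.smul_tmul']
        congr 1
        ext <;> simp
        field_simp)
    (by
      have h0 := hw 0
      have h1 := hw 1
      apply hom_ext'
      intro i
      refine Fin.cases ?_ (fun i => Fin.cases ?_ (fun i => ?_) i) i
      · simp [tailFwd, tailBwd, tgen, qbasis, QuaternionAlgebra.Basis.lift]
      · simp [tailFwd, tailBwd, tgen, qbasis, QuaternionAlgebra.Basis.lift]
      · simp [tailFwd, tailBwd, tgen, qbasis, QuaternionAlgebra.Basis.lift, cgen]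
        have a := gen_anti w (i := 1) (j := 0) (by simp)
        have : gen w 0 * gen w 1 * (gen w 0 * gen w 1 * gen w i.succ.succ) =
          - ((gen w 0 * gen w 0) * (gen w 1 * gen w 1) * gen w i.succ.succ) := by
          calc _ = gen w 0 * (gen w 1 * gen w 0) * gen w 1 * gen w i.succ.succ := by noncomm_ring
            _ = _ := by rw [a]; noncomm_ring
        rw [this, gen_sq, gen_sq, ← map_mul, ← Algebra.smul_def, smul_neg, neg_neg, smul_smul,
          ← mul_inv_rev, inv_mul_cancel₀ (mul_ne_zero h0 h1), one_smul])

end tail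
end

/-! ### Part 2 -/

section quatTensor
variable {K : Type*} [Field K] (a b : K) (B : Type*) [Ring B] [Algebra K B]

/-- unit i -/
def qI : QuaternionAlgebra K a 0 b ⊗[K] B := (⟨0, 1, 0, 0⟩ : QuaternionAlgebra K a 0 b) ⊗ₜ 1
/-- unit j -/
def qJ : QuaternionAlgebra K a 0 b ⊗[K] B := (⟨0, 0, 1, 0⟩ : QuaternionAlgebra K a 0 b) ⊗ₜ 1
/-- unit k -/
def qK : QuaternionAlgebra K a 0 b ⊗[K] B := (⟨0, 0, 0, 1⟩ : QuaternionAlgebra K a 0 b) ⊗ₜ 1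

variable {B}
/-- averaging -/
def avg (x : QuaternionAlgebra K a 0 b ⊗[K] B) : QuaternionAlgebra K a 0 b ⊗[K] B :=
  x + a⁻¹ • (qI a b B * x * qI a b B) + b⁻¹ • (qJ a b B * x * qJ a b B) +
    (-(a * b))⁻¹ • (qK a b B * x * qK a b B)

lemma avg_add (x y : QuaternionAlgebra K a 0 b ⊗[K] B) :
    avg a b (x + y) = avg a b x + avg a b y := by
  simp only [avg, mul_add, add_mul, smul_add]
  abel

variable {a b}

lemma avg_tmul (ha : a ≠ 0) (hb : b ≠ 0) (h : QuaternionAlgebra K a 0 b) (c : B) :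
    avg a b (h ⊗ₜ c) = (1 : QuaternionAlgebra K a 0 b) ⊗ₜ ((4 * h.re) • c) := by
  simp only [avg, qI, qJ, qK, Algebra.TensorProduct.tmul_mul_tmul, one_mul, mul_one,
    TensorProduct.smul_tmul']
  rw [← TensorProduct.add_tmul, ← TensorProduct.add_tmul, ← TensorProduct.add_tmul,
    ← TensorProduct.smul_tmul]
  congr 1
  ext <;> simp <;> field_simp <;> ring

lemma decomp (x : QuaternionAlgebra K a 0 b ⊗[K] B) : ∃ b0 b1 b2 b3 : B,
    x = (1 : QuaternionAlgebra K a 0 b) ⊗ₜ b0 + (⟨0, 1, 0, 0⟩ : QuaternionAlgebra K a 0 b) ⊗ₜ b1 +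
      (⟨0, 0, 1, 0⟩ : QuaternionAlgebra K a 0 b) ⊗ₜ b2 +
      (⟨0, 0, 0, 1⟩ : QuaternionAlgebra K a 0 b) ⊗ₜ b3 := by
  induction x using TensorProduct.induction_on with
  | zero => exact ⟨0, 0, 0, 0, by simp⟩
  | tmul h c =>
    refine ⟨h.re • c, h.imI • c, h.imJ • c, h.imK • c, ?_⟩
    simp only [← TensorProduct.smul_tmul, ← TensorProduct.add_tmul]
    congr 1
    ext <;> simp
  | add x y hx hy =>
    obtain ⟨b0, b1, b2, b3, rfl⟩ := hx
    obtain ⟨c0, c1, c2, c3, rfl⟩ := hy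
    refine ⟨b0 + c0, b1 + c1, b2 + c2, b3 + c3, ?_⟩
    simp only [TensorProduct.tmul_add]
    abel

lemma tensor_central (h2 : (2 : K) ≠ 0) (ha : a ≠ 0) (hb : b ≠ 0) [hB : Algebra.IsCentral K B]
    [Nontrivial B] : Algebra.IsCentral K (QuaternionAlgebra K a 0 b ⊗[K] B) where
  out := by
    intro x hx
    rw [Subalgebra.mem_center_iff] at hx
    have h4 : (4 : K) ≠ 0 := by
      rw [show (4 : K) = 2 * 2 by norm_num]; exact mul_ne_zero h2 h2
    have e1 : avg a b x = (4 : K) • x := by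
      have hc : ∀ (y : QuaternionAlgebra K a 0 b ⊗[K] B) (c : K), c ≠ 0 → y * y = c • 1 →
          c⁻¹ • (y * x * y) = x := by
        intro y c hc hy
        rw [mul_assoc, ← hx, ← mul_assoc, hy, smul_mul_assoc, one_mul, smul_smul,
          inv_mul_cancel₀ hc, one_smul]
      unfold avg
      rw [hc (qI a b B) a ha, hc (qJ a b B) b hb,
        hc (qK a b B) (-(a * b)) (neg_ne_zero.2 (mul_ne_zero ha hb))]
      · rw [show (4 : K) = 1 + 1 + 1 + 1 by norm_num]; simp only [add_smul, one_smul]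
      all_goals
        simp only [qI, qJ, qK, Algebra.TensorProduct.tmul_mul_tmul, mul_one,
          Algebra.TensorProduct.one_def, TensorProduct.smul_tmul']
        congr 1
        ext <;> simp
    obtain ⟨b0, b1, b2, b3, h⟩ := decomp x
    have e2 : avg a b x = (1 : QuaternionAlgebra K a 0 b) ⊗ₜ ((4 : K) • b0) := by
      rw [h]; simp only [avg_add, avg_tmul ha hb]; simp
    rw [e1, TensorProduct.tmul_smul] at e2
    have e3 : x = (1 : QuaternionAlgebra K a 0 b) ⊗ₜ b0 := smul_right_injective _ h4 e2
    have hb0 : b0 ∈ Subalgebra.center K B := by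
      rw [Subalgebra.mem_center_iff]
      intro c
      have := hx ((1 : QuaternionAlgebra K a 0 b) ⊗ₜ c)
      rw [e3] at this
      simp only [Algebra.TensorProduct.tmul_mul_tmul, one_mul] at this
      exact Algebra.TensorProduct.includeRight_injective
        (A := QuaternionAlgebra K a 0 b) (FaithfulSMul.algebraMap_injective K _) this
    obtain ⟨r, hr⟩ := hB.out hb0
    refine ⟨r, ?_⟩
    rw [e3, ← hr]
    simp [Algebra.ofId, Algebra.algebraMap_eq_smul_one, Algebra.TensorProduct.one_def]

lemma tensor_simple (h2 : (2 : K) ≠ 0) (ha : a ≠ 0) (hb : b ≠ 0) [hB : IsSimpleRing B] :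
    IsSimpleRing (QuaternionAlgebra K a 0 b ⊗[K] B) := by
  have h4 : (4 : K) ≠ 0 := by
    rw [show (4 : K) = 2 * 2 by norm_num]; exact mul_ne_zero h2 h2
  apply IsSimpleRing.of_eq_bot_or_eq_top
  intro I
  by_cases hI : I = ⊥
  · exact Or.inl hI
  right
  have smul_mem : ∀ (c : K) x, x ∈ I → c • x ∈ I := by
    intro c x hx
    have : c • x = (c • 1) * x := by rw [smul_mul_assoc, one_mul]
    rw [this]; exact I.mul_mem_left _ _ hx
  have avg_mem : ∀ x, x ∈ I → avg a b x ∈ I := by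
    intro x hx
    refine I.add_mem (I.add_mem (I.add_mem hx ?_) ?_) ?_ <;>
    exact smul_mem _ _ (I.mul_mem_right _ _ (I.mul_mem_left _ _ hx))
  have : ∃ c : B, c ≠ 0 ∧ (1 : QuaternionAlgebra K a 0 b) ⊗ₜ[K] c ∈ I := by
    by_contra hcon
    push Not at hcon
    apply hI
    rw [eq_bot_iff]
    intro x hx
    obtain ⟨b0, b1, b2, b3, h⟩ := decomp x
    have z : ∀ (r : K) (c : B), r ≠ 0 → (1 : QuaternionAlgebra K a 0 b) ⊗ₜ[K] (r • c) ∈ I →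
        c = 0 := by
      intro r c hr hc
      by_contra hc0
      refine hcon c hc0 ?_
      have := smul_mem r⁻¹ _ hc
      rwa [TensorProduct.tmul_smul, smul_smul, inv_mul_cancel₀ hr, one_smul] at this
    have z0 : b0 = 0 := by
      refine z 4 _ h4 ?_
      have := avg_mem x hx
      rw [h] at this; simp only [avg_add, avg_tmul ha hb] at this; simpa using this
    have z1 : b1 = 0 := by
      refine z (4 * a) _ (mul_ne_zero h4 ha) ?_
      have := avg_mem _ (I.mul_mem_left (qI a b B) x hx)
      rw [h] at this
      simp only [qI, mul_add, Algebra.TensorProduct.tmul_mul_tmul, avg_add, avg_tmul ha hb] at this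
      simpa using this
    have z2 : b2 = 0 := by
      refine z (4 * b) _ (mul_ne_zero h4 hb) ?_
      have := avg_mem _ (I.mul_mem_left (qJ a b B) x hx)
      rw [h] at this
      simp only [qJ, mul_add, Algebra.TensorProduct.tmul_mul_tmul, avg_add, avg_tmul ha hb] at this
      simpa using this
    have z3 : b3 = 0 := by
      refine z (4 * -(a * b)) _ (mul_ne_zero h4 (neg_ne_zero.2 (mul_ne_zero ha hb))) ?_
      have := avg_mem _ (I.mul_mem_left (qK a b B) x hx)
      rw [h] at this
      simp only [qK, mul_add, Algebra.TensorProduct.tmul_mul_tmul, avg_add, avg_tmul ha hb] at this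
      simpa using this
    rw [h, z0, z1, z2, z3]
    simp [TwoSidedIdeal.zero_mem]
  obtain ⟨c, hc, hcI⟩ := this
  have h1 : (1 : B) ∈ I.comap (Algebra.TensorProduct.includeRight :
      B →ₐ[K] QuaternionAlgebra K a 0 b ⊗[K] B) :=
    IsSimpleRing.one_mem_of_ne_zero_mem _ hc (by rw [TwoSidedIdeal.mem_comap]; exact hcI)
  rw [TwoSidedIdeal.mem_comap, map_one] at h1
  rw [eq_top_iff]
  intro x _
  simpa using I.mul_mem_left x 1 h1

end quatTensor

section CSA
variable {K : Type*} [Field K]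

/-- the zero-dimensional Clifford algebra -/
def ca0 (w : Fin 0 → K) : CA w ≃ₐ[K] K :=
  AlgEquiv.ofAlgHom (CliffordAlgebra.lift _ ⟨0, fun v => by
      simp [QuadraticMap.weightedSumSquares_apply]⟩) (Algebra.ofId K _)
    (by ext) (by apply hom_ext'; intro i; exact i.elim0)

lemma tl_ne {n : ℕ} {w : Fin (n + 2) → K} (hw : ∀ i, w i ≠ 0) (i) : tl w i ≠ 0 := by
  simp [tl, hw]

lemma csa (h2 : (2 : K) ≠ 0) : ∀ (m : ℕ) (w : Fin (2 * m) → K), (∀ i, w i ≠ 0) →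
    IsSimpleRing (CA w) ∧ Algebra.IsCentral K (CA w) ∧ Module.Finite K (CA w) ∧
      Module.finrank K (CA w) = 4 ^ m
  | 0, w, hw => by
    have e := ca0 w
    refine ⟨IsSimpleRing.of_ringEquiv e.symm.toRingEquiv inferInstance,
      Algebra.IsCentral.of_algEquiv K _ _ e.symm, Module.Finite.equiv e.symm.toLinearEquiv, ?_⟩
    rw [e.toLinearEquiv.finrank_eq]; simp
  | m + 1, w, hw => by
    have e := tailEquiv (n := 2 * m) h2 w hw
    obtain ⟨i1, i2, i3, i4⟩ := csa h2 m (tl (n := 2 * m) w) (tl_ne hw)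
    have i5 := tensor_simple (B := CA (tl (n := 2 * m) w)) h2 (hw 0) (hw 1)
    have i6 := tensor_central (B := CA (tl (n := 2 * m) w)) h2 (hw 0) (hw 1)
    refine ⟨IsSimpleRing.of_ringEquiv e.symm.toRingEquiv i5,
      Algebra.IsCentral.of_algEquiv K _ _ e.symm, Module.Finite.equiv e.symm.toLinearEquiv, ?_⟩
    rw [e.toLinearEquiv.finrank_eq, Module.finrank_tensorProduct, i4,
      QuaternionAlgebra.finrank_eq_four, pow_succ, mul_comm]

/-- bijectivity from simplicity -/
lemma equiv_of_simple {A B : Type*} [Ring A] [Algebra K A] [Ring B] [Algebra K B] [IsSimpleRing A]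
    [Nontrivial B] [Module.Finite K A] [Module.Finite K B]
    (h : Module.finrank K A = Module.finrank K B) (f : A →ₐ[K] B) : Nonempty (A ≃ₐ[K] B) := by
  have hi : Function.Injective f := RingHom.injective (f : A →+* B)
  have hs : Function.Surjective f :=
    (LinearMap.injective_iff_surjective_of_finrank_eq_finrank h (f := f.toLinearMap)).1 hi
  exact ⟨AlgEquiv.ofBijective f ⟨hi, hs⟩⟩

lemma quat_simple (h2 : (2 : K) ≠ 0) {a b : K} (ha : a ≠ 0) (hb : b ≠ 0) :
    IsSimpleRing (QuaternionAlgebra K a 0 b) :=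
  IsSimpleRing.of_ringEquiv (Algebra.TensorProduct.rid K K _).toRingEquiv
    (tensor_simple (B := K) h2 ha hb)

lemma quat_split (h2 : (2 : K) ≠ 0) {a b : K} (ha : a ≠ 0) (hb : b ≠ 0) (hs : IsSquare a) :
    Nonempty (QuaternionAlgebra K a 0 b ≃ₐ[K] Matrix (Fin 2) (Fin 2) K) := by
  obtain ⟨s, rfl⟩ := hs
  have := quat_simple h2 ha hb
  let B : QuaternionAlgebra.Basis (Matrix (Fin 2) (Fin 2) K) (s * s) 0 b :=
    { i := !![s, 0; 0, -s]
      j := !![0, b; 1, 0]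
      k := !![s, 0; 0, -s] * !![0, b; 1, 0]
      i_mul_i := by ext i j; fin_cases i <;> fin_cases j <;> simp
      j_mul_j := by ext i j; fin_cases i <;> fin_cases j <;> simp
      i_mul_j := rfl
      j_mul_i := by ext i j; fin_cases i <;> fin_cases j <;> simp [mul_comm] }
  refine equiv_of_simple ?_ B.liftHom
  rw [QuaternionAlgebra.finrank_eq_four, Module.finrank_matrix]; simp

end CSA

/-! ### Part 3 -/

section vol
variable {K : Type u} [Field K]

lemma commute_hom {n : ℕ} {w : Fin n → K} {A : Type*} [Ring A] [Algebra K A] (f : CA w →ₐ[K] A)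
    (y : A) (h : ∀ i, Commute y (f (gen w i))) (x : CA w) : Commute y (f x) := by
  induction x using CliffordAlgebra.induction with
  | algebraMap r => rw [AlgHom.commutes]; exact Algebra.commute_algebraMap_right _ _
  | ι v =>
    rw [ι_eq]; simp only [map_sum, map_smul]
    exact Commute.sum_right _ _ _ fun i _ => (h i).smul_right _
  | mul a b ha hb => rw [map_mul]; exact ha.mul_right hb
  | add a b ha hb => rw [map_add]; exact ha.add_right hb

lemma tailEquiv_gen {n : ℕ} (h2 : (2 : K) ≠ 0) (w : Fin (n + 2) → K) (hw : ∀ i, w i ≠ 0) (i) :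
    tailEquiv h2 w hw (gen w i) = tgen w i := by
  simp [tailEquiv, tailFwd]

lemma tailEquiv_symm_tgen {n : ℕ} (h2 : (2 : K) ≠ 0) (w : Fin (n + 2) → K) (hw : ∀ i, w i ≠ 0)
    (i) : (tailEquiv h2 w hw).symm (tgen w i) = gen w i := by
  rw [AlgEquiv.symm_apply_eq, tailEquiv_gen]

lemma tailEquiv_symm_right {n : ℕ} (h2 : (2 : K) ≠ 0) (w : Fin (n + 2) → K) (hw : ∀ i, w i ≠ 0)
    (i) : (tailEquiv h2 w hw).symm (1 ⊗ₜ gen (tl w) i) = cgen w i := by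
  simp [tailEquiv, tailBwd, QuaternionAlgebra.Basis.lift]

lemma vol (h2 : (2 : K) ≠ 0) : ∀ (m : ℕ) (w : Fin (2 * m) → K), (∀ i, w i ≠ 0) →
    ∃ (z : CA w) (s : K), s ≠ 0 ∧ z * z = algebraMap K _ (s ^ 2 * ((-1) ^ m * ∏ i, w i)) ∧
      (∀ i, z * gen w i = - (gen w i * z)) ∧
      ∀ (A : Type u) [Ring A] [Algebra K A] (f : CA w →ₐ[K] A) (y : A),
        (∀ i, y * f (gen w i) = - (f (gen w i) * y)) → Commute y (f z)
  | 0, w, hw => by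
    refine ⟨1, 1, one_ne_zero, by simp, fun i => i.elim0, fun A _ _ f y _ => by simp⟩
  | m + 1, w, hw => by
    let e := tailEquiv (n := 2 * m) h2 w hw
    obtain ⟨z, s, hs, hz, ha, hev⟩ := vol h2 m (tl (n := 2 * m) w) (tl_ne hw)
    have h0 := hw 0
    have h1 := hw 1
    refine ⟨e.symm ((⟨0, 0, 0, 1⟩ : QuaternionAlgebra K (w 0) 0 (w 1)) ⊗ₜ z),
      s * ((w 0 * w 1)⁻¹) ^ m, ?_, ?_, ?_, ?_⟩
    · exact mul_ne_zero hs (pow_ne_zero _ (inv_ne_zero (mul_ne_zero h0 h1)))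
    · rw [← map_mul, Algebra.TensorProduct.tmul_mul_tmul, hz]
      apply e.injective
      rw [e.apply_symm_apply, e.commutes]
      rw [Algebra.algebraMap_eq_smul_one, Algebra.algebraMap_eq_smul_one,
        Algebra.TensorProduct.one_def, ← TensorProduct.smul_tmul, TensorProduct.smul_tmul']
      congr 1
      have e1 : ∏ i, tl (n := 2 * m) w i = ((w 0 * w 1)⁻¹ ^ m) ^ 2 *
          ∏ i : Fin (2 * m), w i.succ.succ := by
        simp only [tl]
        rw [Finset.prod_mul_distrib]
        congr 1
        rw [Finset.prod_const, Finset.card_univ, Fintype.card_fin, pow_mul, neg_sq, ← pow_mul,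
          ← pow_mul, mul_comm m 2]
      have e2 : ∏ i, w i = w 0 * (w 1 * ∏ i : Fin (2 * m), w i.succ.succ) := by
        have := Fin.prod_univ_succ (n := 2 * m + 1) w
        rw [Fin.prod_univ_succ (n := 2 * m)] at this
        exact this
      rw [e1, e2]
      ext <;> simp
      ring
    · intro i
      have hi : gen w i = e.symm (tgen (n := 2 * m) w i) :=
        (tailEquiv_symm_tgen (n := 2 * m) h2 w hw i).symm
      rw [hi, ← map_mul, ← map_mul, ← map_neg]
      congr 1
      have key : ∀ (x y : QuaternionAlgebra K (w 0) 0 (w 1)) (a b : CA (tl (n := 2 * m) w)),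
          (x * y = - (y * x) ∧ a * b = b * a ∨ x * y = y * x ∧ a * b = - (b * a)) →
          (x ⊗ₜ[K] a) * (y ⊗ₜ[K] b) = - ((y ⊗ₜ[K] b) * (x ⊗ₜ[K] a)) := by
        rintro x y a b (⟨h1, h2⟩ | ⟨h1, h2⟩)
        · simp only [Algebra.TensorProduct.tmul_mul_tmul, h1, h2, TensorProduct.neg_tmul]
        · simp only [Algebra.TensorProduct.tmul_mul_tmul, h1, h2, TensorProduct.tmul_neg]
      refine Fin.cases ?_ (fun i => Fin.cases ?_ (fun i => ?_) i) i
      · exact key _ _ _ _ (Or.inl ⟨by ext <;> simp, by simp⟩)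
      · exact key _ _ _ _ (Or.inl ⟨by ext <;> simp, by simp⟩)
      · exact key _ _ _ _ (Or.inr ⟨rfl, ha _⟩)
    · intro A _ _ f y hy
      have hk : (⟨0, 0, 0, 1⟩ : QuaternionAlgebra K (w 0) 0 (w 1)) ⊗ₜ[K] z =
          (tgen (n := 2 * m) w 0 * tgen (n := 2 * m) w 1) * (1 ⊗ₜ z) := by
        rw [tgen0, tgen1, Algebra.TensorProduct.tmul_mul_tmul,
          Algebra.TensorProduct.tmul_mul_tmul]
        simp
      have hi : ∀ i, e.symm (tgen (n := 2 * m) w i) = gen w i :=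
        tailEquiv_symm_tgen (n := 2 * m) h2 w hw
      have hc : ∀ a b : A, y * a = -(a * y) → y * b = - (b * y) → Commute y (a * b) := by
        intro a b h1 h2
        rw [commute_iff_eq, ← mul_assoc, h1, neg_mul, mul_assoc, h2, mul_neg, neg_neg, mul_assoc]
      rw [hk, map_mul, map_mul, map_mul, map_mul, hi, hi]
      refine (hc _ _ (hy _) (hy _)).mul_right ?_
      refine hev A ((f.comp e.symm.toAlgHom).comp Algebra.TensorProduct.includeRight) y ?_
      intro i
      have hg : ((f.comp e.symm.toAlgHom).comp Algebra.TensorProduct.includeRight)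
          (gen (tl (n := 2 * m) w) i) = f (cgen (n := 2 * m) w i) := by
        show f (e.symm (1 ⊗ₜ gen (tl (n := 2 * m) w) i)) = _
        exact congrArg f (tailEquiv_symm_right (n := 2 * m) h2 w hw i)
      rw [hg, cgen, map_smul, map_mul, map_mul, mul_smul_comm, smul_mul_assoc, ← mul_assoc,
        (hc _ _ (hy _) (hy _)).eq, mul_assoc, hy]
      simp [mul_assoc]

/-- odd-dimensional decomposition -/
lemma odd_equiv (h2 : (2 : K) ≠ 0) (m : ℕ) (w : Fin (2 * m) → K) (c : K) (hw : ∀ i, w i ≠ 0) :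
    ∃ d t : K, t ≠ 0 ∧ d = t ^ 2 * ((-1) ^ m * ((∏ i, w i) * c)) ∧
      Nonempty (CA (Fin.snoc w c : Fin (2 * m + 1) → K) ≃ₐ[K]
        CA w ⊗[K] QuadraticAlgebra K d 0) := by
  obtain ⟨z, s, hs, hz, ha, hev⟩ := vol h2 m w hw
  set p := s ^ 2 * ((-1) ^ m * ∏ i, w i) with hp
  have hpw : ∏ i, w i ≠ 0 := Finset.prod_ne_zero_iff.2 fun i _ => hw i
  have hm1 : ((-1 : K)) ^ m ≠ 0 := pow_ne_zero _ (by simp)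
  have hp0 : p ≠ 0 := mul_ne_zero (pow_ne_zero _ hs) (mul_ne_zero hm1 hpw)
  let W : Fin (2 * m + 1) → K := Fin.snoc w c
  have hWc : ∀ i : Fin (2 * m), W i.castSucc = w i := fun i => by simp [W]
  have hWl : W (Fin.last _) = c := by simp [W]
  let d := p⁻¹ * c
  refine ⟨d, s * p⁻¹, mul_ne_zero hs (inv_ne_zero hp0), ?_, ?_⟩
  · have : p⁻¹ * c = p * p⁻¹ ^ 2 * c := by field_simp
    show p⁻¹ * c = _
    rw [this]
    conv_lhs => rw [hp]
    ring
  let S := QuadraticAlgebra K d 0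
  have hω : (QuadraticAlgebra.omega : S) * QuadraticAlgebra.omega = algebraMap K S d := by
    rw [QuadraticAlgebra.omega_mul_omega_eq_mk]; rfl
  -- forward
  let eF : Fin (2 * m + 1) → CA w ⊗[K] S :=
    Fin.snoc (fun i => gen w i ⊗ₜ 1) (z ⊗ₜ QuadraticAlgebra.omega)
  have eFc : ∀ i : Fin (2 * m), eF i.castSucc = gen w i ⊗ₜ 1 := fun i => by simp [eF]
  have eFl : eF (Fin.last _) = z ⊗ₜ QuadraticAlgebra.omega := by simp [eF]
  let F : CA W →ₐ[K] CA w ⊗[K] S := liftD W h2 eF (by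
    intro i
    refine Fin.lastCases ?_ (fun i => ?_) i
    · rw [eFl, hWl, Algebra.TensorProduct.tmul_mul_tmul, hz, hω]
      rw [Algebra.algebraMap_eq_smul_one, Algebra.algebraMap_eq_smul_one,
        Algebra.algebraMap_eq_smul_one, TensorProduct.smul_tmul_smul,
        ← Algebra.TensorProduct.one_def]
      congr 1
      simp only [d]; field_simp
    · rw [eFc, hWc, Algebra.TensorProduct.tmul_mul_tmul, gen_sq]; simp) (by
    intro i j
    refine Fin.lastCases ?_ (fun i => ?_) i <;> refine Fin.lastCases ?_ (fun j => ?_) j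
    · intro h; exact absurd rfl h
    · intro _; rw [eFc, eFl]; simp [ha, TensorProduct.neg_tmul]
    · intro _; rw [eFc, eFl]; simp [ha, TensorProduct.neg_tmul]
    · intro h
      rw [eFc, eFc]
      simp only [Algebra.TensorProduct.tmul_mul_tmul]
      rw [gen_anti w (fun hh => h (by rw [hh])), TensorProduct.neg_tmul])
  let G0 : CA w →ₐ[K] CA W := liftD w h2 (fun i => gen W i.castSucc)
    (fun i => by rw [gen_sq, hWc]) (fun i j h => gen_anti W (by simpa using h))
  have G0g : ∀ i, G0 (gen w i) = gen W i.castSucc := fun i => by simp [G0]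
  have zW : G0 z * G0 z = p • 1 := by
    rw [← map_mul, hz, AlgHom.commutes, Algebra.algebraMap_eq_smul_one]
  let ℓ := gen W (Fin.last _)
  have hℓz : Commute ℓ (G0 z) := hev _ G0 ℓ fun i => by
    rw [G0g]; exact gen_anti W (Fin.castSucc_lt_last i).ne'
  have hℓℓ : ℓ * ℓ = c • 1 := by
    rw [gen_sq, hWl, Algebra.algebraMap_eq_smul_one]
  let δ : CA W := p⁻¹ • (G0 z * ℓ)
  have hδ : δ * δ = d • 1 + (0 : K) • δ := by
    simp only [δ]
    rw [smul_mul_smul_comm, mul_assoc, ← mul_assoc ℓ, hℓz.eq, mul_assoc (G0 z) ℓ ℓ, ← mul_assoc,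
      zW, hℓℓ, zero_smul, add_zero, smul_mul_smul_comm, smul_smul, mul_one]
    congr 1
    simp only [d]; field_simp
  let G1 : S →ₐ[K] CA W := QuadraticAlgebra.lift ⟨δ, hδ⟩
  have G1ω : G1 QuadraticAlgebra.omega = δ := by simp [G1, QuadraticAlgebra.lift]
  have hcomm : ∀ x : CA w, Commute δ (G0 x) := by
    refine commute_hom G0 δ fun i => ?_
    rw [G0g, commute_iff_eq]
    simp only [δ]
    rw [smul_mul_assoc, mul_smul_comm, mul_assoc, gen_anti W (Fin.castSucc_lt_last i).ne',
      mul_neg, ← mul_assoc, ← G0g, ← map_mul, ha, map_neg, map_mul]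
    simp [mul_assoc, ℓ]
  let G : CA w ⊗[K] S →ₐ[K] CA W := Algebra.TensorProduct.lift G0 G1 (by
    intro x y
    have : G1 y = y.re • 1 + y.im • δ := rfl
    rw [this]
    exact ((Commute.one_right _).smul_right _).add_right ((hcomm x).symm.smul_right _))
  refine ⟨AlgEquiv.ofAlgHom F G ?_ ?_⟩
  · apply Algebra.TensorProduct.ext
    · apply hom_ext'
      intro i
      simp only [AlgHom.comp_apply, Algebra.TensorProduct.includeLeft_apply, G,
        Algebra.TensorProduct.lift_tmul, map_one, mul_one, G0g, F, liftD_gen, eFc, AlgHom.id_apply]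
    · apply QuadraticAlgebra.algHom_ext
      have FG0 : ∀ x, F (G0 x) = x ⊗ₜ 1 := by
        intro x
        have : F.comp G0 = Algebra.TensorProduct.includeLeft := by
          apply hom_ext'
          intro i
          simp only [AlgHom.comp_apply, Algebra.TensorProduct.includeLeft_apply,
            G0g, F, liftD_gen, eFc]
        exact DFunLike.congr_fun this x
      show F (G (1 ⊗ₜ QuadraticAlgebra.omega)) = 1 ⊗ₜ QuadraticAlgebra.omega
      simp only [G, Algebra.TensorProduct.lift_tmul, map_one, one_mul, G1ω, δ, map_smul, map_mul,
        FG0]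
      rw [show F ℓ = z ⊗ₜ QuadraticAlgebra.omega by simp only [F, ℓ, liftD_gen, eFl]]
      rw [Algebra.TensorProduct.tmul_mul_tmul, hz, one_mul, TensorProduct.smul_tmul',
        Algebra.algebraMap_eq_smul_one, smul_smul, inv_mul_cancel₀ hp0, one_smul]
  · apply hom_ext'
    intro i
    have Fl : F (gen W (Fin.last _)) = z ⊗ₜ QuadraticAlgebra.omega := by
      simp only [F, liftD_gen, eFl]
    have Fc : ∀ i : Fin (2 * m), F (gen W i.castSucc) = gen w i ⊗ₜ 1 := fun i => by
      simp only [F, liftD_gen, eFc]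
    have Gt : ∀ x y, G (x ⊗ₜ y) = G0 x * G1 y := fun x y => by
      simp only [G, Algebra.TensorProduct.lift_tmul]
    have goal : ∀ i, G (F (gen W i)) = gen W i := by
      intro i
      refine Fin.lastCases ?_ (fun i => ?_) i
      · rw [Fl, Gt, G1ω]
        simp only [δ]
        rw [mul_smul_comm, ← mul_assoc, zW, smul_mul_assoc, one_mul, smul_smul,
          inv_mul_cancel₀ hp0, one_smul]
      · rw [Fc, Gt, map_one, mul_one, G0g]
    exact goal i
end vol

/-! ### Part 4 -/

section bc
variable {K : Type u} [Field K] (L : Type u) [Field L] [Algebra K L]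

/-- base-changed weights -/
def bw {n : ℕ} (w : Fin n → K) : Fin n → L := fun i => algebraMap K L (w i)

lemma bw_ne {n : ℕ} {w : Fin n → K} (hw : ∀ i, w i ≠ 0) (i) : bw L w i ≠ 0 := by
  simpa [bw] using hw i

lemma two_ne (h2 : (2 : K) ≠ 0) : (2 : L) ≠ 0 := by
  have := (map_ne_zero (algebraMap K L)).2 h2
  rwa [map_ofNat] at this

lemma tl_bw {n : ℕ} (w : Fin (n + 2) → K) : tl (bw L w) = bw L (tl w) := by
  funext i; simp [tl, bw]

/-- the comparison map -/
def bcHom (h2 : (2 : K) ≠ 0) {n : ℕ} (w : Fin n → K) : CA w →ₐ[K] CA (bw L w) :=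
  liftD w h2 (gen (bw L w)) (fun i => by
    rw [gen_sq]; exact (IsScalarTower.algebraMap_apply K L (CA (bw L w)) (w i)).symm)
    (fun i j h => gen_anti _ h)

lemma bcHom_gen (h2 : (2 : K) ≠ 0) {n : ℕ} (w : Fin n → K) (i) :
    bcHom L h2 w (gen w i) = gen (bw L w) i := by simp [bcHom]

/-- base change of a diagonal Clifford algebra -/
def bcEquiv (h2 : (2 : K) ≠ 0) {n : ℕ} (w : Fin n → K) : L ⊗[K] CA w ≃ₐ[L] CA (bw L w) :=
  AlgEquiv.ofAlgHom
    (Algebra.TensorProduct.lift (Algebra.ofId L _) (bcHom L h2 w)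
      (fun x y => Algebra.commutes _ _))
    (liftD (bw L w) (two_ne L h2) (fun i => 1 ⊗ₜ gen w i)
      (fun i => by
        simp only [Algebra.TensorProduct.tmul_mul_tmul, gen_sq, bw, mul_one]
        rw [Algebra.algebraMap_eq_smul_one, TensorProduct.tmul_smul, TensorProduct.smul_tmul',
          Algebra.TensorProduct.algebraMap_apply, Algebra.algebraMap_eq_smul_one,
          algebraMap_smul])
      (fun i j h => by
        simp only [Algebra.TensorProduct.tmul_mul_tmul]
        rw [gen_anti w h, TensorProduct.tmul_neg]))
    (by
      apply hom_ext'
      intro i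
      simp [bcHom])
    (by
      apply Algebra.TensorProduct.ext
      · exact Subsingleton.elim _ _
      · apply hom_ext'
        intro i
        simp [bcHom])

/-- the quaternion algebra as a Clifford algebra -/
lemma quat_ca (h2 : (2 : K) ≠ 0) {a b : K} (ha : a ≠ 0) (hb : b ≠ 0) :
    Nonempty (QuaternionAlgebra K a 0 b ≃ₐ[K] CA ![a, b]) := by
  have hw : ∀ i, (![a, b] : Fin 2 → K) i ≠ 0 := by
    intro i; fin_cases i <;> simp [ha, hb]
  have e := tailEquiv (n := 0) h2 ![a, b] hw
  exact ⟨((e.trans (Algebra.TensorProduct.congr AlgEquiv.refl (ca0 _))).trans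
    (Algebra.TensorProduct.rid K K _)).symm⟩

lemma quat_bc (h2 : (2 : K) ≠ 0) {a b : K} (ha : a ≠ 0) (hb : b ≠ 0) :
    Nonempty (L ⊗[K] QuaternionAlgebra K a 0 b ≃ₐ[L]
      QuaternionAlgebra L (algebraMap K L a) 0 (algebraMap K L b)) := by
  obtain ⟨e1⟩ := quat_ca h2 ha hb
  obtain ⟨e2⟩ := quat_ca (K := L) (two_ne L h2) (a := algebraMap K L a) (b := algebraMap K L b)
    (by simpa using ha) (by simpa using hb)
  have e3 := bcEquiv L h2 ![a, b]
  have : bw L ![a, b] = ![algebraMap K L a, algebraMap K L b] := by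
    funext i; fin_cases i <;> rfl
  rw [this] at e3
  exact ⟨((Algebra.TensorProduct.congr AlgEquiv.refl e1).trans e3).trans e2.symm⟩

lemma qbc (h2 : (2 : K) ≠ 0) {n : ℕ} (w : Fin n → K) (q : QuadraticForm K (Fin n → K))
    (e : q.IsometryEquiv (QuadraticMap.weightedSumSquares K w)) :
    Nonempty (CliffordAlgebra (qfBaseChange L h2 q) ≃ₐ[L] CA (bw L w)) := by
  let _ : Invertible (2 : K) := invertibleOfNonzero h2
  have e1 : CliffordAlgebra (qfBaseChange L h2 q) ≃ₐ[L] L ⊗[K] CliffordAlgebra q :=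
    CliffordAlgebra.equivBaseChange L q
  exact ⟨(e1.trans (Algebra.TensorProduct.congr AlgEquiv.refl
    (CliffordAlgebra.equivOfIsometry e))).trans (bcEquiv L h2 w)⟩
end bc

/-! ### Part 5 -/

section evenpart
variable {K : Type u} [Field K]

/-- map on even Clifford algebras induced by a similitude -/
def simHom {M1 M2 : Type*} [AddCommGroup M1] [Module K M1] [AddCommGroup M2] [Module K M2]
    (Q1 : QuadraticForm K M1) (Q2 : QuadraticForm K M2) (e : M1 →ₗ[K] M2) (c : K) (hc : c ≠ 0)
    (h : ∀ m, Q2 (e m) = c * Q1 m) : CliffordAlgebra.even Q1 →ₐ[K] CliffordAlgebra.even Q2 :=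
  CliffordAlgebra.even.lift Q1
    { bilin := c⁻¹ • (((CliffordAlgebra.even.ι Q2).bilin.comp e).compl₂ e)
      contract := fun m => by
        have := (CliffordAlgebra.even.ι Q2).contract (e m)
        simp only [LinearMap.smul_apply, LinearMap.compl₂_apply, LinearMap.comp_apply, this, h]
        rw [map_mul, ← Algebra.smul_def, smul_smul, inv_mul_cancel₀ hc, one_smul]
      contract_mid := fun m1 m2 m3 => by
        have := (CliffordAlgebra.even.ι Q2).contract_mid (e m1) (e m2) (e m3)
        simp only [LinearMap.smul_apply, LinearMap.compl₂_apply, LinearMap.comp_apply]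
        rw [smul_mul_smul_comm, this, h, smul_smul, smul_smul]
        congr 1
        field_simp }

lemma simHom_ι {M1 M2 : Type*} [AddCommGroup M1] [Module K M1] [AddCommGroup M2] [Module K M2]
    (Q1 : QuadraticForm K M1) (Q2 : QuadraticForm K M2) (e : M1 →ₗ[K] M2) (c : K) (hc : c ≠ 0)
    (h : ∀ m, Q2 (e m) = c * Q1 m) (a b) :
    simHom Q1 Q2 e c hc h ((CliffordAlgebra.even.ι Q1).bilin a b) =
      c⁻¹ • (CliffordAlgebra.even.ι Q2).bilin (e a) (e b) := by
  rw [simHom, CliffordAlgebra.even.lift_ι]; rfl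

lemma even_sim {M1 M2 : Type*} [AddCommGroup M1] [Module K M1] [AddCommGroup M2] [Module K M2]
    (Q1 : QuadraticForm K M1) (Q2 : QuadraticForm K M2) (e : M1 ≃ₗ[K] M2) (c : K) (hc : c ≠ 0)
    (h : ∀ m, Q2 (e m) = c * Q1 m) :
    Nonempty (CliffordAlgebra.even Q1 ≃ₐ[K] CliffordAlgebra.even Q2) := by
  have h' : ∀ m, Q1 (e.symm m) = c⁻¹ * Q2 m := by
    intro m
    have := h (e.symm m)
    rw [e.apply_symm_apply] at this
    rw [this, ← mul_assoc, inv_mul_cancel₀ hc, one_mul]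
  refine ⟨AlgEquiv.ofAlgHom (simHom Q1 Q2 e.toLinearMap c hc h)
    (simHom Q2 Q1 e.symm.toLinearMap c⁻¹ (inv_ne_zero hc) h') ?_ ?_⟩
  · apply CliffordAlgebra.even.algHom_ext
    ext a b : 3
    simp only [CliffordAlgebra.EvenHom.compr₂_bilin, LinearMap.compr₂_apply,
      AlgHom.toLinearMap_apply, AlgHom.comp_apply, simHom_ι, map_smul, AlgHom.id_apply]
    simp [smul_smul, hc]
  · apply CliffordAlgebra.even.algHom_ext
    ext a b : 3
    simp only [CliffordAlgebra.EvenHom.compr₂_bilin, LinearMap.compr₂_apply,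
      AlgHom.toLinearMap_apply, AlgHom.comp_apply, simHom_ι, map_smul, AlgHom.id_apply]
    simp [smul_smul, hc]

/-- even part of a diagonal form is a Clifford algebra in one dimension less -/
lemma even_diag {n : ℕ} (w : Fin (n + 1) → K) (hw : ∀ i, w i ≠ 0) :
    Nonempty (CliffordAlgebra.even (QuadraticMap.weightedSumSquares K w) ≃ₐ[K]
      CA (fun i : Fin n => - w (Fin.last n) * w i.castSucc)) := by
  set c := w (Fin.last n) with hc
  have hc0 : c ≠ 0 := hw _
  let Q9 := QuadraticMap.weightedSumSquares K (fun i : Fin n => - c * w i.castSucc)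
  let e : (Fin (n + 1) → K) ≃ₗ[K] (Fin n → K) × K :=
    { toFun := fun v => (fun i => v i.castSucc, c * v (Fin.last n))
      invFun := fun p => Fin.snoc p.1 (c⁻¹ * p.2)
      map_add' := fun x y => by ext <;> simp [mul_add]
      map_smul' := fun r x => by ext <;> simp [mul_left_comm]
      left_inv := fun v => by
        funext i
        refine Fin.lastCases ?_ (fun i => ?_) i <;> simp [hc0]
      right_inv := fun p => by ext <;> simp [hc0] }
  obtain ⟨f⟩ := even_sim (QuadraticMap.weightedSumSquares K w) (CliffordAlgebra.EquivEven.Q' Q9) e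
    (-c) (neg_ne_zero.2 hc0) (by
      intro v
      rw [CliffordAlgebra.EquivEven.Q'_apply]
      simp only [Q9, QuadraticMap.weightedSumSquares_apply, e, LinearEquiv.coe_mk, LinearMap.coe_mk,
        AddHom.coe_mk]
      rw [Fin.sum_univ_castSucc, mul_add, Finset.mul_sum, ← hc, sub_eq_add_neg]
      congr 1
      · refine Finset.sum_congr rfl fun i _ => ?_
        simp only [smul_eq_mul]; ring
      · simp only [smul_eq_mul]; ring)
  exact ⟨f.trans (CliffordAlgebra.equivEven Q9).symm⟩

lemma center_matrix {R S : Type*} [Ring R] [CommRing S] {n : ℕ} (hn : 0 < n)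
    (f : R ≃+* Matrix (Fin n) (Fin n) S) :
    Nonempty (R ≃ₐ[Subring.center R] Matrix (Fin n) (Fin n) (Subring.center R)) := by
  have : Nonempty (Fin n) := ⟨⟨0, hn⟩⟩
  have hmem : ∀ s : S, f.symm (Matrix.scalar (Fin n) s) ∈ Subring.center R := by
    intro s
    rw [Subring.mem_center_iff]
    intro g
    apply f.injective
    rw [map_mul, map_mul, f.apply_symm_apply]
    exact (Matrix.scalar_commute s (fun r => mul_comm _ _) (f g)).eq.symm
  let σ0 : S →+* Subring.center R :=
    ((f.symm.toRingHom).comp (Matrix.scalar (Fin n))).codRestrict _ hmem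
  have hσ : Function.Bijective σ0 := by
    constructor
    · intro s t h
      have h1 : f.symm (Matrix.scalar (Fin n) s) = f.symm (Matrix.scalar (Fin n) t) :=
        congrArg Subtype.val h
      exact Matrix.scalar_inj.1 (f.symm.injective h1)
    · rintro ⟨c, hc⟩
      have : f c ∈ Set.range (Matrix.scalar (Fin n)) := by
        apply Matrix.mem_range_scalar_of_commute_single
        intro i j _
        rw [Subring.mem_center_iff] at hc
        have := congrArg f (hc (f.symm (Matrix.single i j 1)))
        rw [map_mul, map_mul, f.apply_symm_apply] at this
        exact this
      obtain ⟨s, hs⟩ := this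
      refine ⟨s, Subtype.ext ?_⟩
      show f.symm (Matrix.scalar (Fin n) s) = c
      rw [hs, f.symm_apply_apply]
  let σ := RingEquiv.ofBijective σ0 hσ
  refine ⟨AlgEquiv.ofRingEquiv (f := f.trans σ.mapMatrix) ?_⟩
  intro c
  obtain ⟨s, rfl⟩ := σ.surjective c
  have : f (algebraMap (Subring.center R) R (σ s)) = Matrix.scalar (Fin n) s :=
    f.apply_symm_apply _
  show σ.mapMatrix (f _) = _
  rw [this]
  ext i j
  rw [Matrix.algebraMap_matrix_apply]
  by_cases h : i = j <;> simp [h]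

end evenpart

section gram
variable {K : Type u} [Field K]

lemma gram_eq [Invertible (2 : K)] {n : ℕ} (q : QuadraticForm K (Fin n → K)) :
    gramMatrix q = q.toMatrix' := by
  ext i j
  rw [QuadraticForm.toMatrix', LinearMap.toMatrix₂'_apply, QuadraticMap.associated_apply]
  simp [gramMatrix, QuadraticMap.polar, div_eq_inv_mul]

lemma gram_diag (h2 : (2 : K) ≠ 0) {n : ℕ} (w : Fin n → K) :
    gramMatrix (QuadraticMap.weightedSumSquares K w) = Matrix.diagonal w := by
  ext i j
  simp only [gramMatrix, Matrix.of_apply, QuadraticMap.polar, QuadraticMap.weightedSumSquares_apply,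
    smul_eq_mul]
  rw [← Finset.sum_sub_distrib, ← Finset.sum_sub_distrib]
  rw [Finset.sum_eq_single i]
  · by_cases h : i = j
    · subst h; simp; field_simp; norm_num
    · simp [h]
  · intro l _ hl
    simp [hl]
  · simp

lemma diag_exists (h2 : (2 : K) ≠ 0) {n : ℕ} (q : QuadraticForm K (Fin n → K))
    (hq : (gramMatrix q).det ≠ 0) : ∃ (w : Fin n → K) (s : K), s ≠ 0 ∧ (∀ i, w i ≠ 0) ∧
      (gramMatrix q).det = s * s * ∏ i, w i ∧
      Nonempty (q.IsometryEquiv (QuadraticMap.weightedSumSquares K w)) := by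
  let _ : Invertible (2 : K) := invertibleOfNonzero h2
  have key : ∃ w : Fin n → K, q.Equivalent (QuadraticMap.weightedSumSquares K w) := by
    have h := QuadraticForm.equivalent_weightedSumSquares q
    rw [Module.finrank_fin_fun] at h
    exact h
  obtain ⟨w, ⟨e⟩⟩ := key
  have hc : q = (QuadraticMap.weightedSumSquares K w).comp e.toLinearEquiv.toLinearMap := by
    ext v; exact (e.map_app v).symm
  have hd : (gramMatrix q).det = (LinearMap.toMatrix' e.toLinearEquiv.toLinearMap).det *
      (LinearMap.toMatrix' e.toLinearEquiv.toLinearMap).det * ∏ i, w i := by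
    have := QuadraticForm.discr'_comp (Q := QuadraticMap.weightedSumSquares K w)
      e.toLinearEquiv.toLinearMap
    rw [← hc] at this
    unfold QuadraticForm.discr' at this
    rw [gram_eq, this, ← gram_eq, gram_diag h2, Matrix.det_diagonal]
  rw [hd] at hq
  refine ⟨w, _, ?_, ?_, hd, ⟨e⟩⟩
  · intro h; rw [h] at hq; simp at hq
  · intro i hi
    apply hq
    rw [Finset.prod_eq_zero (Finset.mem_univ i) hi, mul_zero]
end gram

/-! ### Part 6 -/

section getext
variable {K : Type u} [Field K]

/-- the eight-dimensional form -/
def b8 (w : Fin 10 → K) : Fin (2 * 4) → K := fun i => - w 9 * w (Fin.castLE (by norm_num) i)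

lemma b8_ne {w : Fin 10 → K} (hw : ∀ i, w i ≠ 0) (i) : b8 w i ≠ 0 := by
  simp [b8, hw]

lemma tensor_matrix {A S : Type u} [Ring A] [Algebra K A] [CommRing S] [Algebra K S] {n : ℕ}
    (e : A ≃ₐ[K] Matrix (Fin n) (Fin n) K) :
    Nonempty (S ⊗[K] A ≃+* Matrix (Fin n) (Fin n) S) :=
  ⟨((Algebra.TensorProduct.congr (AlgEquiv.refl (R := K) (A₁ := S)) e).trans
    (matrixEquivTensor (Fin n) K S).symm).toRingEquiv⟩

lemma get_ext (h2 : (2 : K) ≠ 0) (q : QuadraticForm K (Fin 10 → K)) (w : Fin 10 → K)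
    (hw : ∀ i, w i ≠ 0) (e : q.IsometryEquiv (QuadraticMap.weightedSumSquares K w))
    (hC₀ : ¬ Nonempty
      ((↥(CliffordAlgebra.even q)) ≃ₐ[↥(Subring.center ↥(CliffordAlgebra.even q))]
        Matrix (Fin 16) (Fin 16) ↥(Subring.center ↥(CliffordAlgebra.even q)))) :
    ∃ (L : Type u) (_ : Field L) (_ : Algebra K L),
      IsSquare (- ∏ i, bw L w i) ∧
      ¬ Nonempty (CA (bw L (b8 w)) ≃ₐ[L] Matrix (Fin (2 ^ 4)) (Fin (2 ^ 4)) L) := by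
  obtain ⟨e0⟩ := even_sim q (QuadraticMap.weightedSumSquares K w) e.toLinearEquiv 1 one_ne_zero
    (fun m => by rw [one_mul]; exact e.map_app m)
  obtain ⟨e1⟩ := even_diag w hw
  obtain ⟨d, t, ht, hd, ⟨e2⟩⟩ := odd_equiv h2 4 (b8 w) (- w 9 * w 8) (b8_ne hw)
  have hW : (fun i : Fin 9 => - w (Fin.last 9) * w i.castSucc) =
      (Fin.snoc (b8 w) (- w 9 * w 8) : Fin (2 * 4 + 1) → K) := by
    funext i
    refine Fin.lastCases (n := 8) ?_ (fun i => ?_) i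
    · rw [Fin.snoc_last (n := 2 * 4)]; rfl
    · rw [Fin.snoc_castSucc (n := 2 * 4)]; rfl
  rw [hW] at e1
  let S := QuadraticAlgebra K d 0
  have e3 : CliffordAlgebra.even q ≃+* S ⊗[K] CA (b8 w) :=
    ((e0.trans (e1.trans e2)).trans (Algebra.TensorProduct.comm K _ _)).toRingEquiv
  have hno : ¬ Nonempty (S ⊗[K] CA (b8 w) ≃+* Matrix (Fin 16) (Fin 16) S) := by
    rintro ⟨f⟩
    exact hC₀ (center_matrix (by norm_num) (e3.trans f))
  have hdw : d = (t * w 9 ^ 4) ^ 2 * - ∏ i, w i := by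
    have hp : ∏ i, w i = (∏ i : Fin 8, w i.castSucc.castSucc) * w 8 * w 9 := by
      rw [Fin.prod_univ_castSucc, Fin.prod_univ_castSucc]; rfl
    have : ∏ i, b8 w i = w 9 ^ 8 * ∏ i : Fin 8, w (i.castSucc.castSucc) := by
      simp only [b8]
      rw [Finset.prod_mul_distrib, Finset.prod_const]
      congr 1
      simp
      ring
    rw [hd, this, hp]
    ring
  have hu : t * w 9 ^ 4 ≠ 0 := mul_ne_zero ht (pow_ne_zero _ (hw _))
  have hw' : - ∏ i, w i = (t * w 9 ^ 4)⁻¹ ^ 2 * d := by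
    rw [hdw, ← mul_assoc, ← mul_pow, inv_mul_cancel₀ hu, one_pow, one_mul]
  by_cases hsq : IsSquare d
  · refine ⟨K, inferInstance, inferInstance, ?_, ?_⟩
    · have : bw K w = w := rfl
      rw [this, hw']
      exact (IsSquare.sq _).mul hsq
    · rintro ⟨f⟩
      have hb : bw K (b8 w) = b8 w := rfl
      rw [hb] at f
      obtain ⟨g⟩ := tensor_matrix (S := S) f
      exact hno ⟨g⟩
  · have : Fact (∀ r : K, r ^ 2 ≠ d + 0 * r) := ⟨fun r h => hsq ⟨r, by
      rw [← sq, h, zero_mul, add_zero]⟩⟩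
    refine ⟨S, inferInstance, inferInstance, ?_, ?_⟩
    · have h1 : - ∏ i, bw S w i = algebraMap K S (- ∏ i, w i) := by
        simp only [bw, map_neg, map_prod]
      rw [h1, hw', map_mul, map_pow]
      refine (IsSquare.sq _).mul ⟨QuadraticAlgebra.omega, ?_⟩
      rw [QuadraticAlgebra.omega_mul_omega_eq_mk]; rfl
    · rintro ⟨f⟩
      exact hno ⟨((bcEquiv S h2 (b8 w)).trans f).toRingEquiv⟩
end getext

section double
variable {K : Type u} [Field K]

/-- if the signed discriminant is trivial, the Clifford algebra is a matrix algebra over that of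
the eight-dimensional form -/
lemma ca_double (h2 : (2 : K) ≠ 0) (w : Fin 10 → K) (hw : ∀ i, w i ≠ 0)
    (hs : IsSquare (- ∏ i, w i)) :
    Nonempty (CA w ≃ₐ[K] Matrix (Fin 2) (Fin 2) K ⊗[K] CA (b8 w)) := by
  obtain ⟨r, hr⟩ := hs
  have hpw : ∏ i, w i ≠ 0 := Finset.prod_ne_zero_iff.2 fun i _ => hw i
  have hr0 : r ≠ 0 := by
    rintro rfl
    rw [mul_zero, neg_eq_zero] at hr
    exact hpw hr
  obtain ⟨z', s, hs0, hz', ha', -⟩ := vol h2 5 w hw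
  let z : CA w := (s * r)⁻¹ • z'
  have hz : z * z = 1 := by
    simp only [z]
    rw [smul_mul_smul_comm, hz', Algebra.algebraMap_eq_smul_one, smul_smul]
    have : ((-1) ^ 5 * ∏ i : Fin 10, w i) = r * r := by rw [← hr]; ring
    have h' : (s * r)⁻¹ * (s * r)⁻¹ * (s ^ 2 * ((-1) ^ 5 * ∏ i : Fin (2 * 5), w i)) = 1 := by
      erw [this]; field_simp
    rw [h', one_smul]
  have ha : ∀ i, z * gen w i = - (gen w i * z) := by
    intro i
    simp only [z]
    rw [smul_mul_assoc, ha', mul_smul_comm, smul_neg]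
  let j : Fin (2 * 4) → Fin 10 := Fin.castLE (by norm_num)
  have hj : ∀ i, j i ≠ 9 := by
    intro i h
    have h1 := congrArg Fin.val h
    have h2 := i.isLt
    simp [j] at h1
    omega
  let B : QuaternionAlgebra.Basis (CA w) 1 0 (w 9) :=
    { i := z
      j := gen w 9
      k := z * gen w 9
      i_mul_i := by simp [hz]
      j_mul_j := by rw [gen_sq, Algebra.algebraMap_eq_smul_one]
      i_mul_j := rfl
      j_mul_i := by rw [ha]; simp }
  let f : Fin (2 * 4) → CA w := fun i => z * gen w 9 * gen w (j i)
  have hf : ∀ i i', f i * f i' = (- w 9) • (gen w (j i) * gen w (j i')) := by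
    intro i i'
    simp only [f]
    rw [anti3, hz, gen_sq, one_mul, ← Algebra.smul_def, neg_smul]
    · rw [ha, neg_neg]
    · rw [ha, neg_neg]
    · exact gen_anti w (hj i)
  let F : CA (b8 w) →ₐ[K] CA w := liftD (b8 w) h2 f (fun i => by
      rw [hf, gen_sq, Algebra.algebraMap_eq_smul_one, smul_smul, Algebra.algebraMap_eq_smul_one]
      rfl) (fun i i' h => by
      rw [hf, hf, gen_anti w (i := j i) (j := j i') (fun hh => h (by simpa [j] using hh)), smul_neg])
  have c0 : ∀ i, Commute z (f i) := by
    intro i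
    rw [commute_iff_eq]
    simp only [f]
    rw [mul_assoc _ _ z, ← neg_neg (gen w (j i) * z), ← ha, mul_neg, ← mul_assoc (z * gen w 9) z,
      mul_assoc z (gen w 9) z, ← neg_neg (gen w 9 * z), ← ha]
    noncomm_ring
  have c1 : ∀ i, Commute (gen w 9) (f i) := by
    intro i
    rw [commute_iff_eq]
    simp only [f]
    rw [mul_assoc _ _ (gen w 9), gen_anti w (hj i), mul_neg, ← mul_assoc, ← mul_assoc,
      ← neg_neg (gen w 9 * z), ← ha]
    noncomm_ring
  let G : QuaternionAlgebra K 1 0 (w 9) ⊗[K] CA (b8 w) →ₐ[K] CA w :=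
    Algebra.TensorProduct.lift B.liftHom F (by
      intro x y
      have h0 : Commute z (F y) := commute_hom F z (fun i => by simpa [F] using c0 i) y
      have h1 : Commute (gen w 9) (F y) :=
        commute_hom F _ (fun i => by simpa [F] using c1 i) y
      simp only [QuaternionAlgebra.Basis.liftHom_apply, QuaternionAlgebra.Basis.lift]
      refine Commute.add_left (Commute.add_left (Commute.add_left ?_ ?_) ?_) ?_
      · exact Algebra.commutes _ _
      · exact h0.smul_left _
      · exact h1.smul_left _
      · exact (h0.mul_left h1).smul_left _)
  obtain ⟨i1, i2, i3, i4⟩ := csa h2 4 (b8 w) (b8_ne hw)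
  obtain ⟨j1, j2, j3, j4⟩ := csa h2 5 w hw
  have i5 := tensor_simple (B := CA (b8 w)) h2 (a := 1) one_ne_zero (hw 9)
  have j3' : Module.Finite K (CA w) := j3
  have j1' : IsSimpleRing (CA w) := j1
  obtain ⟨E⟩ := equiv_of_simple (by
    rw [Module.finrank_tensorProduct, i4, QuaternionAlgebra.finrank_eq_four]
    exact j4.symm) G
  obtain ⟨M⟩ := quat_split h2 (a := 1) (b := w 9) one_ne_zero (hw 9) ⟨1, by simp⟩
  exact ⟨E.symm.trans (Algebra.TensorProduct.congr M AlgEquiv.refl)⟩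
end double

/-! ### Part 7 -/

section quatdiv
variable {K : Type u} [Field K]

lemma quad_of_div {D : Type u} [DivisionRing D] [Algebra K D] [Module.Finite K D]
    [hc : Algebra.IsCentral K D] (h4 : Module.finrank K D = 4) (x : D)
    (hx : x ∉ (⊥ : Subalgebra K D)) : ∃ β γ : K, x * x = β • x + γ • (1 : D) := by
  have hxInt : IsIntegral K x := Algebra.IsIntegral.isIntegral x
  have : Fact (Irreducible (minpoly K x)) := ⟨minpoly.irreducible hxInt⟩
  let f : AdjoinRoot (minpoly K x) →ₐ[K] D :=
    Ideal.Quotient.liftₐ (Ideal.span {minpoly K x}) (Polynomial.aeval x) (by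
      intro a ha
      obtain ⟨c, rfl⟩ := Ideal.mem_span_singleton.1 ha
      rw [map_mul, minpoly.aeval, zero_mul])
  have hfin : Module.Finite K (AdjoinRoot (minpoly K x)) := (minpoly.monic hxInt).finite_adjoinRoot
  have hdim : Module.finrank K (AdjoinRoot (minpoly K x)) = (minpoly K x).natDegree := by
    rw [(AdjoinRoot.powerBasis (minpoly.ne_zero hxInt)).finrank, AdjoinRoot.powerBasis_dim]
  let _ : Module (AdjoinRoot (minpoly K x)) D := Module.compHom D f.toRingHom
  have : IsScalarTower K (AdjoinRoot (minpoly K x)) D := ⟨fun c a d => by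
    change f (c • a) * d = c • (f a * d)
    rw [map_smul, smul_mul_assoc]⟩
  have hmul := Module.finrank_mul_finrank K (AdjoinRoot (minpoly K x)) D
  rw [hdim, h4] at hmul
  have hle : (minpoly K x).natDegree ≤ 4 := Nat.le_of_dvd (by norm_num) ⟨_, hmul.symm⟩
  have hne1 : (minpoly K x).natDegree ≠ 1 := by
    intro h
    rw [minpoly.natDegree_eq_one_iff] at h
    exact hx (Algebra.mem_bot.2 h)
  have hne4 : (minpoly K x).natDegree ≠ 4 := by
    intro h
    have hinj : Function.Injective f := f.toRingHom.injective
    have hsurj : Function.Surjective f :=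
      (LinearMap.injective_iff_surjective_of_finrank_eq_finrank (f := f.toLinearMap)
        (by rw [hdim, h4, h])).1 hinj
    apply hx
    rw [← Algebra.IsCentral.center_eq_bot K D, Subalgebra.mem_center_iff]
    intro b
    obtain ⟨b, rfl⟩ := hsurj b
    obtain ⟨a, ha⟩ := hsurj x
    have ha' : f b * f a = f a * f b := by rw [← map_mul, ← map_mul, mul_comm]
    rwa [ha] at ha'
  have hpos := minpoly.natDegree_pos hxInt
  have h2 : (minpoly K x).natDegree = 2 := by
    interval_cases h : (minpoly K x).natDegree <;> omega
  have hm := minpoly.monic hxInt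
  have haev := minpoly.aeval K x
  rw [Polynomial.aeval_eq_sum_range, h2, Finset.sum_range_succ, Finset.sum_range_succ,
    Finset.sum_range_one] at haev
  have hl : (minpoly K x).coeff 2 = 1 := by rw [← h2]; exact hm.coeff_natDegree
  rw [hl] at haev
  refine ⟨-(minpoly K x).coeff 1, -(minpoly K x).coeff 0, ?_⟩
  simp only [pow_zero, pow_one, one_smul] at haev
  rw [← sq, neg_smul, neg_smul]
  rw [← sub_eq_zero, ← haev]
  abel

lemma quat_of_div (h2 : (2 : K) ≠ 0) {D : Type u} [DivisionRing D] [Algebra K D] [Module.Finite K D]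
    [hc : Algebra.IsCentral K D] (h4 : Module.finrank K D = 4) :
    ∃ a b : K, a ≠ 0 ∧ b ≠ 0 ∧
      (∀ p q r : K, a * p ^ 2 + b * q ^ 2 - a * b * r ^ 2 = 0 → p = 0 ∧ q = 0 ∧ r = 0) ∧
      Nonempty (D ≃ₐ[K] QuaternionAlgebra K a 0 b) := by
  have hbot : (⊥ : Subalgebra K D) ≠ ⊤ := by
    intro h
    have := Subalgebra.bot_eq_top_iff_finrank_eq_one.1 h
    rw [h4] at this
    norm_num at this
  obtain ⟨x0, hx0⟩ : ∃ x0 : D, x0 ∉ (⊥ : Subalgebra K D) := by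
    by_contra hcon
    push Not at hcon
    exact hbot (by rw [eq_top_iff]; intro x _; exact hcon x)
  obtain ⟨β, γ, hq⟩ := quad_of_div h4 x0 hx0
  let x : D := x0 - (β / 2) • (1 : D)
  have hx : x ∉ (⊥ : Subalgebra K D) := by
    intro h
    apply hx0
    have := Subalgebra.add_mem _ h (Subalgebra.smul_mem (⊥ : Subalgebra K D)
      (Subalgebra.one_mem _) (β / 2))
    simpa [x] using this
  have hxx : x * x = (γ + β ^ 2 / 4) • (1 : D) := by
    have h4 : (4 : K) ≠ 0 := by
      have : (4 : K) = 2 * 2 := by norm_num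
      rw [this]; exact mul_ne_zero h2 h2
    simp only [x, sub_mul, mul_sub, hq, smul_mul_assoc, mul_smul_comm, one_mul, mul_one]
    match_scalars
    · field_simp; ring
    · field_simp; ring
  have hx0' : x ≠ 0 := fun h => hx (h ▸ Subalgebra.zero_mem _)
  generalize γ + β ^ 2 / 4 = a at hxx
  have ha0 : a ≠ 0 := by
    intro h
    rw [h, zero_smul] at hxx
    exact hx0' (mul_self_eq_zero.1 hxx)
  obtain ⟨z, hz⟩ : ∃ z, z * x ≠ x * z := by
    by_contra hcon
    push Not at hcon
    apply hx
    rw [← Algebra.IsCentral.center_eq_bot K D, Subalgebra.mem_center_iff]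
    exact hcon
  let y : D := x * z - z * x
  have hy0 : y ≠ 0 := fun h => hz (sub_eq_zero.1 h).symm
  have hyx : y * x = - (x * y) := by
    simp only [y, sub_mul, mul_sub]
    rw [mul_assoc z x x, ← mul_assoc x x z, hxx, mul_smul_comm, smul_mul_assoc, mul_one, one_mul,
      ← mul_assoc]
    abel
  have h2D : (2 : D) ≠ 0 := by
    have : (2 : D) = algebraMap K D 2 := (map_ofNat _ 2).symm
    rw [this]
    exact fun h => h2 ((algebraMap K D).injective (by rw [h, map_zero]))
  have hy : y ∉ (⊥ : Subalgebra K D) := by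
    intro h
    rw [← Algebra.IsCentral.center_eq_bot K D, Subalgebra.mem_center_iff] at h
    have h1 := h x
    rw [hyx, eq_neg_iff_add_eq_zero, ← two_mul] at h1
    exact mul_ne_zero h2D (mul_ne_zero hx0' hy0) h1
  obtain ⟨β', b, hyy⟩ := quad_of_div h4 y hy
  have hcomm : (y * y) * x = x * (y * y) := by
    rw [mul_assoc, hyx, mul_neg, ← mul_assoc, hyx, neg_mul, neg_neg, mul_assoc]
  have hβ : β' = 0 := by
    by_contra hβ
    rw [hyy, add_mul, mul_add, smul_mul_assoc, mul_smul_comm, smul_mul_assoc, mul_smul_comm, one_mul,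
      mul_one, add_left_inj, hyx] at hcomm
    have h1 := smul_right_injective D hβ hcomm
    have h1 : -(x * y) = x * y := h1
    rw [neg_eq_iff_add_eq_zero, ← two_mul] at h1
    exact mul_ne_zero h2D (mul_ne_zero hx0' hy0) h1
  rw [hβ, zero_smul, zero_add] at hyy
  have hb0 : b ≠ 0 := by
    intro h
    rw [h, zero_smul] at hyy
    exact hy0 (mul_self_eq_zero.1 hyy)
  let B : QuaternionAlgebra.Basis D a 0 b :=
    { i := x
      j := y
      k := x * y
      i_mul_i := by simp [hxx]
      j_mul_j := hyy
      i_mul_j := rfl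
      j_mul_i := by rw [hyx]; simp }
  have := quat_simple h2 ha0 hb0
  obtain ⟨E⟩ := equiv_of_simple (A := QuaternionAlgebra K a 0 b) (B := D)
    (by rw [QuaternionAlgebra.finrank_eq_four, h4]) B.liftHom
  refine ⟨a, b, ha0, hb0, ?_, ⟨E.symm⟩⟩
  intro p q r h
  let v : QuaternionAlgebra K a 0 b := ⟨0, p, q, r⟩
  have hv : v * v = 0 := by
    ext
    · simp [v]; linear_combination h
    · simp [v]; try ring
    · simp [v]; try ring
    · simp [v]; try ring
  have : E v = 0 := by
    have := congrArg E hv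
    rw [map_mul, map_zero] at this
    exact mul_self_eq_zero.1 this
  have hv0 : v = 0 := E.injective (by rw [this, map_zero])
  refine ⟨congrArg QuaternionAlgebra.imI hv0, congrArg QuaternionAlgebra.imJ hv0,
    congrArg QuaternionAlgebra.imK hv0⟩

/-- modules over matrix rings are large -/
lemma mod_dim {D : Type u} [DivisionRing D] [Algebra K D] [Module.Finite K D] {n : ℕ} [NeZero n]
    {M : Type*} [AddCommGroup M] [Module K M] [Module.Finite K M] [Nontrivial M]
    (f : Matrix (Fin n) (Fin n) D →ₐ[K] Module.End K M) :
    n * Module.finrank K D ≤ Module.finrank K M := by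
  obtain ⟨m, hm⟩ : ∃ m, f (Matrix.single 0 0 1) m ≠ 0 := by
    by_contra hcon
    push Not at hcon
    obtain ⟨m, hm⟩ := exists_ne (0 : M)
    apply hm
    have h1 : f 1 m = m := by simp
    have h2 : (1 : Matrix (Fin n) (Fin n) D) = ∑ i, Matrix.single i 0 1 * Matrix.single 0 0 1 *
        Matrix.single 0 i 1 := by
      simp only [Matrix.single_mul_single_same, mul_one]
      exact Matrix.sum_single_one.symm
    rw [← h1, h2, map_sum, LinearMap.sum_apply]
    refine Finset.sum_eq_zero fun i _ => ?_
    rw [map_mul, map_mul, Module.End.mul_apply, Module.End.mul_apply, hcon, map_zero]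
  let g : (Fin n → D) →ₗ[K] M :=
    { toFun := fun v => f (∑ i, Matrix.single i 0 (v i)) m
      map_add' := by
        intro v w
        simp [Matrix.single_add, Finset.sum_add_distrib]
      map_smul' := by
        intro c v
        simp only [RingHom.id_apply, Pi.smul_apply, ← Matrix.smul_single]
        rw [← Finset.smul_sum, map_smul, LinearMap.smul_apply] }
  have hg : Function.Injective g := by
    rw [← LinearMap.ker_eq_bot, LinearMap.ker_eq_bot']
    intro v hv
    funext i
    by_contra hi
    apply hm
    have h1 : (Matrix.single 0 0 1 : Matrix (Fin n) (Fin n) D) =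
        Matrix.single 0 i (v i)⁻¹ * ∑ j, Matrix.single j 0 (v j) := by
      rw [Finset.mul_sum, Finset.sum_eq_single i]
      · rw [Matrix.single_mul_single_same, inv_mul_cancel₀ hi]
      · intro j _ hj
        rw [Matrix.single_mul_single_of_ne _ _ _ _ hj.symm]
      · simp
    have hv : f (∑ j, Matrix.single j 0 (v j)) m = 0 := hv
    rw [h1, map_mul, Module.End.mul_apply, hv, map_zero]
  have := LinearMap.finrank_le_finrank_of_injective hg
  rwa [Module.finrank_pi_fintype, Finset.sum_const, Finset.card_univ, Fintype.card_fin,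
    smul_eq_mul] at this

lemma central_of_matrix {D : Type u} [DivisionRing D] [Algebra K D] {n : ℕ} [NeZero n]
    (hc : Algebra.IsCentral K (Matrix (Fin n) (Fin n) D)) : Algebra.IsCentral K D := by
  refine ⟨fun z hz => ?_⟩
  rw [Subalgebra.mem_center_iff] at hz
  have h : Matrix.scalar (Fin n) z ∈ Subalgebra.center K (Matrix (Fin n) (Fin n) D) := by
    rw [Subalgebra.mem_center_iff]
    intro M
    exact (Matrix.scalar_commute z (fun r => (hz r).symm) M).symm.eq
  obtain ⟨c, hc⟩ := Algebra.mem_bot.1 (hc.out h)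
  refine Algebra.mem_bot.2 ⟨c, ?_⟩
  have := congrFun (congrFun hc 0) 0
  simpa [Matrix.algebraMap_matrix_apply] using this

lemma not_prime_sq {p N n : ℕ} (hp : p.Prime) (hN : 0 < N) (hn : 0 < n) : N ^ 2 ≠ n ^ 2 * p := by
  intro h
  have : (N ^ 2).factorization p = (n ^ 2 * p).factorization p := by rw [h]
  rw [Nat.factorization_mul (by positivity) hp.ne_zero, Nat.factorization_pow, Nat.factorization_pow]
    at this
  simp [hp.factorization_self] at this
  omega

lemma key_split (h2 : (2 : K) ≠ 0) {A : Type u} [Ring A] [Algebra K A] [IsSimpleRing A]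
    [Module.Finite K A] [hc : Algebra.IsCentral K A] {N : ℕ} (hA : Module.finrank K A = N ^ 2)
    {M : Type*} [AddCommGroup M] [Module K M] [Module.Finite K M] [Nontrivial M]
    (hM : Module.finrank K M ≤ 2 * N) (f : A →ₐ[K] Module.End K M) :
    Nonempty (A ≃ₐ[K] Matrix (Fin N) (Fin N) K) ∨
    ∃ a b : K, a ≠ 0 ∧ b ≠ 0 ∧
      (∀ p q r : K, a * p ^ 2 + b * q ^ 2 - a * b * r ^ 2 = 0 → p = 0 ∧ q = 0 ∧ r = 0) ∧
      ∃ n : ℕ, 0 < n ∧ Nonempty (A ≃ₐ[K] Matrix (Fin n) (Fin n) (QuaternionAlgebra K a 0 b)) := by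
  have : IsArtinianRing A := IsArtinianRing.of_finite K A
  obtain ⟨n, hn, D, _, _, _, ⟨e⟩⟩ := IsSimpleRing.exists_algEquiv_matrix_divisionRing_finite K A
  have hD : Algebra.IsCentral K D := central_of_matrix (n := n) (Algebra.IsCentral.of_algEquiv _ _ _ e)
  have hdim : N ^ 2 = n ^ 2 * Module.finrank K D := by
    rw [← hA, e.toLinearEquiv.finrank_eq, Module.finrank_matrix]
    simp only [Fintype.card_fin]; ring
  have hle := (mod_dim (f.comp e.symm.toAlgHom)).trans hM
  have hδ : 0 < Module.finrank K D := Module.finrank_pos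
  have hn0 : 0 < n := Nat.pos_of_ne_zero hn.out
  have h4 : Module.finrank K D ≤ 4 := by
    generalize Module.finrank K D = δ at *
    have h1 : (n * δ) ^ 2 ≤ (2 * N) ^ 2 := Nat.pow_le_pow_left hle 2
    have h3 : (n ^ 2 * δ) * δ ≤ (n ^ 2 * δ) * 4 := by
      calc (n ^ 2 * δ) * δ = (n * δ) ^ 2 := by ring
        _ ≤ (2 * N) ^ 2 := h1
        _ = 4 * N ^ 2 := by ring
        _ = (n ^ 2 * δ) * 4 := by rw [hdim]; ring
    exact Nat.le_of_mul_le_mul_left h3 (by positivity)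
  have hN0 : 0 < N := by
    rcases Nat.eq_zero_or_pos N with h | h
    · subst h
      have : 0 < n ^ 2 * Module.finrank K D := by positivity
      omega
    · exact h
  have hcase : Module.finrank K D = 1 ∨ Module.finrank K D = 4 := by
    generalize Module.finrank K D = δ at *
    interval_cases δ
    · left; rfl
    · exact absurd hdim (not_prime_sq Nat.prime_two hN0 hn0)
    · exact absurd hdim (not_prime_sq Nat.prime_three hN0 hn0)
    · right; rfl
  rcases hcase with h | h
  · left
    rw [h, mul_one] at hdim
    have hNn : N = n := Nat.pow_left_injective (n := 2) (by norm_num) hdim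
    subst hNn
    obtain ⟨g⟩ := equiv_of_simple (K := K) (A := K) (B := D) (by rw [h, Module.finrank_self]) (Algebra.ofId K D)
    exact ⟨e.trans g.symm.mapMatrix⟩
  · right
    obtain ⟨a, b, ha, hb, han, ⟨g⟩⟩ := quat_of_div h2 h
    exact ⟨a, b, ha, hb, han, n, hn0, ⟨e.trans g.mapMatrix⟩⟩
end quatdiv

/-! ### Part 8 -/

section descent

lemma mat_comp (K : Type u) [Field K] (B : Type*) [Ring B] [Algebra K B] (p n : ℕ) :
    Nonempty (Matrix (Fin p) (Fin p) (Matrix (Fin n) (Fin n) B) ≃ₐ[K]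
      Matrix (Fin (p * n)) (Fin (p * n)) B) :=
  ⟨(Matrix.compAlgEquiv (Fin p) (Fin n) B K).trans (Matrix.reindexAlgEquiv K B finProdFinEquiv)⟩

lemma mat_tensor (K : Type u) [Field K] (A : Type*) [Ring A] [Algebra K A] (p : ℕ) :
    Nonempty (Matrix (Fin p) (Fin p) K ⊗[K] A ≃ₐ[K] Matrix (Fin p) (Fin p) A) :=
  ⟨(Algebra.TensorProduct.comm K _ _).trans (matrixEquivTensor (Fin p) K A).symm⟩

lemma tail_split {K : Type u} [Field K] (h2 : (2 : K) ≠ 0) {n : ℕ} (w : Fin (n + 2) → K)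
    (hw : ∀ i, w i ≠ 0) (hs : IsSquare (w 0)) :
    Nonempty (CA w ≃ₐ[K] Matrix (Fin 2) (Fin 2) (CA (tl w))) := by
  obtain ⟨M⟩ := quat_split h2 (a := w 0) (b := w 1) (hw 0) (hw 1) hs
  obtain ⟨T⟩ := mat_tensor K (CA (tl w)) 2
  exact ⟨((tailEquiv h2 w hw).trans (Algebra.TensorProduct.congr M AlgEquiv.refl)).trans T⟩

/-- the index-two property -/
def Idx2 (K : Type u) [Field K] (A : Type u) [Ring A] [Algebra K A] : Prop :=
  ∃ a b : K, a ≠ 0 ∧ b ≠ 0 ∧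
      (∀ p q r : K, a * p ^ 2 + b * q ^ 2 - a * b * r ^ 2 = 0 → p = 0 ∧ q = 0 ∧ r = 0) ∧
      ∃ n : ℕ, 0 < n ∧ Nonempty (A ≃ₐ[K] Matrix (Fin n) (Fin n) (QuaternionAlgebra K a 0 b))

lemma idx2_tail {K : Type u} [Field K] (h2 : (2 : K) ≠ 0) {n : ℕ} (w : Fin (n + 2) → K)
    (hw : ∀ i, w i ≠ 0) (hs : IsSquare (w 0)) (h : Idx2 K (CA (tl w))) : Idx2 K (CA w) := by
  obtain ⟨a, b, ha, hb, han, r, hr, ⟨e⟩⟩ := h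
  obtain ⟨f⟩ := tail_split h2 w hw hs
  obtain ⟨g⟩ := mat_comp K (QuaternionAlgebra K a 0 b) 2 r
  exact ⟨a, b, ha, hb, han, 2 * r, by omega, ⟨(f.trans e.mapMatrix).trans g⟩⟩

lemma exists_sqrt {K : Type u} [Field K] (d : K) : ∃ (L : Type u) (_ : Field L) (_ : Algebra K L)
    (_ : Module.Finite K L), Module.finrank K L ≤ 2 ∧ IsSquare (algebraMap K L d) := by
  by_cases hsq : IsSquare d
  · exact ⟨K, inferInstance, inferInstance, inferInstance, by simp, hsq⟩
  · have : Fact (∀ r : K, r ^ 2 ≠ d + 0 * r) := ⟨fun r h => hsq ⟨r, by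
      rw [← sq, h, zero_mul, add_zero]⟩⟩
    refine ⟨QuadraticAlgebra K d 0, inferInstance, inferInstance, inferInstance, ?_, ?_⟩
    · rw [QuadraticAlgebra.finrank_eq_two]
    · refine ⟨QuadraticAlgebra.omega, ?_⟩
      rw [QuadraticAlgebra.omega_mul_omega_eq_mk]; rfl

lemma descent_step {K : Type u} [Field K] (h2 : (2 : K) ≠ 0) (n N : ℕ) (w : Fin (n + 2) → K)
    (hw : ∀ i, w i ≠ 0) (h1 : IsSimpleRing (CA w)) (hc : Algebra.IsCentral K (CA w))
    (hf : Module.Finite K (CA w)) (hN : 0 < N) (hd : Module.finrank K (CA w) = (2 * N) ^ 2)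
    (hns : ¬ Nonempty (CA w ≃ₐ[K] Matrix (Fin (2 * N)) (Fin (2 * N)) K))
    (IH : ∀ (K1 : Type u) [Field K1] (w : Fin n → K1), (2 : K1) ≠ 0 → (∀ i, w i ≠ 0) →
      ¬ Nonempty (CA w ≃ₐ[K1] Matrix (Fin N) (Fin N) K1) →
      ∃ (L : Type u) (_ : Field L) (_ : Algebra K1 L), Idx2 L (CA (bw L w))) :
    ∃ (L : Type u) (_ : Field L) (_ : Algebra K L), Idx2 L (CA (bw L w)) := by
  obtain ⟨K1, _, _, _, hle, hsq⟩ := exists_sqrt (w 0)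
  have h2' : (2 : K1) ≠ 0 := two_ne K1 h2
  have hw' := bw_ne K1 hw
  by_cases hsp : Nonempty (CA (tl (bw K1 w)) ≃ₐ[K1] Matrix (Fin N) (Fin N) K1)
  · obtain ⟨e⟩ := hsp
    obtain ⟨f⟩ := tail_split h2' (bw K1 w) hw' hsq
    obtain ⟨g⟩ := mat_comp K1 K1 2 N
    let E : CA (bw K1 w) ≃ₐ[K1] Matrix (Fin (2 * N)) (Fin (2 * N)) K1 := (f.trans e.mapMatrix).trans g
    let V := Fin (2 * N) → K1
    let φ : Matrix (Fin (2 * N)) (Fin (2 * N)) K1 →ₐ[K1] Module.End K1 V := Matrix.toLinAlgEquiv'.toAlgHom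
    let ψ : Module.End K1 V →ₐ[K] Module.End K V :=
      { toFun := fun T => T.restrictScalars K
        map_one' := rfl
        map_mul' := fun _ _ => rfl
        map_zero' := rfl
        map_add' := fun _ _ => rfl
        commutes' := fun c => by
          ext v i
          simp [Algebra.algebraMap_eq_smul_one] }
    let F : CA w →ₐ[K] Module.End K V :=
      ψ.comp (((φ.comp E.toAlgHom).restrictScalars K).comp (bcHom K1 h2 w))
    have : Nonempty (Fin (2 * N)) := ⟨⟨0, by omega⟩⟩
    have hV : Module.finrank K V ≤ 2 * (2 * N) := by
      simp only [V]
      rw [Module.finrank_pi_fintype, Finset.sum_const, Finset.card_univ, Fintype.card_fin, smul_eq_mul]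
      nlinarith
    rcases key_split h2 hd hV F with h | h
    · exact absurd h hns
    · exact ⟨K, inferInstance, inferInstance, h⟩
  · obtain ⟨L, _, _, h⟩ := IH K1 (tl (bw K1 w)) h2' (tl_ne hw') hsp
    let _ : Algebra K L := ((algebraMap K1 L).comp (algebraMap K K1)).toAlgebra
    refine ⟨L, inferInstance, inferInstance, ?_⟩
    have hb : bw L w = bw L (bw K1 w) := rfl
    rw [hb]
    refine idx2_tail (two_ne L h2') _ (bw_ne L hw') ?_ ?_
    · exact hsq.map (algebraMap K1 L)
    · rw [tl_bw]; exact h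

lemma descent : ∀ (m : ℕ) (K : Type u) [Field K] (w : Fin (2 * m) → K), (2 : K) ≠ 0 →
    (∀ i, w i ≠ 0) → ¬ Nonempty (CA w ≃ₐ[K] Matrix (Fin (2 ^ m)) (Fin (2 ^ m)) K) →
    ∃ (L : Type u) (_ : Field L) (_ : Algebra K L), Idx2 L (CA (bw L w)) := by
  intro m
  induction m with
  | zero =>
    intro K _ w h2 hw hns
    have : Nonempty (Fin (2 ^ 0)) := ⟨⟨0, by norm_num⟩⟩
    obtain ⟨g⟩ := equiv_of_simple (K := K) (A := K) (B := Matrix (Fin (2 ^ 0)) (Fin (2 ^ 0)) K)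
      (by simp [Module.finrank_matrix]) (Algebra.ofId _ _)
    exact absurd ⟨(ca0 w).trans g⟩ hns
  | succ m ih =>
    intro K _ w h2 hw hns
    obtain ⟨h1, hc, hf, hd⟩ := csa h2 (m + 1) w hw
    refine descent_step h2 (2 * m) (2 ^ m) w hw h1 hc hf (by positivity) ?_ ?_ ?_
    · refine Eq.trans hd ?_
      rw [show (4 : ℕ) = 2 ^ 2 by norm_num, ← pow_mul, ← pow_succ', ← pow_mul, mul_comm]
    · rw [← pow_succ']; exact hns
    · intro K1 _ w h2 hw h
      exact ih K1 w h2 hw h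
end descent

/-! ### Part 9 -/

section aniso
open Polynomial

/-- anisotropy of a diagonal form -/
def An {F : Type*} [Field F] {ι : Type*} [Fintype ι] (w : ι → F) : Prop :=
  ∀ v : ι → F, ∑ i, w i * v i ^ 2 = 0 → ∀ i, v i = 0

/-- rational function field -/
abbrev RF (F : Type u) [Field F] : Type u := FractionRing (Polynomial F)

/-- the variable -/
def tt (F : Type u) [Field F] : RF F := algebraMap (Polynomial F) (RF F) X

lemma tt_ne (F : Type u) [Field F] : tt F ≠ 0 := by
  unfold tt
  rw [Ne, FaithfulSMul.algebraMap_eq_zero_iff]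
  exact X_ne_zero

variable {F : Type u} [Field F] {ι κ : Type} [Fintype ι] [Fintype κ]

lemma an_poly {φ : ι → F} {ψ : κ → F} (h1 : An φ) (h2 : An ψ) (n : ℕ) :
    ∀ (p : ι → F[X]) (r : κ → F[X]),
      ∑ i, C (φ i) * p i ^ 2 + X * ∑ j, C (ψ j) * r j ^ 2 = 0 →
      (∀ i, X ^ n ∣ p i) ∧ (∀ j, X ^ n ∣ r j) := by
  induction n with
  | zero => intro p r _; simp
  | succ n ih =>
    intro p r h
    have e1 : ∀ i, (p i).eval 0 = 0 := by
      apply h1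
      have := congrArg (Polynomial.eval 0) h
      simpa [eval_finset_sum] using this
    have e2 : ∀ i, ∃ p', p i = X * p' := fun i => by
      exact X_dvd_iff.2 (by rw [coeff_zero_eq_eval_zero, e1])
    choose p' hp' using e2
    have h' : X * (∑ i, C (φ i) * p' i ^ 2) + ∑ j, C (ψ j) * r j ^ 2 = 0 := by
      apply mul_left_cancel₀ (X_ne_zero (R := F))
      rw [mul_zero, ← h, mul_add, ← mul_assoc, Finset.mul_sum]
      congr 1
      refine Finset.sum_congr rfl fun i _ => ?_
      rw [hp']; ring
    have e3 : ∀ i, (r i).eval 0 = 0 := by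
      apply h2
      have := congrArg (Polynomial.eval 0) h'
      simpa [eval_finset_sum] using this
    have e4 : ∀ i, ∃ r', r i = X * r' := fun i => X_dvd_iff.2 (by rw [coeff_zero_eq_eval_zero, e3])
    choose r' hr' using e4
    have h'' : ∑ i, C (φ i) * p' i ^ 2 + X * ∑ j, C (ψ j) * r' j ^ 2 = 0 := by
      apply mul_left_cancel₀ (X_ne_zero (R := F))
      rw [mul_zero, ← h', mul_add]
      congr 1
      rw [← mul_assoc, Finset.mul_sum]
      refine Finset.sum_congr rfl fun i _ => ?_
      rw [hr']; ring
    obtain ⟨a1, a2⟩ := ih p' r' h''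
    refine ⟨fun i => ?_, fun j => ?_⟩
    · rw [hp', pow_succ']; exact mul_dvd_mul_left _ (a1 i)
    · rw [hr', pow_succ']; exact mul_dvd_mul_left _ (a2 j)

lemma zero_of_dvd (p : F[X]) (h : ∀ n : ℕ, X ^ n ∣ p) : p = 0 := by
  by_contra hp
  have := natDegree_le_of_dvd (h (p.natDegree + 1)) hp
  rw [natDegree_X_pow] at this
  omega

lemma an_rf {φ : ι → F} {ψ : κ → F} (h1 : An φ) (h2 : An ψ) :
    An (Sum.elim (fun i => algebraMap F (RF F) (φ i)) (fun j => tt F * algebraMap F (RF F) (ψ j))) := by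
  intro v hv
  obtain ⟨b, hb⟩ := IsLocalization.exist_integer_multiples_of_finite (nonZeroDivisors F[X]) v
  choose p hp using hb
  have hb0 : algebraMap F[X] (RF F) b ≠ 0 := by
    rw [Ne, FaithfulSMul.algebraMap_eq_zero_iff]
    exact nonZeroDivisors.ne_zero b.2
  have hp' : ∀ i, algebraMap F[X] (RF F) (p i) = algebraMap F[X] (RF F) b * v i := fun i => by
    rw [hp]; exact Algebra.smul_def _ _
  have hC : ∀ c, algebraMap F (RF F) c = algebraMap F[X] (RF F) (C c) := fun c => by
    rw [IsScalarTower.algebraMap_apply F F[X] (RF F)]; rfl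
  have key : ∑ i, C (φ i) * p (Sum.inl i) ^ 2 + X * ∑ j, C (ψ j) * p (Sum.inr j) ^ 2 = 0 := by
    apply FaithfulSMul.algebraMap_injective F[X] (RF F)
    rw [Fintype.sum_sum_type] at hv
    simp only [Sum.elim_inl, Sum.elim_inr, hC] at hv
    simp only [map_add, map_sum, map_mul, map_pow, hp', map_zero]
    rw [← mul_zero (algebraMap F[X] (RF F) b ^ 2), ← hv, mul_add, Finset.mul_sum, Finset.mul_sum,
      Finset.mul_sum]
    congr 1
    · refine Finset.sum_congr rfl fun i _ => ?_
      ring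
    · refine Finset.sum_congr rfl fun i _ => ?_
      rw [tt]; ring
  have hz : ∀ i, p i = 0 := by
    rintro (i | i)
    · exact zero_of_dvd _ fun n => (an_poly h1 h2 n _ _ key).1 i
    · exact zero_of_dvd _ fun n => (an_poly h1 h2 n _ _ key).2 i
  intro i
  have := hp' i
  rw [hz, map_zero] at this
  exact (mul_eq_zero.1 this.symm).resolve_left hb0

lemma an_one {c : F} (hc : c ≠ 0) : An (fun _ : Fin 1 => c) := by
  intro v hv i
  have : i = 0 := Subsingleton.elim _ _
  subst this
  simpa [hc] using hv

lemma an_neg {w : ι → F} (h : An w) : An (fun i => - w i) := by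
  intro v hv
  apply h
  simpa using hv

/-- the iterated rational function field -/
abbrev F3 (L : Type u) [Field L] : Type u := RF (RF (RF L))
abbrev xx (L : Type u) [Field L] : F3 L := algebraMap _ _ (algebraMap (RF L) (RF (RF L)) (tt L))
abbrev yy (L : Type u) [Field L] : F3 L := algebraMap _ _ (tt (RF L))
abbrev zz (L : Type u) [Field L] : F3 L := tt _

lemma an_pair (F : Type u) [Field F] : An (![1, - tt F]) := by
  intro v hv
  have h := an_rf (an_one (F := F) one_ne_zero) (an_one (F := F) (c := -1) (by simp))
    (Sum.elim (fun _ => v 0) (fun _ => v 1)) (by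
      rw [← hv]
      simp [Fintype.sum_sum_type])
  intro i
  fin_cases i
  · exact h (Sum.inl 0)
  · exact h (Sum.inr 0)

lemma an_ten (L : Type u) [Field L] [Algebra L (F3 L)]
    (hL : ∀ c, algebraMap L (F3 L) c = algebraMap _ _ (algebraMap _ (RF (RF L)) (algebraMap L (RF L) c)))
    {a b : L}
    (han : ∀ p q r : L, a * p ^ 2 + b * q ^ 2 - a * b * r ^ 2 = 0 → p = 0 ∧ q = 0 ∧ r = 0) :
    An (![xx L, yy L, -(xx L * yy L), - algebraMap L (F3 L) a, - algebraMap L (F3 L) b,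
      algebraMap L (F3 L) a * algebraMap L (F3 L) b, zz L, - zz L * xx L, - zz L * yy L,
      zz L * (xx L * yy L)] : Fin 10 → F3 L) := by
  have h3 : An ![-a, -b, a * b] := by
    intro v hv
    obtain ⟨h0, h1, h2⟩ := han (v 0) (v 1) (v 2) (by
      simp [Fin.sum_univ_succ] at hv
      linear_combination -hv)
    intro i
    fin_cases i
    · exact h0
    · exact h1
    · exact h2
  have h4 := an_rf h3 (an_one (F := L) one_ne_zero)
  have h6 := an_rf h4 (an_pair L)
  have h4' := an_rf (an_pair L) (an_neg (an_pair L))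
  have h10 := an_rf h6 h4'
  intro v hv
  have h := h10 (Sum.elim (Sum.elim (Sum.elim ![v 3, v 4, v 5] (fun _ => v 0)) ![v 1, v 2])
    (Sum.elim ![v 6, v 7] ![v 8, v 9])) (by
      rw [← hv]
      simp [Fintype.sum_sum_type, Fin.sum_univ_succ, hL]
      ring)
  intro i
  fin_cases i
  · exact h (Sum.inl (Sum.inl (Sum.inr 0)))
  · exact h (Sum.inl (Sum.inr 0))
  · exact h (Sum.inl (Sum.inr 1))
  · exact h (Sum.inl (Sum.inl (Sum.inl 0)))
  · exact h (Sum.inl (Sum.inl (Sum.inl 1)))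
  · exact h (Sum.inl (Sum.inl (Sum.inl 2)))
  · exact h (Sum.inr (Sum.inl 0))
  · exact h (Sum.inr (Sum.inl 1))
  · exact h (Sum.inr (Sum.inr 0))
  · exact h (Sum.inr (Sum.inr 1))
end aniso

/-! ### Part 10 -/

section tencliff
variable {F : Type u} [Field F]

/-- the entries of a triple -/
def tri {A : Type*} [Mul A] (p q : A) : Fin 3 → A := ![p, q, p * q]

/-- the squares of a triple -/
def triw (α β : F) : Fin 3 → F := ![α, β, -(α * β)]

/-- colour of an index -/
def col : Fin 10 → Fin 4 := ![0, 0, 0, 3, 3, 3, 1, 2, 2, 2]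

/-- position of an index -/
def pos : Fin 10 → Fin 3 := ![0, 1, 2, 0, 1, 2, 0, 0, 1, 2]

lemma tri_sq {A : Type*} [Ring A] [Algebra F A] {p q : A} {α β : F} (hp : p * p = algebraMap F A α)
    (hq : q * q = algebraMap F A β) (h : p * q = -(q * p)) (i : Fin 3) :
    tri p q i * tri p q i = algebraMap F A (triw α β i) := by
  fin_cases i
  · exact hp
  · exact hq
  · change p * q * (p * q) = algebraMap F A (-(α * β))
    rw [mul_assoc p q, ← mul_assoc q p q, ← neg_neg (q * p), ← h, neg_mul, mul_assoc p q q, hq,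
      mul_neg, ← mul_assoc, hp, map_neg, map_mul]

lemma tri_anti {A : Type*} [Ring A] {p q : A} (h : p * q = -(q * p)) (i j : Fin 3) (hij : i ≠ j) :
    tri p q i * tri p q j = - (tri p q j * tri p q i) := by
  have h' : q * p = -(p * q) := by rw [h, neg_neg]
  have e1 : p * (p * q) = - (p * q * p) := by
    rw [mul_assoc p q p, h', mul_neg, neg_neg]
  have e2 : q * (p * q) = - (p * q * q) := by
    rw [← mul_assoc, h', neg_mul]
  fin_cases i <;> fin_cases j <;> first | exact absurd rfl hij | skip
  · exact h
  · exact e1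
  · exact h'
  · exact e2
  · change p * q * p = - (p * (p * q)); rw [e1, neg_neg]
  · change p * q * q = - (q * (p * q)); rw [e2, neg_neg]

lemma tri_comm {A : Type*} [Ring A] {p q r : A} (hp : Commute r p) (hq : Commute r q) (i : Fin 3) :
    Commute r (tri p q i) := by
  fin_cases i
  · exact hp
  · exact hq
  · exact hp.mul_right hq

lemma ten_hom (h2 : (2 : F) ≠ 0) {A : Type*} [Ring A] [Algebra F A] (κ α β : Fin 4 → F)
    (c p q : Fin 4 → A) (hα : α 1 = 1)
    (hp1 : p 1 = 1) (hc : ∀ i, c i * c i = algebraMap F A (κ i))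
    (hca : ∀ i j, i ≠ j → c i * c j = - (c j * c i))
    (hp : ∀ i, p i * p i = algebraMap F A (α i)) (hq : ∀ i, q i * q i = algebraMap F A (β i))
    (hpq : ∀ i, i ≠ 1 → p i * q i = - (q i * p i))
    (hcp : ∀ i j, Commute (c i) (p j)) (hcq : ∀ i j, Commute (c i) (q j))
    (hpp : ∀ i j, i ≠ j → Commute (p i) (p j)) (hpq' : ∀ i j, i ≠ j → Commute (p i) (q j))
    (hqq : ∀ i j, i ≠ j → Commute (q i) (q j)) :
    Nonempty (CA (fun i => κ (col i) * triw (α (col i)) (β (col i)) (pos i)) →ₐ[F] A) := by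
  have hct : ∀ i j k, Commute (c i) (tri (p j) (q j) k) := fun i j k =>
    tri_comm (hcp i j) (hcq i j) k
  have htt : ∀ i j, i ≠ j → ∀ k l, Commute (tri (p i) (q i) k) (tri (p j) (q j) l) :=
    fun i j h k l => by
      refine tri_comm (Commute.symm ?_) (Commute.symm ?_) l
      · exact tri_comm (hpp _ _ h.symm) (hpq' _ _ h.symm) k
      · exact tri_comm (hpq' _ _ h).symm (hqq _ _ h.symm) k
  have hmul : ∀ i j k l, (c i * tri (p i) (q i) k) * (c j * tri (p j) (q j) l) =
      (c i * c j) * (tri (p i) (q i) k * tri (p j) (q j) l) := fun i j k l => by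
    rw [mul_assoc, ← mul_assoc (tri (p i) (q i) k), ← (hct j i k).eq]
    simp only [mul_assoc]
  have hcol : ∀ i, col i = 1 → i = 6 := by decide
  have hinj : ∀ i j, col i = col j → pos i = pos j → i = j := by decide
  refine ⟨liftD _ h2 (fun i => c (col i) * tri (p (col i)) (q (col i)) (pos i)) ?_ ?_⟩
  · intro i
    rw [hmul, hc, map_mul]
    congr 1
    by_cases h : col i = 1
    · rw [hcol i h]
      change p 1 * p 1 = algebraMap F A (α 1)
      exact hp 1
    · exact tri_sq (hp _) (hq _) (hpq _ h) _
  · intro i j hij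
    simp only [hmul]
    by_cases h : col i = col j
    · have hk : pos i ≠ pos j := fun hk => hij (hinj i j h hk)
      have h1 : col i ≠ 1 := fun h1 => hij ((hcol i h1).trans (hcol j (h ▸ h1)).symm)
      rw [← h, tri_anti (hpq _ h1) _ _ hk, mul_neg]
    · rw [hca _ _ h, (htt _ _ h _ _).eq, neg_mul]

lemma ca_kappa (h2 : (2 : F) ≠ 0) (t : F) (ht : t ≠ 0) :
    Nonempty (CA (![1, t, -t, -1] : Fin 4 → F) ≃ₐ[F] Matrix (Fin 4) (Fin 4) F) := by
  have hw : ∀ i, (![1, t, -t, -1] : Fin 4 → F) i ≠ 0 := by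
    intro i; fin_cases i <;> simp [ht]
  have hw' := tl_ne (n := 2) hw
  obtain ⟨f⟩ := tail_split (n := 2) h2 ![1, t, -t, -1] hw ⟨1, by simp⟩
  obtain ⟨g⟩ := tail_split (n := 0) h2 (tl (n := 2) ![1, t, -t, -1]) hw' ⟨1, by simp [tl, ht]⟩
  obtain ⟨m⟩ := mat_comp F F 2 2
  exact ⟨(f.trans (g.trans (ca0 _).mapMatrix).mapMatrix).trans m⟩

lemma quat_gens (a b : F) : ∃ i j : QuaternionAlgebra F a 0 b, i * i = algebraMap F _ a ∧
    j * j = algebraMap F _ b ∧ i * j = -(j * i) := by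
  refine ⟨⟨0, 1, 0, 0⟩, ⟨0, 0, 1, 0⟩, ?_, ?_, ?_⟩
  · ext <;> simp
  · ext <;> simp
  · ext <;> simp

lemma ten_hom2 (h2 : (2 : F) ≠ 0) {x y a b : F} {H Q A B : Type*} [Ring H] [Algebra F H] [Ring Q]
    [Algebra F Q] [Ring A] [Algebra F A] [Ring B] [Algebra F B] (κ : Fin 4 → F)
    (hi hj : H) (hii : hi * hi = algebraMap F H x)
    (hjj : hj * hj = algebraMap F H y) (hij : hi * hj = -(hj * hi))
    (qi qj : Q) (qii : qi * qi = algebraMap F Q a)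
    (qjj : qj * qj = algebraMap F Q b) (qij : qi * qj = -(qj * qi))
    (iC : CA κ →ₐ[F] A) (iB : B →ₐ[F] A) (iQ : Q →ₐ[F] B) (iE : Module.End F H →ₐ[F] B)
    (cCB : ∀ u v, Commute (iC u) (iB v)) (cQE : ∀ u v, Commute (iQ u) (iE v)) :
    Nonempty (CA (fun i => κ (col i) * triw ((![x, 1, x, a] : Fin 4 → F) (col i))
      ((![y, 1, y, b] : Fin 4 → F) (col i)) (pos i)) →ₐ[F] A) := by
  let l : H →ₐ[F] Module.End F H := Algebra.lmul F H
  let r : H → Module.End F H := fun h => LinearMap.mulRight F h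
  have hlr : ∀ u v, Commute (l u) (r v) := fun u v => by
    apply LinearMap.ext; intro w
    exact (mul_assoc u w v).symm
  have hrm : ∀ u v, r u * r v = r (v * u) := fun u v => by
    apply LinearMap.ext; intro w
    exact mul_assoc w v u
  have hrs : ∀ s : F, r (algebraMap F H s) = algebraMap F (Module.End F H) s := fun s => by
    apply LinearMap.ext; intro w
    change w * algebraMap F H s = algebraMap F (Module.End F H) s w
    rw [← Algebra.commutes, ← Algebra.smul_def]; rfl
  have hrn : ∀ u, r (-u) = - r u := fun u => by
    apply LinearMap.ext; intro w
    exact mul_neg w u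
  let P : Fin 4 → B := ![iE (l hi), 1, iE (r hi), iQ qi]
  let R : Fin 4 → B := ![iE (l hj), 1, iE (r hj), iQ qj]
  have cPP : ∀ i j, i ≠ j → Commute (P i) (P j) := by
    have c02 := (hlr hi hi).map iE
    have c03 := (cQE qi (l hi))
    have c23 := (cQE qi (r hi))
    intro i j h
    fin_cases i <;> fin_cases j <;>
      first
      | exact absurd rfl h
      | exact Commute.one_left _
      | exact Commute.one_right _
      | exact c02
      | exact c02.symm
      | exact c03
      | exact c03.symm
      | exact c23
      | exact c23.symm
  have cRR : ∀ i j, i ≠ j → Commute (R i) (R j) := by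
    have c02 := (hlr hj hj).map iE
    have c03 := (cQE qj (l hj))
    have c23 := (cQE qj (r hj))
    intro i j h
    fin_cases i <;> fin_cases j <;>
      first
      | exact absurd rfl h
      | exact Commute.one_left _
      | exact Commute.one_right _
      | exact c02
      | exact c02.symm
      | exact c03
      | exact c03.symm
      | exact c23
      | exact c23.symm
  have cPR : ∀ i j, i ≠ j → Commute (P i) (R j) := by
    have c02 := (hlr hi hj).map iE
    have c20 := (hlr hj hi).map iE
    have c03 := (cQE qj (l hi))
    have c30 := (cQE qi (l hj))
    have c23 := (cQE qj (r hi))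
    have c32 := (cQE qi (r hj))
    intro i j h
    fin_cases i <;> fin_cases j <;>
      first
      | exact absurd rfl h
      | exact Commute.one_left _
      | exact Commute.one_right _
      | exact c02
      | exact c20.symm
      | exact c03.symm
      | exact c30
      | exact c23.symm
      | exact c32
  have sP : ∀ i, P i * P i = algebraMap F _ ((![x, 1, x, a] : Fin 4 → F) i) := by
    intro i
    fin_cases i
    · change iE (l hi) * iE (l hi) = algebraMap F _ x
      rw [← map_mul, ← map_mul, hii, AlgHom.commutes, AlgHom.commutes]
    · change (1 : B) * 1 = algebraMap F _ 1
      rw [map_one, one_mul]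
    · change iE (r hi) * iE (r hi) = algebraMap F _ x
      rw [← map_mul, hrm, hii, hrs, AlgHom.commutes]
    · change iQ qi * iQ qi = algebraMap F _ a
      rw [← map_mul, qii, AlgHom.commutes]
  have sR : ∀ i, R i * R i = algebraMap F _ ((![y, 1, y, b] : Fin 4 → F) i) := by
    intro i
    fin_cases i
    · change iE (l hj) * iE (l hj) = algebraMap F _ y
      rw [← map_mul, ← map_mul, hjj, AlgHom.commutes, AlgHom.commutes]
    · change (1 : B) * 1 = algebraMap F _ 1
      rw [map_one, one_mul]
    · change iE (r hj) * iE (r hj) = algebraMap F _ y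
      rw [← map_mul, hrm, hjj, hrs, AlgHom.commutes]
    · change iQ qj * iQ qj = algebraMap F _ b
      rw [← map_mul, qjj, AlgHom.commutes]
  have aPR : ∀ i, i ≠ 1 → P i * R i = - (R i * P i) := by
    intro i h
    fin_cases i
    · change iE (l hi) * iE (l hj) = - (iE (l hj) * iE (l hi))
      rw [← map_mul, ← map_mul, hij, map_neg, map_neg, map_mul, map_mul]
    · exact absurd rfl h
    · change iE (r hi) * iE (r hj) = - (iE (r hj) * iE (r hi))
      rw [← map_mul, ← map_mul, hrm, hrm, hij, hrn, map_neg, neg_neg]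
    · change iQ qi * iQ qj = - (iQ qj * iQ qi)
      rw [← map_mul, ← map_mul, qij, map_neg]
  exact ten_hom h2 (A := A) κ ![x, 1, x, a] ![y, 1, y, b] (fun i => iC (gen κ i))
    (fun i => iB (P i)) (fun i => iB (R i)) rfl (map_one iB)
    (fun i => by rw [← map_mul, gen_sq, AlgHom.commutes])
    (fun i j h => by rw [← map_mul, gen_anti κ h, map_neg, map_mul])
    (fun i => by rw [← map_mul, sP, AlgHom.commutes])
    (fun i => by rw [← map_mul, sR, AlgHom.commutes])
    (fun i h => by rw [← map_mul, aPR i h, map_neg, map_mul])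
    (fun i j => cCB _ _) (fun i j => cCB _ _)
    (fun i j h => (cPP i j h).map iB) (fun i j h => (cPR i j h).map iB)
    (fun i j h => (cRR i j h).map iB)

lemma incl_comm {A B : Type*} [Ring A] [Algebra F A] [Ring B] [Algebra F B] (u : A) (v : B) :
    Commute ((Algebra.TensorProduct.includeLeft : A →ₐ[F] A ⊗[F] B) u)
      ((Algebra.TensorProduct.includeRight : B →ₐ[F] A ⊗[F] B) v) := by
  rw [commute_iff_eq]
  simp

lemma ten_cliff (h2 : (2 : F) ≠ 0) {x y a b t : F} (hx : x ≠ 0) (hy : y ≠ 0) (ha : a ≠ 0)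
    (hb : b ≠ 0) (ht : t ≠ 0) :
    Nonempty (CA (![x, y, -(x * y), - a, - b, a * b, t, - t * x, - t * y, t * (x * y)] : Fin 10 → F)
      ≃ₐ[F] Matrix (Fin 16) (Fin 16) (QuaternionAlgebra F a 0 b)) := by
  let κ : Fin 4 → F := ![1, t, -t, -1]
  have hκ : ∀ i, κ i ≠ 0 := by intro i; fin_cases i <;> simp [κ, ht]
  obtain ⟨hi, hj, hii, hjj, hij⟩ : ∃ hi hj : (QuaternionAlgebra F x 0 y), hi * hi = algebraMap F (QuaternionAlgebra F x 0 y) x ∧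
      hj * hj = algebraMap F (QuaternionAlgebra F x 0 y) y ∧ hi * hj = -(hj * hi) := quat_gens x y
  obtain ⟨qi, qj, qii, qjj, qij⟩ : ∃ hi hj : (QuaternionAlgebra F a 0 b), hi * hi = algebraMap F (QuaternionAlgebra F a 0 b) a ∧
      hj * hj = algebraMap F (QuaternionAlgebra F a 0 b) b ∧ hi * hj = -(hj * hi) := quat_gens a b
  obtain ⟨f⟩ := ten_hom2 (A := CA κ ⊗[F] (QuaternionAlgebra F a 0 b ⊗[F] Module.End F (QuaternionAlgebra F x 0 y)))
    h2 κ hi hj hii hjj hij qi qj qii qjj qij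
    Algebra.TensorProduct.includeLeft Algebra.TensorProduct.includeRight
    Algebra.TensorProduct.includeLeft Algebra.TensorProduct.includeRight
    incl_comm incl_comm
  have hW : (fun i => κ (col i) * triw ((![x, 1, x, a] : Fin 4 → F) (col i))
      ((![y, 1, y, b] : Fin 4 → F) (col i)) (pos i)) =
      (![x, y, -(x * y), - a, - b, a * b, t, - t * x, - t * y, t * (x * y)] : Fin 10 → F) := by
    funext i
    fin_cases i <;> simp [κ, col, pos, triw]
  rw [hW] at f
  have hw : ∀ i, (![x, y, -(x * y), - a, - b, a * b, t, - t * x, - t * y, t * (x * y)] :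
      Fin 10 → F) i ≠ 0 := by
    intro i
    fin_cases i <;> simp [hx, hy, ha, hb, ht]
  obtain ⟨j1, j2, j3, j4⟩ := csa h2 5 _ hw
  have j1' : IsSimpleRing (CA (![x, y, -(x * y), - a, - b, a * b, t, - t * x, - t * y, t * (x * y)] :
      Fin 10 → F)) := j1
  have j3' : Module.Finite F (CA (![x, y, -(x * y), - a, - b, a * b, t, - t * x, - t * y, t * (x * y)] :
      Fin 10 → F)) := j3
  obtain ⟨e1⟩ := ca_kappa h2 t ht
  have e2 : (Module.End F (QuaternionAlgebra F x 0 y)) ≃ₐ[F] Matrix (Fin 4) (Fin 4) F :=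
    algEquivMatrix (Module.finBasisOfFinrankEq F (QuaternionAlgebra F x 0 y) (QuaternionAlgebra.finrank_eq_four _ _ _))
  obtain ⟨e3⟩ := mat_tensor F (QuaternionAlgebra F a 0 b) 4
  obtain ⟨e4⟩ := mat_tensor F (Matrix (Fin 4) (Fin 4) (QuaternionAlgebra F a 0 b)) 4
  obtain ⟨e5⟩ := mat_comp F (QuaternionAlgebra F a 0 b) 4 4
  have e6 : (QuaternionAlgebra F a 0 b) ⊗[F] (Module.End F (QuaternionAlgebra F x 0 y)) ≃ₐ[F] Matrix (Fin 4) (Fin 4) (QuaternionAlgebra F a 0 b) :=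
    ((Algebra.TensorProduct.comm F (QuaternionAlgebra F a 0 b) (Module.End F (QuaternionAlgebra F x 0 y))).trans (Algebra.TensorProduct.congr e2 AlgEquiv.refl)).trans e3
  have e7 : CA κ ⊗[F] ((QuaternionAlgebra F a 0 b) ⊗[F] (Module.End F (QuaternionAlgebra F x 0 y))) ≃ₐ[F] Matrix (Fin 16) (Fin 16) (QuaternionAlgebra F a 0 b) :=
    ((Algebra.TensorProduct.congr e1 e6).trans e4).trans e5
  obtain ⟨g⟩ := equiv_of_simple (K := F) (B := Matrix (Fin 16) (Fin 16) (QuaternionAlgebra F a 0 b)) (by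
    refine Eq.trans j4 ?_
    rw [Module.finrank_matrix, QuaternionAlgebra.finrank_eq_four]
    simp) (e7.toAlgHom.comp f)
  exact ⟨g⟩
end tencliff

/-! ### Part 11 -/

section assemble
variable {K : Type u} [Field K] (L : Type u) [Field L] [Algebra K L]

lemma bc_index (h2 : (2 : K) ≠ 0) {m n : ℕ} (hn : 0 < n) (w : Fin (2 * m) → K) (hw : ∀ i, w i ≠ 0)
    {a b : K} (ha : a ≠ 0) (hb : b ≠ 0)
    (e : CA w ≃ₐ[K] Matrix (Fin n) (Fin n) (QuaternionAlgebra K a 0 b)) :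
    Nonempty (CA (bw L w) ≃ₐ[L] Matrix (Fin n) (Fin n)
      (QuaternionAlgebra L (algebraMap K L a) 0 (algebraMap K L b))) := by
  obtain ⟨g⟩ := quat_bc L h2 ha hb
  haveI : Nonempty (Fin n) := ⟨⟨0, hn⟩⟩
  let f1 : CA w →ₐ[K] Matrix (Fin n) (Fin n) (L ⊗[K] QuaternionAlgebra K a 0 b) :=
    (AlgHom.mapMatrix Algebra.TensorProduct.includeRight).comp e.toAlgHom
  let f2 : L ⊗[K] CA w →ₐ[L] Matrix (Fin n) (Fin n) (L ⊗[K] QuaternionAlgebra K a 0 b) :=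
    Algebra.TensorProduct.lift (Algebra.ofId L _) f1 (fun x y => Algebra.commutes x (f1 y))
  let f3 := (g.mapMatrix (m := Fin n)).toAlgHom.comp (f2.comp (bcEquiv L h2 w).symm.toAlgHom)
  obtain ⟨-, -, c3, c4⟩ := csa h2 m w hw
  obtain ⟨d1, -, d3, d4⟩ := csa (two_ne L h2) m (bw L w) (bw_ne L hw)
  refine equiv_of_simple (K := L) ?_ f3
  have := e.toLinearEquiv.finrank_eq
  rw [d4, ← c4, this, Module.finrank_matrix, Module.finrank_matrix,
    QuaternionAlgebra.finrank_eq_four, QuaternionAlgebra.finrank_eq_four]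

lemma b8_bw (w : Fin 10 → K) : b8 (bw L w) = bw L (b8 w) := by
  funext i
  simp [b8, bw]

lemma final_cliff (h2 : (2 : K) ≠ 0) {V : Type u} [Ring V] [Algebra K V] {n : ℕ} (hn : 0 < n)
    {W w : Fin 10 → K} (hw : ∀ i, w i ≠ 0) (hs : IsSquare (-∏ i, w i)) {a b : K}
    (e : CA (b8 w) ≃ₐ[K] Matrix (Fin n) (Fin n) (QuaternionAlgebra K a 0 b))
    (e' : V ≃ₐ[K] CA w)
    (g : CA W ≃ₐ[K] Matrix (Fin 16) (Fin 16) (QuaternionAlgebra K a 0 b)) :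
    ∃ r s : ℕ, 0 < r ∧ 0 < s ∧ Nonempty (Matrix (Fin r) (Fin r) (CA W) ≃ₐ[K]
      Matrix (Fin s) (Fin s) V) := by
  obtain ⟨f1⟩ := ca_double h2 w hw hs
  obtain ⟨f2⟩ := mat_tensor K (CA (b8 w)) 2
  obtain ⟨f3⟩ := mat_comp K (QuaternionAlgebra K a 0 b) 2 n
  have f4 : V ≃ₐ[K] Matrix (Fin (2 * n)) (Fin (2 * n)) (QuaternionAlgebra K a 0 b) :=
    ((e'.trans f1).trans f2).trans (e.mapMatrix.trans f3)
  obtain ⟨f5⟩ := mat_comp K (QuaternionAlgebra K a 0 b) 16 (2 * n)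
  obtain ⟨f6⟩ := mat_comp K (QuaternionAlgebra K a 0 b) (2 * n) 16
  refine ⟨2 * n, 16, by omega, by omega, ⟨(g.mapMatrix.trans f6).trans ?_⟩⟩
  exact (Matrix.reindexAlgEquiv K _ (finCongr (mul_comm (2 * n) 16))).trans
    (f4.mapMatrix.trans f5).symm

end assemble

/-- the weights of the generic form -/
abbrev ww {F : Type u} [Field F] (x y a b t : F) : Fin 10 → F :=
  ![x, y, -(x * y), - a, - b, a * b, t, - t * x, - t * y, t * (x * y)]

lemma ww_prod {F : Type u} [Field F] (x y a b t : F) :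
    ∏ i, ww x y a b t i = - ((x * y) ^ 2 * (a * b) * t ^ 2) ^ 2 := by
  simp [ww, Fin.prod_univ_succ]
  ring

lemma an_aniso {F : Type u} [Field F] {n : ℕ} {w : Fin n → F} (h : An w) :
    (QuadraticMap.weightedSumSquares F w).Anisotropic := by
  intro v hv
  funext i
  refine h v ?_ i
  rw [QuadraticMap.weightedSumSquares_apply] at hv
  rw [← hv]
  exact Finset.sum_congr rfl fun i _ => by rw [smul_eq_mul, pow_two]

theorem final {k : Type u} [Field k] (h2 : (2 : k) ≠ 0)
    (q : QuadraticForm k (Fin 10 → k)) {w : Fin 10 → k} {s : k} (hs : s ≠ 0)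
    (hw : ∀ i, w i ≠ 0) (hdet : (gramMatrix q).det = s * s * ∏ i, w i)
    (eq : QuadraticMap.IsometryEquiv q (QuadraticMap.weightedSumSquares k w))
    (M : Type u) [Field M] [Algebra k M] (L : Type u) [Field L] [Algebra M L]
    (hsq : IsSquare (-∏ i, bw M w i)) (F : Type u) [Field F] [Algebra L F] [Algebra k F]
    (hF : ∀ c : k, algebraMap k F c = algebraMap L F (algebraMap M L (algebraMap k M c)))
    {a b : L} (ha : a ≠ 0) (hb : b ≠ 0) {x y t : F} (hx : x ≠ 0) (hy : y ≠ 0) (ht : t ≠ 0)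
    {n : ℕ} (hn : 0 < n)
    (e : CA (bw L (bw M (b8 w))) ≃ₐ[L] Matrix (Fin n) (Fin n) (QuaternionAlgebra L a 0 b))
    (han : An (ww x y (algebraMap L F a) (algebraMap L F b) t)) :
    ∃ (q' : QuadraticForm F (Fin 10 → F)),
      q'.Anisotropic ∧
      (gramMatrix q').det ≠ 0 ∧
      IsSquare ((gramMatrix q').det * algebraMap k F (gramMatrix q).det) ∧
      ∃ r s : ℕ, 0 < r ∧ 0 < s ∧
        Nonempty (Matrix (Fin r) (Fin r) (CliffordAlgebra q') ≃ₐ[F]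
          Matrix (Fin s) (Fin s) (CliffordAlgebra (qfBaseChange F h2 q))) := by
  have hM := two_ne M h2
  have hL := two_ne L hM
  have hF2 := two_ne F hL
  have ha' : algebraMap L F a ≠ 0 := by simpa using ha
  have hb' : algebraMap L F b ≠ 0 := by simpa using hb
  have hbw : ∀ {n : ℕ} (w : Fin n → k), bw F w = bw F (bw L (bw M w)) := fun w => by
    funext i; exact hF (w i)
  have hsqF : IsSquare (-∏ i, bw F w i) := by
    have := (hsq.map (algebraMap M L)).map (algebraMap L F)
    rw [hbw]
    simpa [map_neg, map_prod, bw] using this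
  have hdet' : (gramMatrix (QuadraticMap.weightedSumSquares F
      (ww x y (algebraMap L F a) (algebraMap L F b) t))).det =
      - ((x * y) ^ 2 * (algebraMap L F a * algebraMap L F b) * t ^ 2) ^ 2 := by
    rw [gram_diag hF2, Matrix.det_diagonal, ww_prod]
  refine ⟨QuadraticMap.weightedSumSquares F
    (ww x y (algebraMap L F a) (algebraMap L F b) t), an_aniso han, ?_, ?_, ?_⟩
  · rw [hdet']
    simp [hx, hy, ha, hb, ht]
  · rw [hdet', hdet]
    obtain ⟨r, hr⟩ := hsqF
    have hr' : -∏ i, algebraMap k F (w i) = r * r := hr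
    refine ⟨(x * y) ^ 2 * (algebraMap L F a * algebraMap L F b) * t ^ 2 * algebraMap k F s * r, ?_⟩
    rw [map_mul, map_mul, map_prod]
    linear_combination ((x * y) ^ 2 * (algebraMap L F a * algebraMap L F b) * t ^ 2 *
      algebraMap k F s) ^ 2 * hr'
  · obtain ⟨e1⟩ := qbc F h2 w q eq
    obtain ⟨e2⟩ := bc_index F hL (m := 4) hn _ (bw_ne L (bw_ne M (b8_ne hw))) ha hb e
    rw [← hbw, ← b8_bw] at e2
    obtain ⟨e3⟩ := ten_cliff hF2 hx hy ha' hb' ht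
    exact final_cliff hF2 hn (bw_ne F hw) hsqF e2 e1 e3

theorem main {k : Type u} [Field k] (h2 : (2 : k) ≠ 0)
    (q : QuadraticForm k (Fin 10 → k)) (hq : (gramMatrix q).det ≠ 0)
    (hC₀ : ¬ Nonempty
      ((↥(CliffordAlgebra.even q)) ≃ₐ[↥(Subring.center ↥(CliffordAlgebra.even q))]
        Matrix (Fin 16) (Fin 16) ↥(Subring.center ↥(CliffordAlgebra.even q)))) :
    ∃ (K : Type u) (_ : Field K) (_ : Algebra k K) (q' : QuadraticForm K (Fin 10 → K)),
      q'.Anisotropic ∧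
      (gramMatrix q').det ≠ 0 ∧
      IsSquare ((gramMatrix q').det * algebraMap k K (gramMatrix q).det) ∧
      ∃ r s : ℕ, 0 < r ∧ 0 < s ∧
        Nonempty (Matrix (Fin r) (Fin r) (CliffordAlgebra q') ≃ₐ[K]
          Matrix (Fin s) (Fin s) (CliffordAlgebra (qfBaseChange K h2 q))) := by
  obtain ⟨w, s, hs, hw, hdet, ⟨eq⟩⟩ := diag_exists h2 q hq
  obtain ⟨M, iM, aM, hsq, hns⟩ := get_ext h2 q w hw eq hC₀
  obtain ⟨L, iL, aL, a, b, ha, hb, han, n, hn, ⟨e⟩⟩ :=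
    descent 4 M (bw M (b8 w)) (two_ne M h2) (bw_ne M (b8_ne hw)) hns
  letI aF : Algebra L (F3 L) := ((algebraMap (RF (RF L)) (F3 L)).comp
    ((algebraMap (RF L) (RF (RF L))).comp (algebraMap L (RF L)))).toAlgebra
  letI kF : Algebra k (F3 L) :=
    ((algebraMap L (F3 L)).comp ((algebraMap M L).comp (algebraMap k M))).toAlgebra
  have hx : xx L ≠ 0 := by
    simp [xx, tt_ne]
  have hy : yy L ≠ 0 := by
    simp [yy, tt_ne]
  have hz : zz L ≠ 0 := by
    simp [zz, tt_ne]
  exact ⟨F3 L, inferInstance, kF, final h2 q hs hw hdet eq M L hsq (F3 L) (fun c => rfl) ha hb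
    hx hy hz hn e (an_ten L (fun c => rfl) han)⟩

end CliffTen
end CliffTen

theorem statement5 {k : Type u} [Field k] (h2 : (2 : k) ≠ 0)
    (q : QuadraticForm k (Fin 10 → k))
    -- `q` is nondegenerate
    (hq : (gramMatrix q).det ≠ 0)
    -- the even Clifford algebra `C₀(q)` is not split over its center `Z`:
    -- it is not isomorphic over `Z` to the 16×16 matrix algebra `M₁₆(Z)`
    (hC₀ : ¬ Nonempty
      ((↥(CliffordAlgebra.even q)) ≃ₐ[↥(Subring.center ↥(CliffordAlgebra.even q))]
        Matrix (Fin 16) (Fin 16) ↥(Subring.center ↥(CliffordAlgebra.even q)))) :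
    ∃ (K : Type u) (_ : Field K) (_ : Algebra k K) (q' : QuadraticForm K (Fin 10 → K)),
      -- `q'` is anisotropic
      q'.Anisotropic ∧
      -- `q'` is nondegenerate
      (gramMatrix q').det ≠ 0 ∧
      -- `q'` has the same discriminant as `q_K`: `det(q')·det(q)` is a square in `K`
      IsSquare ((gramMatrix q').det * algebraMap k K (gramMatrix q).det) ∧
      -- `q'` has the same Witt invariant as `q_K`: the Clifford algebras `C(q')` and
      -- `C(q_K)` are Brauer equivalent
      ∃ r s : ℕ, 0 < r ∧ 0 < s ∧
        Nonempty (Matrix (Fin r) (Fin r) (CliffordAlgebra q') ≃ₐ[K]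
          Matrix (Fin s) (Fin s) (CliffordAlgebra (qfBaseChange K h2 q))) := by
  exact CliffTen.main h2 q hq hC₀
end
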